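/- Let Ω ⊂ ℝ² be open, bounded, simply connected with C^∞ boundary, p ∈ C^∞(Ω̄) with p > 0 on Ω, and k ≥ 2 with λ_{k-1} < λ_k. Suppose there exist an eigenfunction φ_k associated with λ_k, a point b ∈ ∂Ω and an even integer h ≥ 4 such that φ_k has a zero of order h/2 at b. Let γ : [0,1] → Ω̄ be continuous and injective with γ(0) = b, γ((0,1]) ⊂ Ω and φ_k(γ(t)) = 0 for every t ∈ [0,1] (a piece of nodal line of φ_k ending at b). Then there exist C > 0 and δ > 0 such that for every a = γ(t) with 0 < |a − b| < δ one has λ_k^a ≤ λ_k − C|a − b|^h. -/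

import Mathlib

/-!
Write `m = h/2`, `a = γ(t)`, `r = |a - b|` and `Γ = γ([0,t])`. The bound comes from the min-max
principle applied to a `k`-dimensional space of magnetic test functions built as follows.

*Gauge.* As `Ω` is simply connected, `Ω \ Γ` carries a branch `S` of `√(x - a)`, and multiplication
by `S/|S|` turns `i∇` into `i∇ + A_a` (`gauge_mg`). The eigenfunction `φ` vanishes on `Γ`, so its
truncation `f` at a small level `ε` is supported off `Γ` (`truncation`). The gap `λ_{k-1} < λ_k`
gives a `(k-1)`-dimensional space `V` of test functions with Rayleigh quotients at most `μ < λ_k`,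
supported in a compact set which `Γ` avoids when `a` is near `b`. The space `V + ℂf`, gauged by
`S/|S|`, already yields `λ_k^a ≤ λ_k` up to `O(ε)`, the mixed terms being small since `φ` solves the
equation.

*Sign structure.* In the half-plane coordinate `y = (x - b)/(r e)`, `e` the inward normal, the
eigenfunction is `r^m (c Im((iy)^m) + o(1))` (`classify_homogeneous`, `blowup`): at this scale there
are `m ≥ 2` nodal sectors, and near `|y| = 1/2` the curve `Γ` stays close to the nodal rays. Let `Q`
be a branch of `√(x - a)` on the disk `B(b,r)`. The monodromy of the square root forces `S/Q = ±1` to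
have opposite signs on the first and the last sector, hence on two consecutive ones. Across the nodal
ray between these, `(S/Q) φ` is close to `± r^m c |Im w^m|` for a rotated coordinate `w`
(`sign_structure`).

*Gain.* The function `|Im w^m|` has positive distributional Laplacian on the ray
(`kappa_formula`). Replacing `f` by `f` plus a small multiple of a bump placed across this ray
(`trial`) therefore lowers the form `∫|(i∇+A_a)u|² - λ_k ∫p|u|²` by a fixed multiple of
`r^{2m} = r^h` (`gain`). With the truncation level chosen as a small multiple of `r^{2m}`, the errors
are absorbed by this gain and by the spectral gap on `V` (`absorb`), and min-max concludes
(`eigenvalueAB_le`).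
-/

open MeasureTheory Real Filter Set Asymptotics

noncomputable section

/-- The open half-disk `D_r⁺(c)`: points at distance `< r` from `c` with positive
first coordinate (we identify `ℝ²` with `ℂ`). -/
def halfDisk (c : ℂ) (r : ℝ) : Set ℂ := {x : ℂ | dist x c < r ∧ 0 < x.re}

/-- Projection onto the axis `{x₁ = 0}`: `π(a) = (0, a₂)`. -/
def proj (a : ℂ) : ℂ := (a.im : ℂ) * Complex.I

/-- First partial derivative of a complex-valued function on `ℝ² = ℂ`. -/
def pd1 (u : ℂ → ℂ) (x : ℂ) : ℂ := fderiv ℝ u x 1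

/-- Second partial derivative of a complex-valued function on `ℝ² = ℂ`. -/
def pd2 (u : ℂ → ℂ) (x : ℂ) : ℂ := fderiv ℝ u x Complex.I

/-- The Aharonov–Bohm potential `A_a(x)`, encoded as the complex number whose real and
imaginary parts are its two components:
`A_a(x) = (1/2)(−(x₂−a₂)/|x−a|², (x₁−a₁)/|x−a|²) = i(x−a)/(2|x−a|²)`. -/
def abPot (a x : ℂ) : ℂ := Complex.I * (x - a) / (2 * (‖x - a‖ : ℂ) ^ 2)

/-- First component of `A_a`. -/
def abPot1 (a x : ℂ) : ℝ := (abPot a x).re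

/-- Second component of `A_a`. -/
def abPot2 (a x : ℂ) : ℝ := (abPot a x).im

/-- First component of the magnetic gradient `(i∇ + A_a)u`. -/
def mg1 (a : ℂ) (u : ℂ → ℂ) (x : ℂ) : ℂ := Complex.I * pd1 u x + (abPot1 a x : ℂ) * u x

/-- Second component of the magnetic gradient `(i∇ + A_a)u`. -/
def mg2 (a : ℂ) (u : ℂ → ℂ) (x : ℂ) : ℂ := Complex.I * pd2 u x + (abPot2 a x : ℂ) * u x

/-- `|(i∇+A_a)u|²`. -/
def mgSq (a : ℂ) (u : ℂ → ℂ) (x : ℂ) : ℝ := ‖mg1 a u x‖ ^ 2 + ‖mg2 a u x‖ ^ 2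

/-- Arclength integral of `f` over the circular part `∂D_r⁺(c)` of the boundary of a
half-disk centered at a point `c` on the axis `{x₁ = 0}`, parametrized by the angle
`θ ∈ (−π/2, π/2)`. -/
def bdryInt (c : ℂ) (r : ℝ) (f : ℂ → ℝ) : ℝ :=
  ∫ θ in Ioo (-(π / 2)) (π / 2), r * f (circleMap c r θ)

/-- `|∇u|²` for complex-valued `u`. -/
def gradSqC (u : ℂ → ℂ) (x : ℂ) : ℝ := ‖pd1 u x‖ ^ 2 + ‖pd2 u x‖ ^ 2

/-- The `k`-th eigenvalue of the Dirichlet Laplacian with weight `p` on `Ω`, via the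
min-max characterization over `k`-dimensional complex subspaces of `C_c^∞(Ω;ℂ)`. -/
def eigenvalueND (Ω : Set ℂ) (p : ℂ → ℝ) (k : ℕ) : ℝ :=
  sInf { t : ℝ | ∃ V : Submodule ℂ (ℂ → ℂ), Module.finrank ℂ V = k ∧
    (∀ u ∈ V, ContDiff ℝ (⊤ : ℕ∞) u ∧ HasCompactSupport u ∧ tsupport u ⊆ Ω) ∧
    t = sSup { s : ℝ | ∃ u ∈ V, u ≠ 0 ∧
      s = (∫ x in Ω, gradSqC u x) / ∫ x in Ω, p x * ‖u x‖ ^ 2 } }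

/-- The `k`-th magnetic (Aharonov–Bohm) eigenvalue `λ_k^a` with pole `a`, via the
min-max characterization over `k`-dimensional complex subspaces of `C_c^∞(Ω∖{a};ℂ)`. -/
def eigenvalueAB (Ω : Set ℂ) (p : ℂ → ℝ) (a : ℂ) (k : ℕ) : ℝ :=
  sInf { t : ℝ | ∃ V : Submodule ℂ (ℂ → ℂ), Module.finrank ℂ V = k ∧
    (∀ u ∈ V, ContDiff ℝ (⊤ : ℕ∞) u ∧ HasCompactSupport u ∧ tsupport u ⊆ Ω \ {a}) ∧
    t = sSup { s : ℝ | ∃ u ∈ V, u ≠ 0 ∧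
      s = (∫ x in Ω, mgSq a u x) / ∫ x in Ω, p x * ‖u x‖ ^ 2 } }

/-- The Laplacian of a real-valued function on `ℝ² = ℂ`. -/
def lapR (u : ℂ → ℝ) (x : ℂ) : ℝ :=
  fderiv ℝ (fun y => fderiv ℝ u y 1) x 1 +
    fderiv ℝ (fun y => fderiv ℝ u y Complex.I) x Complex.I

/-- A (real-valued) eigenfunction of the Dirichlet Laplacian with weight `p` on `Ω`
associated with the eigenvalue `lam`: nonzero, smooth on `Ω`, continuous on `Ω̄`,
vanishing on `∂Ω`, with `−Δφ = lam·p·φ` in `Ω`. -/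
def IsDirichletEigenfunction (Ω : Set ℂ) (p : ℂ → ℝ) (lam : ℝ) (φ : ℂ → ℝ) : Prop :=
  (∃ x ∈ Ω, φ x ≠ 0) ∧ ContDiffOn ℝ (⊤ : ℕ∞) φ Ω ∧ ContinuousOn φ (closure Ω) ∧
    (∀ x ∈ frontier Ω, φ x = 0) ∧ ∀ x ∈ Ω, - lapR φ x = lam * p x * φ x

/-- `Ω` has `C^∞` boundary: near each boundary point it is the sublevel set of a
smooth function with nonvanishing differential. -/
def HasSmoothBoundary (Ω : Set ℂ) : Prop :=
  ∀ z ∈ frontier Ω, ∃ (U : Set ℂ) (f : ℂ → ℝ), IsOpen U ∧ z ∈ U ∧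
    ContDiff ℝ (⊤ : ℕ∞) f ∧ (∀ x ∈ U, fderiv ℝ f x ≠ 0) ∧ Ω ∩ U = {x ∈ U | f x < 0}

/-- `φ` has a zero of order `m` at the boundary point `b ∈ ∂Ω`: on `Ω̄` near `b` it
coincides with a `C^m` function `g` all of whose derivatives of order `< m` vanish at
`b`, while some derivative of order `m` does not. -/
def HasBoundaryZero (Ω : Set ℂ) (φ : ℂ → ℝ) (b : ℂ) (m : ℕ) : Prop :=
  ∃ (U : Set ℂ) (g : ℂ → ℝ), U ∈ nhds b ∧ ContDiff ℝ m g ∧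
    Set.EqOn g φ (closure Ω ∩ U) ∧
    (∀ j : ℕ, j < m → iteratedFDeriv ℝ j g b = 0) ∧ iteratedFDeriv ℝ m g b ≠ 0

/-! ### Leading homogeneous parts -/

/-- `P` is the leading homogeneous part, of degree `m`, of `G` at the origin: a smooth
`m`-homogeneous map with `G(v) - P(v) = o(‖v‖^m)`. -/
def IsLead {F : Type} [NormedAddCommGroup F] [NormedSpace ℝ F] (m : ℕ) (G P : ℂ → F) : Prop :=
  ContDiff ℝ (⊤ : ℕ∞) P ∧ (∀ (t : ℝ) (v : ℂ), P (t • v) = t ^ m • P v) ∧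
    (fun v => G v - P v) =o[nhds 0] (fun v => ‖v‖ ^ m)

lemma IsLead.tendsto {F : Type} [NormedAddCommGroup F] [NormedSpace ℝ F] {m : ℕ} {G P : ℂ → F}
    (h : IsLead m G P) (v : ℂ) :
    Tendsto (fun t : ℝ => (t ^ m)⁻¹ • G (t • v)) (nhdsWithin 0 (Ioi 0)) (nhds (P v)) := by
  obtain ⟨_, hom, ho⟩ := h
  have h1 : Tendsto (fun t : ℝ => t • v) (nhdsWithin 0 (Ioi 0)) (nhds 0) := by
    have : Tendsto (fun t : ℝ => t • v) (nhds 0) (nhds ((0:ℝ) • v)) :=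
      (continuous_id.smul continuous_const).tendsto 0
    rw [zero_smul] at this
    exact this.mono_left nhdsWithin_le_nhds
  have h2 := ho.comp_tendsto h1
  have h3 : (fun t : ℝ => (t ^ m)⁻¹ • (G (t • v) - P (t • v))) =o[nhdsWithin 0 (Ioi 0)]
      (fun t : ℝ => (t ^ m)⁻¹ • (‖t • v‖ ^ m)) :=
    (isBigO_refl (fun t : ℝ => (t ^ m)⁻¹) _).smul_isLittleO h2
  have h4 : (fun t : ℝ => (t ^ m)⁻¹ • (‖t • v‖ ^ m)) =ᶠ[nhdsWithin 0 (Ioi 0)]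
      fun _ => ‖v‖ ^ m := by
    filter_upwards [self_mem_nhdsWithin] with t ht
    have ht' : (0:ℝ) < t := ht
    rw [norm_smul, mul_pow, Real.norm_of_nonneg ht'.le, smul_eq_mul, ← mul_assoc,
      inv_mul_cancel₀ (pow_pos ht' m).ne', one_mul]
  have h5 := (h3.congr' (EventuallyEq.refl _ _) h4).trans_isBigO
    (isBigO_const_one ℝ (‖v‖ ^ m) _)
  have h6 := (isLittleO_one_iff ℝ).1 h5
  have h7 := h6.add_const (P v)
  rw [zero_add] at h7
  refine h7.congr' ?_
  filter_upwards [self_mem_nhdsWithin] with t ht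
  have ht' : (0:ℝ) < t := ht
  rw [hom, smul_sub, smul_smul, inv_mul_cancel₀ (pow_pos ht' m).ne', one_smul, sub_add_cancel]

lemma IsLead.unique {F : Type} [NormedAddCommGroup F] [NormedSpace ℝ F] {m : ℕ} {G P Q : ℂ → F}
    (h : IsLead m G P) (h' : IsLead m G Q) : P = Q :=
  funext fun v => tendsto_nhds_unique (h.tendsto v) (h'.tendsto v)

/-- Euler's identity for a smooth homogeneous map. -/
lemma euler_hom {F : Type} [NormedAddCommGroup F] [NormedSpace ℝ F] {m : ℕ} {P : ℂ → F}
    (hs : ContDiff ℝ (⊤ : ℕ∞) P) (hom : ∀ (t : ℝ) (v : ℂ), P (t • v) = t ^ m • P v) (v : ℂ) :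
    fderiv ℝ P v v = (m : ℝ) • P v := by
  have hd : DifferentiableAt ℝ P ((1:ℝ) • v) := (hs.differentiable (by simp)).differentiableAt
  have h1 : HasDerivAt (fun t : ℝ => P (t • v)) (fderiv ℝ P ((1:ℝ) • v) ((1:ℝ) • v)) 1 :=
    hd.hasFDerivAt.comp_hasDerivAt (1:ℝ) ((hasDerivAt_id (1:ℝ)).smul_const v)
  have h2 : HasDerivAt (fun t : ℝ => t ^ m • P v) (((m:ℝ) * 1 ^ (m-1)) • P v) 1 :=
    (hasDerivAt_pow m (1:ℝ)).smul_const _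
  have h3 : (fun t : ℝ => P (t • v)) = fun t : ℝ => t ^ m • P v := funext fun t => hom t v
  rw [h3] at h1
  simpa using h1.unique h2

/-- If `G 0 = P 0` and the derivatives agree up to `o(‖v‖^m)`, the functions agree up to
`o(‖v‖^(m+1))`. -/
lemma littleO_of_fderiv {F : Type} [NormedAddCommGroup F] [NormedSpace ℝ F] {m : ℕ} {G : ℂ → F}
    (hG : Differentiable ℝ G) (h0 : G 0 = 0)
    (h : fderiv ℝ G =o[nhds 0] (fun v => ‖v‖ ^ m)) :
    G =o[nhds 0] (fun v => ‖v‖ ^ (m+1)) := by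
  rw [isLittleO_iff] at h ⊢
  intro c hc
  obtain ⟨δ, hδ, hb⟩ := Metric.eventually_nhds_iff_ball.1 (h hc)
  filter_upwards [Metric.ball_mem_nhds (0:ℂ) hδ] with v hv
  have hv' : ‖v‖ < δ := by simpa using hv
  have key := (convex_closedBall (0:ℂ) ‖v‖).norm_image_sub_le_of_norm_fderiv_le (𝕜 := ℝ)
    (f := G) (C := c * ‖v‖ ^ m) (x := 0) (y := v) (fun x _ => hG x)
    (fun x hx => by
      have hx' : ‖x‖ ≤ ‖v‖ := by simpa using hx
      have := hb x (by simpa using hx'.trans_lt hv')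
      rw [norm_pow, norm_norm] at this
      exact this.trans (by gcongr))
    (by simp) (by simp)
  rw [h0, sub_zero, sub_zero] at key
  rw [norm_pow, norm_norm, pow_succ, ← mul_assoc]
  exact key

/-- Taylor expansion at a zero of order at least `m`: the leading part exists, it is nonzero when
some `m`-th derivative is, and its differential is the leading part of the differential. -/
lemma exists_lead (m : ℕ) : ∀ {F : Type} [NormedAddCommGroup F] [NormedSpace ℝ F] (G : ℂ → F),
    ContDiff ℝ m G → (∀ j < m, iteratedFDeriv ℝ j G 0 = 0) →
    ∃ P, IsLead m G P ∧ (P = 0 → iteratedFDeriv ℝ m G 0 = 0) ∧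
      ∀ n, m = n + 1 → IsLead n (fderiv ℝ G) (fderiv ℝ P) := by
  induction m with
  | zero =>
    intro F _ _ G hG _
    refine ⟨fun _ => G 0, ⟨contDiff_const, by simp, ?_⟩, ?_, by simp⟩
    · simp only [pow_zero]
      rw [isLittleO_one_iff]
      have := (hG.continuous.tendsto 0).sub_const (G 0)
      simpa using this
    · intro h
      have h0 : G 0 = 0 := congrFun h 0
      ext v
      simp [h0]
  | succ m ih =>
    intro F _ _ G hG hz
    have hdG : ContDiff ℝ m (fderiv ℝ G) := hG.fderiv_right (by norm_cast)
    have hdiff : Differentiable ℝ G := hG.differentiable (by simp)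
    have hz' : ∀ j < m, iteratedFDeriv ℝ j (fderiv ℝ G) 0 = 0 := by
      intro j hj
      have := hz (j+1) (by omega)
      rw [iteratedFDeriv_succ_eq_comp_right] at this
      exact (LinearIsometryEquiv.map_eq_zero_iff _).1 this
    obtain ⟨P', hP', hne, hn⟩ := ih (fderiv ℝ G) hdG hz'
    have hsm := hP'.1
    have hom := hP'.2.1
    have hm1 : ((m:ℝ) + 1) ≠ 0 := by positivity
    have hdP' : Differentiable ℝ P' := hsm.differentiable (by simp)
    -- the derivative of `P'` is symmetric, as a limit of second derivatives of `G`
    have hsymm : ∀ v u w, fderiv ℝ P' v u w = fderiv ℝ P' v w u := by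
      intro v u w
      rcases Nat.eq_zero_or_pos m with h0 | hpos
      · have hc : ∀ v, P' v = P' 0 := by
          intro v
          have h1 := hom 0 v
          rw [h0] at h1
          simpa using h1.symm
        have : P' = fun _ => P' 0 := funext hc
        rw [this]; simp
      · obtain ⟨n, rfl⟩ : ∃ n, m = n + 1 := ⟨m - 1, by omega⟩
        have hl := (hn n rfl).tendsto v
        have hG2 : ContDiff ℝ 2 G := hG.of_le (by norm_cast; omega)
        have e : ∀ x, fderiv ℝ (fderiv ℝ G) x u w = fderiv ℝ (fderiv ℝ G) x w u := fun x =>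
          (hG2.contDiffAt.isSymmSndFDerivAt (by simp)) u w
        have c1 : Continuous fun L : ℂ →L[ℝ] ℂ →L[ℝ] F => L u w := by fun_prop
        have c2 : Continuous fun L : ℂ →L[ℝ] ℂ →L[ℝ] F => L w u := by fun_prop
        have l1 := (c1.tendsto _).comp hl
        have l2 := (c2.tendsto _).comp hl
        refine tendsto_nhds_unique l1 (l2.congr fun t => ?_)
        simp [e]
    set P : ℂ → F := fun v => ((m:ℝ)+1)⁻¹ • P' v v with hPdef
    have hder : ∀ v, HasFDerivAt P (P' v) v := by
      intro v
      have h1 : HasFDerivAt (fun v => P' v v)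
          ((P' v).comp (ContinuousLinearMap.id ℝ ℂ) + (fderiv ℝ P' v).flip v) v :=
        (hdP' v).hasFDerivAt.clm_apply (hasFDerivAt_id v)
      have h2 := h1.const_smul ((m:ℝ)+1)⁻¹
      refine h2.congr_fderiv (ContinuousLinearMap.ext fun u => ?_)
      have h3 := euler_hom hsm hom v
      have h4 : fderiv ℝ P' v v u = (m:ℝ) • P' v u := by rw [h3]; rfl
      have h5 := hsymm v u v
      simp only [_root_.smul_apply, _root_.add_apply,
        ContinuousLinearMap.comp_id, ContinuousLinearMap.flip_apply]
      have h6 : P' v u + (m:ℝ) • P' v u = ((m:ℝ)+1) • P' v u := by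
        rw [add_smul, one_smul, add_comm]
      rw [h5, h4, h6, smul_smul, inv_mul_cancel₀ hm1, one_smul]
    have hfd : fderiv ℝ P = P' := funext fun v => (hder v).fderiv
    have hPs : ContDiff ℝ (⊤ : ℕ∞) P := (hsm.clm_apply contDiff_id).const_smul _
    have hP0 : P 0 = 0 := by simp [hPdef]
    have hG0 : G 0 = 0 := by
      have := hz 0 (by omega)
      have h2 := congrArg (fun L => L 0) this
      simpa using h2
    refine ⟨P, ⟨hPs, ?_, ?_⟩, ?_, ?_⟩
    · intro t v
      simp only [hPdef, hom, map_smul, _root_.smul_apply, smul_smul, pow_succ]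
      congr 1; ring
    · refine littleO_of_fderiv (G := fun v => G v - P v) (hdiff.sub fun v => (hder v).differentiableAt)
        (by simp [hP0, hG0]) ?_
      have : fderiv ℝ (fun v => G v - P v) = fun v => fderiv ℝ G v - P' v := by
        ext1 v
        rw [fderiv_fun_sub (hdiff v) (hder v).differentiableAt, (hder v).fderiv]
      rw [this]
      exact hP'.2.2
    · intro h
      have h1 : P' = 0 := by rw [← hfd, h]; ext; simp
      rw [iteratedFDeriv_succ_eq_comp_right]
      exact (LinearIsometryEquiv.map_eq_zero_iff _).2 (hne h1)
    · intro n hn'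
      obtain rfl : n = m := by omega
      rw [hfd]; exact hP'

/-! ### Homogeneous harmonic functions on the half-plane -/

/-- A homogeneous function of degree `m` that is harmonic in the right half-plane and vanishes at
`i` is a multiple of `Im ((i y)^m)`: its complex gradient divided by `z^(m-1)` is holomorphic and
constant along rays. -/
lemma classify_homogeneous (m : ℕ) (hm : 1 ≤ m) (P : ℂ → ℝ) (hs : ContDiff ℝ (⊤ : ℕ∞) P)
    (hom : ∀ (t : ℝ) (v : ℂ), P (t • v) = t ^ m • P v)
    (hlap : ∀ y : ℂ, 0 < y.re → lapR P y = 0) (hI : P Complex.I = 0) (hne : P ≠ 0) :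
    ∃ c : ℝ, c ≠ 0 ∧ ∀ y, P y = c * ((Complex.I * y) ^ m).im := by
  have hs2 : ContDiff ℝ 2 P := hs.of_le (by norm_cast)
  have hd : Differentiable ℝ P := hs.differentiable (by simp)
  set H : Set ℂ := {z | 0 < z.re} with hH
  have hHo : IsOpen H := isOpen_lt continuous_const Complex.continuous_re
  have hHc : Convex ℝ H := convex_halfSpace_re_gt 0
  have hd1 : ∀ z, fderiv ℝ (fun y => fderiv ℝ P y 1) z 1 = iteratedFDeriv ℝ 2 P z ![1, 1] := by
    intro z
    rw [iteratedFDeriv_two_apply, fderiv_clm_apply ((hs2.fderiv_right (m := 1)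
      (by norm_num)).differentiable (by simp) z) (by fun_prop)]
    simp
  have hd2 : ∀ z, fderiv ℝ (fun y => fderiv ℝ P y Complex.I) z Complex.I
      = iteratedFDeriv ℝ 2 P z ![Complex.I, Complex.I] := by
    intro z
    rw [iteratedFDeriv_two_apply, fderiv_clm_apply ((hs2.fderiv_right (m := 1)
      (by norm_num)).differentiable (by simp) z) (by fun_prop)]
    simp
  have hharm : ∀ z ∈ H, InnerProductSpace.HarmonicAt P z := by
    intro z hz
    refine ⟨hs2.contDiffAt, ?_⟩
    filter_upwards [hHo.mem_nhds hz] with w hw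
    have := hlap w hw
    rw [lapR, hd1, hd2] at this
    rw [InnerProductSpace.laplacian_eq_iteratedFDeriv_complexPlane]
    simpa using this
  set f : ℂ → ℂ := fun z => fderiv ℝ P z 1 - Complex.I * fderiv ℝ P z Complex.I with hf
  have hfd : ∀ z ∈ H, DifferentiableAt ℂ f z := fun z hz =>
    HarmonicAt.differentiableAt_complex_partial (hharm z hz)
  -- homogeneity of the differential
  have hfderiv : ∀ (t : ℝ), 0 < t → ∀ z v, fderiv ℝ P (t • z) v = t ^ (m-1) * fderiv ℝ P z v := by
    intro t ht z v
    have h1 : HasFDerivAt (fun w : ℂ => P (t • w))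
        ((fderiv ℝ P (t • z)).comp (t • ContinuousLinearMap.id ℝ ℂ)) z :=
      HasFDerivAt.comp (g := P) (f := fun w : ℂ => t • w) z (hd (t • z)).hasFDerivAt
        ((hasFDerivAt_id z).fun_const_smul t)
    have h2 : HasFDerivAt (fun w : ℂ => t ^ m • P w) (t ^ m • fderiv ℝ P z) z :=
      (hd z).hasFDerivAt.fun_const_smul _
    have h3 : (fun w : ℂ => P (t • w)) = fun w => t ^ m • P w := funext fun w => hom t w
    rw [h3] at h1
    have h4 := congrArg (fun L : ℂ →L[ℝ] ℝ => L v) (h1.unique h2)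
    simp only [ContinuousLinearMap.comp_apply, _root_.smul_apply, ContinuousLinearMap.id_apply,
      map_smul, smul_eq_mul] at h4
    obtain ⟨n, rfl⟩ : ∃ n, m = n + 1 := ⟨m - 1, by omega⟩
    rw [pow_succ] at h4
    rw [Nat.add_sub_cancel]
    have : t * (fderiv ℝ P (t • z) v - t ^ n * fderiv ℝ P z v) = 0 := by linarith
    rcases mul_eq_zero.1 this with h | h
    · exact absurd h ht.ne'
    · linarith
  have hfhom : ∀ (t : ℝ), 0 < t → ∀ z, f (t • z) = (t:ℂ) ^ (m-1) * f z := by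
    intro t ht z
    simp only [hf, hfderiv t ht]
    push_cast
    ring
  set q : ℂ → ℂ := fun z => f z / z ^ (m-1) with hq
  have hz0 : ∀ z ∈ H, z ≠ 0 := by
    rintro z hz rfl
    simp [hH] at hz
  have hqd : ∀ z ∈ H, DifferentiableAt ℂ q z := fun z hz =>
    (hfd z hz).div (differentiableAt_id.pow _) (pow_ne_zero _ (hz0 z hz))
  have hqhom : ∀ t : ℝ, 0 < t → ∀ z ∈ H, q (t • z) = q z := by
    intro t ht z hz
    have h1 : (t:ℂ) ≠ 0 := by exact_mod_cast ht.ne'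
    show f (t • z) / (t • z) ^ (m-1) = f z / z ^ (m-1)
    rw [hfhom t ht, Complex.real_smul, mul_pow, mul_div_mul_left _ _ (pow_ne_zero _ h1)]
  have hqder : ∀ z ∈ H, deriv q z = 0 := by
    intro z hz
    have h0 : HasDerivAt q (deriv q z) ((1:ℝ) • z) := by
      rw [one_smul]; exact (hqd z hz).hasDerivAt
    have h1 : HasDerivAt (fun t : ℝ => q (t • z)) (deriv q z * ((1:ℝ) • z)) (1:ℝ) :=
      HasDerivAt.comp (h₂ := q) (h := fun t : ℝ => t • z) (1:ℝ) h0
        ((hasDerivAt_id (1:ℝ)).smul_const z)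
    have h2 : HasDerivAt (fun t : ℝ => q (t • z)) 0 (1:ℝ) := by
      refine (hasDerivAt_const (1:ℝ) (q z)).congr_of_eventuallyEq ?_
      filter_upwards [lt_mem_nhds (zero_lt_one' ℝ)] with t ht
      exact hqhom t ht z hz
    have h3 := h1.unique h2
    rw [one_smul] at h3
    exact (mul_eq_zero.1 h3).resolve_right (hz0 z hz)
  have h1H : (1:ℂ) ∈ H := by simp [hH]
  have hqconst : ∀ z ∈ H, q z = q 1 := by
    intro z hz
    exact hHo.is_const_of_deriv_eq_zero hHc.isPreconnected
      (fun w hw => (hqd w hw).differentiableWithinAt) (fun w hw => hqder w hw) hz h1H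
  set A := q 1 with hA
  have hfA : ∀ z ∈ H, f z = A * z ^ (m-1) := by
    intro z hz
    have := hqconst z hz
    rw [hq] at this
    exact (div_eq_iff (pow_ne_zero _ (hz0 z hz))).1 this
  have hPA : ∀ z ∈ H, (m:ℝ) * P z = (A * z ^ m).re := by
    intro z hz
    have h1 := euler_hom hs hom z
    have h2 : fderiv ℝ P z z = (f z * z).re := by
      have : z = z.re • (1:ℂ) + z.im • Complex.I := by
        simp [Complex.re_add_im]
      conv_lhs => rw [this, map_add, map_smul, map_smul, ← this]
      simp [hf]; ring
    rw [smul_eq_mul] at h1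
    rw [← h1, h2, hfA z hz, mul_assoc, ← pow_succ, Nat.sub_add_cancel hm]
  have hPA' : ∀ z : ℂ, 0 ≤ z.re → (m:ℝ) * P z = (A * z ^ m).re := by
    intro z hz
    have h1 : Tendsto (fun t : ℝ => (m:ℝ) * P (z + t)) (nhdsWithin 0 (Ioi 0))
        (nhds ((m:ℝ) * P (z + (0:ℝ)))) := by
      refine Tendsto.mono_left (Continuous.tendsto ?_ 0) nhdsWithin_le_nhds
      have := hs.continuous
      fun_prop
    have h2 : Tendsto (fun t : ℝ => (A * (z + t) ^ m).re) (nhdsWithin 0 (Ioi 0))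
        (nhds ((A * (z + (0:ℝ)) ^ m).re)) := by
      refine Tendsto.mono_left (Continuous.tendsto ?_ 0) nhdsWithin_le_nhds
      fun_prop
    have h3 := tendsto_nhds_unique h1 (h2.congr' (by
      filter_upwards [self_mem_nhdsWithin] with t ht
      have ht' : (0:ℝ) < t := ht
      refine (hPA (z + t) ?_).symm
      simp [hH]; linarith))
    simpa using h3
  -- `P(i) = 0` forces `A = i β i^m`
  have hIm : Complex.I ^ m ≠ 0 := pow_ne_zero _ Complex.I_ne_zero
  set B := A / Complex.I ^ m with hB
  have hAB : A = B * Complex.I ^ m := by rw [hB, div_mul_cancel₀ _ hIm]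
  have hBre : B.re = 0 := by
    have h1 := hPA' Complex.I (by simp)
    rw [hI, mul_zero, hAB, mul_assoc, ← mul_pow, Complex.I_mul_I] at h1
    rcases neg_one_pow_eq_or ℂ m with h | h <;> rw [h] at h1 <;> simpa using h1.symm
  have hmr : (m:ℝ) ≠ 0 := by positivity
  have hform : ∀ z : ℂ, 0 ≤ z.re → P z = (-B.im / m) * ((Complex.I * z) ^ m).im := by
    intro z hz
    have h1 := hPA' z hz
    rw [hAB, mul_assoc, ← mul_pow, Complex.mul_re, hBre] at h1
    field_simp
    linarith
  have hform' : ∀ z : ℂ, P z = (-B.im / m) * ((Complex.I * z) ^ m).im := by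
    intro z
    rcases le_total 0 z.re with h | h
    · exact hform z h
    · have h1 := hom (-1) (-z)
      have h2 := hform (-z) (by simpa using h)
      have h3 : ((-1:ℝ)) • (-z) = z := by simp
      rw [h3, h2] at h1
      rw [h1, mul_neg, neg_pow (Complex.I * z)]
      rcases neg_one_pow_eq_or ℝ m with h | h
      · have h' : (-1:ℂ) ^ m = 1 := by exact_mod_cast congrArg (fun x : ℝ => (x:ℂ)) h
        rw [h, h']; simp
      · have h' : (-1:ℂ) ^ m = -1 := by exact_mod_cast congrArg (fun x : ℝ => (x:ℂ)) h
        rw [h, h']; simp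
  refine ⟨-B.im / m, ?_, hform'⟩
  intro h0
  apply hne
  ext z
  rw [hform' z, h0]; simp

/-! ### Boundary geometry and harmonicity of the leading part -/

/-- Inward normal direction `e` of a smooth boundary at `b`, in terms of a defining function. -/
lemma bd_geom {Ω U : Set ℂ} {f : ℂ → ℝ} {b : ℂ} (hΩ : IsOpen Ω) (hb : b ∈ frontier Ω)
    (hU : IsOpen U) (hbU : b ∈ U) (hf : ContDiff ℝ (⊤ : ℕ∞) f) (hfd : ∀ x ∈ U, fderiv ℝ f x ≠ 0)
    (hΩU : Ω ∩ U = {x ∈ U | f x < 0}) :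
    f b = 0 ∧ ∃ e : ℂ, ‖e‖ = 1 ∧ ∃ κ > 0, ∀ v : ℂ, fderiv ℝ f b (e * v) = -κ * v.re := by
  have hbΩ : b ∉ Ω := by
    rw [hΩ.frontier_eq] at hb; exact hb.2
  have h1 : 0 ≤ f b := by
    by_contra hlt
    push Not at hlt
    have : b ∈ Ω ∩ U := by rw [hΩU]; exact ⟨hbU, hlt⟩
    exact hbΩ this.1
  have h2 : f b ≤ 0 := by
    by_contra hlt
    push Not at hlt
    have hev : ∀ᶠ x in nhds b, x ∈ U ∧ 0 < f x :=
      (show ∀ᶠ x in nhds b, x ∈ U from hU.mem_nhds hbU).and (hf.continuous.continuousAt.eventually (lt_mem_nhds hlt))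
    have hcl : b ∈ closure Ω := frontier_subset_closure hb
    obtain ⟨x, ⟨hxU, hx⟩, hxΩ⟩ := mem_closure_iff_nhds.1 hcl _ hev
    have : x ∈ {x ∈ U | f x < 0} := by rw [← hΩU]; exact ⟨hxΩ, hxU⟩
    exact absurd this.2 (not_lt.2 hx.le)
  refine ⟨le_antisymm h2 h1, ?_⟩
  set L := fderiv ℝ f b with hL
  set w : ℂ := ⟨L 1, L Complex.I⟩ with hw
  have hLv : ∀ v : ℂ, L v = L 1 * v.re + L Complex.I * v.im := by
    intro v
    have : v = v.re • (1:ℂ) + v.im • Complex.I := by simp [Complex.re_add_im]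
    conv_lhs => rw [this, map_add, map_smul, map_smul]
    simp only [smul_eq_mul]; ring
  have hw0 : w ≠ 0 := by
    intro h0
    apply hfd b hbU
    refine ContinuousLinearMap.ext fun v => ?_
    have e1 : L 1 = 0 := congrArg Complex.re h0
    have e2 : L Complex.I = 0 := congrArg Complex.im h0
    have := hLv v
    rw [e1, e2] at this
    simpa using this
  have hn : 0 < ‖w‖ := norm_pos_iff.2 hw0
  have hnsq : ‖w‖ ^ 2 = L 1 ^ 2 + L Complex.I ^ 2 := by
    rw [← Complex.normSq_eq_norm_sq, Complex.normSq_apply]; ring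
  refine ⟨-(((‖w‖⁻¹ : ℝ) : ℂ) * w), ?_, ‖w‖, hn, ?_⟩
  · rw [norm_neg, norm_mul, Complex.norm_real, norm_inv, norm_norm, inv_mul_cancel₀ hn.ne']
  · intro v
    rw [hLv]
    simp only [neg_mul, Complex.neg_re, Complex.neg_im, Complex.mul_re, Complex.mul_im,
      Complex.ofReal_re, Complex.ofReal_im, hw]
    have : (‖w‖:ℝ)⁻¹ * (L 1 ^ 2 + L Complex.I ^ 2) = ‖w‖ := by
      rw [← hnsq]; field_simp
    linear_combination (-v.re) * this

lemma lapR_eq {u : ℂ → ℝ} {x : ℂ} (h : DifferentiableAt ℝ (fderiv ℝ u) x) :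
    lapR u x = fderiv ℝ (fderiv ℝ u) x 1 1 + fderiv ℝ (fderiv ℝ u) x Complex.I Complex.I := by
  unfold lapR
  rw [fderiv_clm_apply h (by fun_prop), fderiv_clm_apply h (by fun_prop)]
  simp

/-- The Laplacian is invariant under rotations. -/
lemma lapR_rot {u : ℂ → ℝ} (hu : ContDiff ℝ 2 u) {e : ℂ} (he : ‖e‖ = 1) (y : ℂ) :
    lapR (fun z => u (e * z)) y = lapR u (e * y) := by
  have hd : Differentiable ℝ u := hu.differentiable (by simp)
  have hd1 : Differentiable ℝ (fderiv ℝ u) :=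
    (hu.fderiv_right (m := 1) (by norm_num)).differentiable (by simp)
  have hm : ∀ z, HasFDerivAt (fun z : ℂ => e * z) (ContinuousLinearMap.mul ℝ ℂ e) z :=
    fun z => (ContinuousLinearMap.mul ℝ ℂ e).hasFDerivAt
  have h1 : ∀ z v, fderiv ℝ (fun z => u (e * z)) z v = fderiv ℝ u (e * z) (e * v) := by
    intro z v
    have := (HasFDerivAt.comp (g := u) (f := fun z : ℂ => e * z) z
      (hd (e * z)).hasFDerivAt (hm z)).fderiv
    have h2 := congrArg (fun L : ℂ →L[ℝ] ℝ => L v) this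
    simpa [Function.comp_def] using h2
  have h2 : ∀ v, fderiv ℝ (fun z => fderiv ℝ (fun z => u (e * z)) z v) y v
      = fderiv ℝ (fderiv ℝ u) (e * y) (e * v) (e * v) := by
    intro v
    have h3 : (fun z => fderiv ℝ (fun z => u (e * z)) z v) =
        fun z => fderiv ℝ u (e * z) (e * v) := funext fun z => h1 z v
    rw [h3]
    have h4 : HasFDerivAt (fun z => fderiv ℝ u (e * z))
        ((fderiv ℝ (fderiv ℝ u) (e * y)).comp (ContinuousLinearMap.mul ℝ ℂ e)) y :=
      HasFDerivAt.comp (g := fderiv ℝ u) (f := fun z : ℂ => e * z) y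
        (hd1 (e * y)).hasFDerivAt (hm y)
    rw [fderiv_clm_apply h4.differentiableAt (by fun_prop), h4.fderiv]
    simp
  rw [lapR, h2, h2, lapR_eq (hd1 _)]
  set D := fderiv ℝ (fderiv ℝ u) (e * y)
  have e1 : e * 1 = e.re • (1:ℂ) + e.im • Complex.I := by simp [Complex.re_add_im]
  have e2 : e * Complex.I = (-e.im) • (1:ℂ) + e.re • Complex.I := by
    apply Complex.ext <;> simp
  have hn : e.re ^ 2 + e.im ^ 2 = 1 := by
    have : ‖e‖ ^ 2 = 1 := by rw [he]; norm_num
    rw [← Complex.normSq_eq_norm_sq, Complex.normSq_apply] at this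
    linarith
  rw [e1, e2]
  simp only [map_add, map_smul, _root_.add_apply, _root_.smul_apply, smul_eq_mul]
  linear_combination (D 1 1 + D Complex.I Complex.I) * hn

/-- The leading part of an eigenfunction at a boundary zero is harmonic on the half-plane of
inward directions, because the right-hand side of the equation is of higher order. -/
lemma lead_harmonic {m : ℕ} (hm : 2 ≤ m) {G P F : ℂ → ℝ} (hG : ContDiff ℝ m G)
    (h0 : ∀ j < m, iteratedFDeriv ℝ j G 0 = 0) (hP : IsLead m G P)
    (hP1 : IsLead (m-1) (fderiv ℝ G) (fderiv ℝ P)) {v : ℂ}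
    {B : ℝ} (hF : ∀ᶠ t : ℝ in nhdsWithin 0 (Ioi 0), |F (t • v)| ≤ B)
    (heq : ∀ᶠ t : ℝ in nhdsWithin 0 (Ioi 0), lapR G (t • v) = F (t • v) * G (t • v)) :
    lapR P v = 0 := by
  obtain ⟨n, rfl⟩ : ∃ n, m = n + 2 := ⟨m - 2, by omega⟩
  have hG1 : ContDiff ℝ (n+1:ℕ) (fderiv ℝ G) := hG.fderiv_right (by norm_cast)
  have h01 : ∀ j < n + 1, iteratedFDeriv ℝ j (fderiv ℝ G) 0 = 0 := by
    intro j hj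
    rw [← norm_eq_zero, norm_iteratedFDeriv_fderiv, h0 (j+1) (by omega), norm_zero]
  obtain ⟨P', hP', -, hP''⟩ := exists_lead (n+1) (fderiv ℝ G) hG1 h01
  have hPP : P' = fderiv ℝ P := hP'.unique hP1
  subst hPP
  have h2 := (hP'' n rfl).tendsto v
  have hPd : Differentiable ℝ (fderiv ℝ P) := hP1.1.differentiable (by simp)
  have hGd : Differentiable ℝ (fderiv ℝ G) := hG1.differentiable (by simp)
  have hcl : ∀ w : ℂ, Continuous fun A : ℂ →L[ℝ] ℂ →L[ℝ] ℝ => A w w := by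
    intro w; fun_prop
  have h3 : Tendsto (fun t : ℝ => (t ^ n)⁻¹ * lapR G (t • v)) (nhdsWithin 0 (Ioi 0))
      (nhds (lapR P v)) := by
    rw [lapR_eq (hPd v)]
    have := (((hcl 1).tendsto _).comp h2).add (((hcl Complex.I).tendsto _).comp h2)
    refine this.congr fun t => ?_
    rw [lapR_eq (hGd _)]
    simp only [Function.comp, _root_.smul_apply, smul_eq_mul]
    ring
  have h4 : Tendsto (fun t : ℝ => (t ^ n)⁻¹ * lapR G (t • v)) (nhdsWithin 0 (Ioi 0))
      (nhds 0) := by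
    have h5 : Tendsto (fun t : ℝ => B * (t ^ 2 * |((t ^ (n+2))⁻¹ • G (t • v))|))
        (nhdsWithin 0 (Ioi 0)) (nhds (B * (0 ^ 2 * |P v|))) := by
      refine Tendsto.const_mul _ (Tendsto.mul ?_ (hP.tendsto v).abs)
      exact ((continuous_pow 2).tendsto 0).mono_left nhdsWithin_le_nhds
    have h6 : B * (0 ^ 2 * |P v|) = 0 := by simp
    rw [h6] at h5
    refine squeeze_zero_norm' ?_ h5
    filter_upwards [hF, heq, self_mem_nhdsWithin] with t ht1 ht2 ht3
    have ht : (0:ℝ) < t := ht3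
    rw [ht2, Real.norm_eq_abs, abs_mul, abs_mul, smul_eq_mul, abs_mul, abs_of_pos (by positivity),
      abs_of_pos (by positivity : 0 < (t ^ (n+2))⁻¹)]
    have : t ^ 2 * ((t ^ (n + 2))⁻¹ * |G (t • v)|) = (t ^ n)⁻¹ * |G (t • v)| := by
      rw [pow_add]; field_simp
    rw [this]
    calc (t ^ n)⁻¹ * (|F (t • v)| * |G (t • v)|) = |F (t • v)| * ((t ^ n)⁻¹ * |G (t • v)|) := by ring
      _ ≤ B * ((t ^ n)⁻¹ * |G (t • v)|) := by gcongr
  exact tendsto_nhds_unique h3 h4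

/-! ### Blow-up at a boundary zero -/

/-- An open neighbourhood of `b` contains small rescaled unit disks. -/
lemma small_scale {e b : ℂ} (he : ‖e‖ = 1) {p : ℂ → Prop} (hp : ∀ᶠ x in nhds b, p x) :
    ∃ r0 > (0:ℝ), ∀ r, 0 < r → r < r0 → ∀ y : ℂ, ‖y‖ ≤ 1 → p (b + r * (e * y)) := by
  obtain ⟨r0, hr0, h⟩ := Metric.eventually_nhds_iff.1 hp
  refine ⟨r0, hr0, fun r hr hrr y hy => h ?_⟩
  rw [dist_eq_norm, add_sub_cancel_left, norm_mul, norm_mul, he, one_mul, Complex.norm_real,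
    Real.norm_of_nonneg hr.le]
  nlinarith

/-- Uniform rescaled form of an `o(‖v‖^m)` estimate at the origin. -/
lemma small_scale_o {F : Type} [NormedAddCommGroup F] {e : ℂ} (he : ‖e‖ = 1) {m : ℕ} {R : ℂ → F}
    (hR : R =o[nhds 0] (fun v => ‖v‖ ^ m)) {ε : ℝ} (hε : 0 < ε) :
    ∃ r0 > (0:ℝ), ∀ r, 0 < r → r < r0 → ∀ y : ℂ, ‖y‖ ≤ 1 → ‖R (r * (e * y))‖ ≤ ε * r ^ m := by
  obtain ⟨r0, hr0, h⟩ := small_scale (b := 0) he (hR.def hε)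
  refine ⟨r0, hr0, fun r hr hrr y hy => ?_⟩
  have h1 := h r hr hrr y hy
  rw [zero_add] at h1
  refine h1.trans ?_
  rw [norm_pow, norm_norm, norm_mul, norm_mul, he, one_mul, Complex.norm_real,
    Real.norm_of_nonneg hr.le]
  have : (r * ‖y‖) ^ m ≤ r ^ m := by
    apply pow_le_pow_left₀ (by positivity)
    nlinarith
  nlinarith

/-- Along a transversal segment on which `g` is strictly monotone, `g` does not vanish on the part
`{F < 0}` inside the domain, since it vanishes at the point where the segment enters. -/
lemma segment_nonvanishing {F g : ℝ → ℝ} {s0 : ℝ}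
    (hF : ContinuousOn F (Icc (-s0) s0))
    (hF0 : 0 < F (-s0)) (hg : StrictMonoOn g (Icc (-s0) s0) ∨ StrictAntiOn g (Icc (-s0) s0))
    (hz : ∀ s ∈ Ico (-s0) s0, F s = 0 → g s = 0) :
    ∀ s ∈ Icc (-s0) s0, F s < 0 → g s ≠ 0 := by
  intro s hs hFs
  have hle : -s0 ≤ s := hs.1
  obtain ⟨s', hs', hs'0⟩ : ∃ s' ∈ Icc (-s0) s, F s' = 0 := by
    have := intermediate_value_Icc' hle (hF.mono (Icc_subset_Icc_right hs.2))
    exact this ⟨hFs.le, hF0.le⟩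
  have hlt : s' < s := by
    rcases hs'.2.lt_or_eq with h | h
    · exact h
    · rw [h] at hs'0; linarith
  have hmem : s' ∈ Icc (-s0) s0 := ⟨hs'.1, hs'.2.trans hs.2⟩
  have h0 := hz s' ⟨hs'.1, hlt.trans_le hs.2⟩ hs'0
  rcases hg with hg | hg
  · have := hg hmem hs hlt; linarith
  · have := hg hmem hs hlt; linarith

/-- A scalar function on a symmetric interval whose derivative keeps a strict sign
is strictly monotone or strictly antitone. -/
lemma mono_of_deriv {g g' : ℝ → ℝ} {s0 : ℝ} (hg : ∀ s, HasDerivAt g (g' s) s)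
    (h : (∀ s ∈ Icc (-s0) s0, 0 < g' s) ∨ (∀ s ∈ Icc (-s0) s0, g' s < 0)) :
    StrictMonoOn g (Icc (-s0) s0) ∨ StrictAntiOn g (Icc (-s0) s0) := by
  have hc : ContinuousOn g (Icc (-s0) s0) := fun s _ => (hg s).continuousAt.continuousWithinAt
  rcases h with h | h
  · left
    refine strictMonoOn_of_deriv_pos (convex_Icc _ _) hc fun s hs => ?_
    rw [(hg s).deriv]; exact h s (interior_subset hs)
  · right
    refine strictAntiOn_of_deriv_neg (convex_Icc _ _) hc fun s hs => ?_
    rw [(hg s).deriv]; exact h s (interior_subset hs)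

/-- The derivative of the leading part in the direction `1` does not vanish at `y0 = ±i/2`, the
two boundary points of the half-plane at distance `1/2`. -/
lemma lead_transversal {m : ℕ} (hm : 1 ≤ m) {P : ℂ → ℝ} {c : ℝ} (hc : c ≠ 0)
    (hP : ∀ y, P y = c * ((Complex.I * y) ^ m).im) (hs : ContDiff ℝ (⊤ : ℕ∞) P)
    {y0 : ℂ} (hy0 : y0 = Complex.I / 2 ∨ y0 = -(Complex.I / 2)) :
    fderiv ℝ P y0 1 ≠ 0 := by
  have hd : DifferentiableAt ℝ P y0 := (hs.differentiable (by simp)).differentiableAt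
  have h1 : HasDerivAt (fun s : ℝ => P (y0 + s)) (fderiv ℝ P (y0 + (0:ℝ)) 1) 0 := by
    have h : HasDerivAt (fun s : ℝ => y0 + (s:ℂ)) 1 0 :=
      (Complex.ofRealCLM.hasDerivAt (x := (0:ℝ))).const_add y0
    have hd' : DifferentiableAt ℝ P (y0 + (0:ℝ)) := by simpa using hd
    exact hd'.hasFDerivAt.comp_hasDerivAt (0:ℝ) h
  have h2 : HasDerivAt (fun s : ℝ => P (y0 + s))
      (c * ((m : ℂ) * (Complex.I * (y0 + (0:ℝ))) ^ (m-1) * Complex.I).im) 0 := by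
    have h : HasDerivAt (fun s : ℝ => Complex.I * (y0 + (s:ℂ))) Complex.I 0 := by
      have := ((Complex.ofRealCLM.hasDerivAt (x := (0:ℝ))).const_add y0).const_mul Complex.I
      simpa using this
    have h3 := h.pow m
    have h4 := (Complex.imCLM.hasFDerivAt.comp_hasDerivAt (0:ℝ) h3).const_mul c
    have h5 : (fun s : ℝ => P (y0 + s)) =
      fun s : ℝ => c * Complex.imCLM ((Complex.I * (y0 + (s:ℂ))) ^ m) := funext fun s => hP _
    rw [h5]
    exact h4
  have h3 := h1.unique h2
  rw [Complex.ofReal_zero, add_zero] at h3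
  rw [h3]
  have hre : ∃ x : ℝ, x ≠ 0 ∧ Complex.I * y0 = x := by
    rcases hy0 with rfl | rfl
    · refine ⟨-(1/2), by norm_num, ?_⟩
      rw [← mul_div_assoc, Complex.I_mul_I]; push_cast; ring
    · refine ⟨1/2, by norm_num, ?_⟩
      rw [mul_neg, ← mul_div_assoc, Complex.I_mul_I]; push_cast; ring
  obtain ⟨x, hx, hxe⟩ := hre
  rw [hxe]
  have : ((m:ℂ) * (x:ℂ) ^ (m-1) * Complex.I) = ((m * x ^ (m-1) : ℝ) : ℂ) * Complex.I := by
    push_cast; ring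
  rw [this, Complex.im_ofReal_mul, Complex.I_im, mul_one]
  have : (m:ℝ) ≠ 0 := by positivity
  positivity

lemma preconnected_meets_frontier {Ω S : Set ℂ} (hΩ : IsOpen Ω) (hS : IsPreconnected S)
    (h1 : (S ∩ Ω).Nonempty) (h2 : (S \ Ω).Nonempty) : (S ∩ frontier Ω).Nonempty := by
  by_contra hne
  rw [hΩ.frontier_eq, Set.not_nonempty_iff_eq_empty] at hne
  have hcl : ∀ x ∈ S, x ∉ Ω → x ∈ (closure Ω)ᶜ := fun x hx hxΩ hxc => by
    have : x ∈ S ∩ (closure Ω \ Ω) := ⟨hx, hxc, hxΩ⟩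
    rw [hne] at this; exact this
  obtain ⟨x, hx, hxΩ⟩ := h2
  obtain ⟨y, -, hy1, hy2⟩ := hS Ω (closure Ω)ᶜ hΩ isClosed_closure.isOpen_compl
    (fun z hz => by
      by_cases h : z ∈ Ω
      · exact Or.inl h
      · exact Or.inr (hcl z hz h)) h1 ⟨x, hx, hcl x hx hxΩ⟩
  exact hy2 (subset_closure hy1)

/-- At a small scale `r` around `b`, the defining function is negative where `Re y ≥ ε`, positive
where `Re y ≤ -ε`, and decreasing in the inward direction `e`. -/
lemma rescaled_boundary {U : Set ℂ} {f : ℂ → ℝ} {b e : ℂ} {κ : ℝ}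
    (hU : IsOpen U) (hbU : b ∈ U) (hf : ContDiff ℝ (⊤ : ℕ∞) f)
    (hfb : f b = 0) (he : ‖e‖ = 1) (hκ : 0 < κ)
    (hfe : ∀ v : ℂ, fderiv ℝ f b (e * v) = -κ * v.re) {ε : ℝ} (hε : 0 < ε) :
    ∃ r0 > (0:ℝ), ∀ r : ℝ, 0 < r → r < r0 → ∀ y : ℂ, ‖y‖ ≤ 1 →
      b + r * (e * y) ∈ U ∧ (ε ≤ y.re → f (b + r * (e * y)) < 0) ∧
      (y.re ≤ -ε → 0 < f (b + r * (e * y))) ∧ fderiv ℝ f (b + r * (e * y)) e < 0 := by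
  obtain ⟨r1, hr1, h1⟩ := small_scale (p := fun x => x ∈ U) he (hU.mem_nhds hbU)
  have hd : HasFDerivAt f (fderiv ℝ f b) b := (hf.differentiable (by simp) b).hasFDerivAt
  have ho := hasFDerivAt_iff_isLittleO_nhds_zero.1 hd
  have ho' : (fun v => f (b + v) - f b - fderiv ℝ f b v) =o[nhds 0] fun v : ℂ => ‖v‖ ^ 1 := by
    simpa using ho.norm_right
  obtain ⟨r2, hr2, h2⟩ := small_scale_o he ho' (ε := κ * ε / 2) (by positivity)
  have hev : ∀ᶠ x in nhds b, fderiv ℝ f x e < 0 := by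
    have hc : Continuous fun x => fderiv ℝ f x e := by
      have := hf.continuous_fderiv (by simp)
      fun_prop
    refine hc.continuousAt.eventually (gt_mem_nhds ?_)
    have := hfe 1
    rw [mul_one] at this
    show fderiv ℝ f b e < 0
    rw [this]; simp [hκ]
  obtain ⟨r3, hr3, h3⟩ := small_scale he hev
  refine ⟨min r1 (min r2 r3), by positivity, fun r hr hrr y hy => ?_⟩
  have hrr1 := hrr.trans_le (min_le_left _ _)
  have hrr2 := hrr.trans_le ((min_le_right _ _).trans (min_le_left _ _))
  have hrr3 := hrr.trans_le ((min_le_right _ _).trans (min_le_right _ _))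
  have h2' := h2 r hr hrr2 y hy
  have hlin : fderiv ℝ f b (r * (e * y)) = r * (-κ * y.re) := by
    have : (r:ℂ) * (e * y) = r • (e * y) := by simp
    rw [this, map_smul, hfe, smul_eq_mul]
  rw [hfb, hlin, Real.norm_eq_abs, abs_le, pow_one] at h2'
  have hκε : 0 < κ * ε * r := by positivity
  refine ⟨h1 r hr hrr1 y hy, fun hy1 => ?_, fun hy1 => ?_, h3 r hr hrr3 y hy⟩
  · have : κ * ε * r ≤ κ * y.re * r := by gcongr
    nlinarith
  · have : κ * y.re * r ≤ κ * (-ε) * r := by gcongr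
    nlinarith

/-- Rescaled description of the domain and of the eigenfunction at the scale `r` around a boundary
zero of order `m`: in the coordinate `y = (x - b)/(r e)` the domain is close to the half-plane
`Re y > 0` and `φ` is close to `r^m c Im((i y)^m)`; moreover the two segments
`±i/2 + [-s₀, s₀]` meet no nodal point inside the domain. -/
lemma blowup {Ω : Set ℂ} (hΩ : IsOpen Ω) (hΩb : HasSmoothBoundary Ω) {p : ℂ → ℝ}
    (hp : ContinuousOn p (closure Ω)) {lam : ℝ} {φ : ℂ → ℝ}
    (hφ : IsDirichletEigenfunction Ω p lam φ) {b : ℂ} (hb : b ∈ frontier Ω) {m : ℕ} (hm : 2 ≤ m)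
    (hz : HasBoundaryZero Ω φ b m) :
    ∃ (e : ℂ) (c s0 : ℝ), ‖e‖ = 1 ∧ c ≠ 0 ∧ 0 < s0 ∧ s0 ≤ 1/4 ∧ ∀ ε > (0:ℝ), ∃ r0 > (0:ℝ),
      ∀ r : ℝ, 0 < r → r < r0 →
        (∀ y : ℂ, ‖y‖ ≤ 1 → ε ≤ y.re → b + r * (e * y) ∈ Ω) ∧
        (∀ y : ℂ, ‖y‖ ≤ 1 → y.re ≤ -ε → b + r * (e * y) ∉ Ω) ∧
        (∀ y : ℂ, ‖y‖ ≤ 1 → b + r * (e * y) ∈ closure Ω →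
          |φ (b + r * (e * y)) - r ^ m * (c * ((Complex.I * y) ^ m).im)| ≤ ε * r ^ m) ∧
        (∀ y0 : ℂ, y0 = Complex.I / 2 ∨ y0 = -(Complex.I / 2) → ∀ s : ℝ, |s| ≤ s0 →
          b + r * (e * (y0 + s)) ∈ Ω → φ (b + r * (e * (y0 + s))) ≠ 0) := by
  obtain ⟨hφne, hφsm, hφc, hφ0, hφeq⟩ := hφ
  obtain ⟨U, f, hU, hbU, hf, hfd, hΩU⟩ := hΩb b hb
  obtain ⟨hfb, e, he, κ, hκ, hfe⟩ := bd_geom hΩ hb hU hbU hf hfd hΩU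
  obtain ⟨W, g, hW, hg, hgφ, hg0, hgm⟩ := hz
  have hΩmem : ∀ x ∈ U, (x ∈ Ω ↔ f x < 0) := by
    intro x hx
    constructor
    · intro h
      have : x ∈ Ω ∩ U := ⟨h, hx⟩
      rw [hΩU] at this; exact this.2
    · intro h
      have : x ∈ Ω ∩ U := by rw [hΩU]; exact ⟨hx, h⟩
      exact this.1
  set G : ℂ → ℝ := fun v => g (b + v) with hG
  have hGs : ContDiff ℝ m G := hg.comp (contDiff_const.add contDiff_id)
  have hGit : ∀ j, iteratedFDeriv ℝ j G 0 = iteratedFDeriv ℝ j g b := by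
    intro j
    have := iteratedFDeriv_comp_add_left (𝕜 := ℝ) (f := g) j b 0
    rw [add_zero] at this
    exact this
  obtain ⟨P0, hP0, hP0ne, hP0d⟩ := exists_lead m G hGs (fun j hj => by rw [hGit]; exact hg0 j hj)
  have hP01 : IsLead (m-1) (fderiv ℝ G) (fderiv ℝ P0) := hP0d (m-1) (by omega)
  set P : ℂ → ℝ := fun y => P0 (e * y) with hP
  have hPs : ContDiff ℝ (⊤ : ℕ∞) P := hP0.1.comp (contDiff_const.mul contDiff_id)
  have hPhom : ∀ (t : ℝ) (v : ℂ), P (t • v) = t ^ m • P v := by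
    intro t v
    simp only [hP, mul_smul_comm, hP0.2.1]
  have he0 : e ≠ 0 := by intro h; rw [h] at he; simp at he
  have hPne : P ≠ 0 := by
    intro h
    apply hgm
    rw [← hGit]
    apply hP0ne
    ext v
    have := congrFun h (e⁻¹ * v)
    simpa [hP, mul_inv_cancel_left₀ he0] using this
  -- the expansion of `φ`
  have hexp : ∀ ε > (0:ℝ), ∃ r0 > (0:ℝ), ∀ r : ℝ, 0 < r → r < r0 → ∀ y : ℂ, ‖y‖ ≤ 1 →
      b + r * (e * y) ∈ closure Ω → |φ (b + r * (e * y)) - r ^ m * P y| ≤ ε * r ^ m := by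
    intro ε hε
    obtain ⟨r1, hr1, h1⟩ := small_scale_o he hP0.2.2 hε
    obtain ⟨r2, hr2, h2⟩ := small_scale (p := fun x => x ∈ W) he hW
    refine ⟨min r1 r2, by positivity, fun r hr hrr y hy hcl => ?_⟩
    have := h1 r hr (hrr.trans_le (min_le_left _ _)) y hy
    rw [Real.norm_eq_abs] at this
    have h3 : P0 (r * (e * y)) = r ^ m * P y := by
      have : (r:ℂ) * (e * y) = r • (e * y) := by simp
      rw [this, hP0.2.1]; rfl
    rw [h3] at this
    have h4 : G (r * (e * y)) = φ (b + r * (e * y)) :=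
      hgφ ⟨hcl, h2 r hr (hrr.trans_le (min_le_right _ _)) y hy⟩
    rwa [h4] at this
  have hgeom := fun {ε : ℝ} (hε : 0 < ε) => rescaled_boundary hU hbU hf hfb he hκ hfe hε
  -- `P` vanishes in the tangential direction
  have hPI2 : P (Complex.I / 2) = 0 := by
    by_contra hne
    have hcont : ContinuousAt (fun s : ℝ => P (Complex.I / 2 + s)) 0 := by
      have := hPs.continuous
      fun_prop
    have hpos : 0 < |P (Complex.I / 2)| / 2 := by positivity
    obtain ⟨δ, hδ, hδ'⟩ := Metric.continuousAt_iff.1 hcont _ hpos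
    set ε := min (min (δ / 2) (1/4)) (|P (Complex.I / 2)| / 4) with hεd
    have hε : 0 < ε := by positivity
    have hε1 : ε ≤ δ / 2 := (min_le_left _ _).trans (min_le_left _ _)
    have hε2 : ε ≤ 1/4 := (min_le_left _ _).trans (min_le_right _ _)
    have hε3 : ε ≤ |P (Complex.I / 2)| / 4 := min_le_right _ _
    obtain ⟨r1, hr1, h1⟩ := hgeom hε
    obtain ⟨r2, hr2, h2⟩ := hexp ε hε
    set r := min r1 r2 / 2 with hr
    have hrp : 0 < r := by positivity
    have hrr1 : r < r1 := by
      have := min_le_left r1 r2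
      have : 0 < min r1 r2 := by positivity
      linarith
    have hrr2 : r < r2 := by
      have := min_le_right r1 r2
      have : 0 < min r1 r2 := by positivity
      linarith
    have hnorm : ∀ s : ℝ, |s| ≤ ε → ‖Complex.I / 2 + (s:ℂ)‖ ≤ 1 := by
      intro s hs
      refine (norm_add_le _ _).trans ?_
      rw [Complex.norm_real, Real.norm_eq_abs, norm_div, Complex.norm_I]
      norm_num; linarith
    have hcs : Continuous fun s : ℝ => b + (r:ℂ) * (e * (Complex.I / 2 + (s:ℂ))) := by fun_prop
    have hpre : IsPreconnected ((fun s : ℝ => b + (r:ℂ) * (e * (Complex.I / 2 + (s:ℂ)))) ''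
        Icc (-ε) ε) := isPreconnected_Icc.image _ hcs.continuousOn
    have hε' : ε ∈ Icc (-ε) ε := ⟨by linarith, le_rfl⟩
    have hεn : -ε ∈ Icc (-ε) ε := ⟨le_rfl, by linarith⟩
    have hfr := preconnected_meets_frontier hΩ hpre (by
        obtain ⟨hu, ha, -⟩ := h1 r hrp hrr1 _ (hnorm ε (by rw [abs_of_pos hε]))
        exact ⟨_, ⟨ε, hε', rfl⟩, (hΩmem _ hu).2 (ha (by simp))⟩) (by
        obtain ⟨hu, -, ha, -⟩ := h1 r hrp hrr1 _ (hnorm (-ε) (by rw [abs_neg, abs_of_pos hε]))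
        refine ⟨_, ⟨-ε, hεn, rfl⟩, fun hmem => ?_⟩
        have h5 := (hΩmem _ hu).1 hmem
        have := ha (by simp)
        linarith)
    obtain ⟨-, ⟨s, hs, rfl⟩, hsf⟩ := hfr
    have hsa : |s| ≤ ε := abs_le.2 hs
    have h3 := h2 r hrp hrr2 _ (hnorm s hsa) (frontier_subset_closure hsf)
    rw [hφ0 _ hsf, zero_sub, abs_neg, abs_mul, abs_of_pos (by positivity : 0 < r ^ m),
      mul_comm] at h3
    have h4 := le_of_mul_le_mul_right h3 (by positivity)
    have h5 := @hδ' s (by rw [dist_zero_right, Real.norm_eq_abs]; linarith)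
    rw [Real.dist_eq, Complex.ofReal_zero, add_zero] at h5
    have := abs_sub_abs_le_abs_sub (P (Complex.I / 2)) (P (Complex.I / 2 + s))
    rw [abs_sub_comm] at this
    linarith
  have hPI : P Complex.I = 0 := by
    have := hPhom 2 (Complex.I / 2)
    rw [hPI2, smul_zero] at this
    rw [← this]; congr 1
    rw [Complex.real_smul]; push_cast; ring
  -- harmonicity
  have hPlap : ∀ y : ℂ, 0 < y.re → lapR P y = 0 := by
    intro y hy
    rw [hP, lapR_rot (hP0.1.of_le (by norm_cast)) he]
    have hy0 : 0 < ‖y‖ := by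
      rw [norm_pos_iff]; rintro rfl; simp at hy
    obtain ⟨r1, hr1, h1⟩ := hgeom (ε := y.re / ‖y‖) (by positivity)
    have hmemΩ : ∀ᶠ t : ℝ in nhdsWithin 0 (Ioi 0), b + t • (e * y) ∈ Ω := by
      have : Ioo 0 (r1 / ‖y‖) ∈ nhdsWithin (0:ℝ) (Ioi 0) := Ioo_mem_nhdsGT (by positivity)
      filter_upwards [this] with t ht
      have ht2 : t * ‖y‖ < r1 := (lt_div_iff₀ hy0).1 ht.2
      have ht3 : 0 < t * ‖y‖ := mul_pos ht.1 hy0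
      obtain ⟨hu, ha, -⟩ := h1 (t * ‖y‖) ht3 ht2 (((‖y‖⁻¹ : ℝ) : ℂ) * y) (by
        rw [norm_mul, Complex.norm_real, norm_inv, norm_norm, inv_mul_cancel₀ hy0.ne'])
      have hx : b + ((t * ‖y‖ : ℝ) : ℂ) * (e * (((‖y‖⁻¹ : ℝ) : ℂ) * y)) = b + t • (e * y) := by
        have : (‖y‖ : ℂ) ≠ 0 := by exact_mod_cast hy0.ne'
        rw [Complex.real_smul]; push_cast; field_simp
      rw [hx] at hu ha
      refine (hΩmem _ hu).2 (ha ?_)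
      rw [Complex.re_ofReal_mul, div_eq_inv_mul]
    have htend : Tendsto (fun t : ℝ => b + t • (e * y)) (nhdsWithin 0 (Ioi 0)) (nhds b) := by
      have : ContinuousAt (fun t : ℝ => b + t • (e * y)) 0 := by fun_prop
      have h := this.tendsto
      rw [zero_smul, add_zero] at h
      exact h.mono_left nhdsWithin_le_nhds
    have hWev : ∀ᶠ t : ℝ in nhdsWithin 0 (Ioi 0), b + t • (e * y) ∈ interior W :=
      htend.eventually (isOpen_interior.mem_nhds (mem_interior_iff_mem_nhds.2 hW))
    have hbcl : b ∈ closure Ω := frontier_subset_closure hb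
    have hpev : ∀ᶠ t : ℝ in nhdsWithin 0 (Ioi 0), |p (b + t • (e * y))| < |p b| + 1 := by
      have h := (hp b hbcl).abs
      have h2 : Tendsto (fun t : ℝ => b + t • (e * y)) (nhdsWithin 0 (Ioi 0))
          (nhdsWithin b (closure Ω)) :=
        tendsto_nhdsWithin_iff.2 ⟨htend, hmemΩ.mono fun t ht => subset_closure ht⟩
      exact (h.tendsto.comp h2).eventually (gt_mem_nhds (by linarith))
    refine lead_harmonic hm (F := fun v => -(lam * p (b + v))) (B := |lam| * (|p b| + 1)) hGs
      (fun j hj => by rw [hGit]; exact hg0 j hj) hP0 hP01 ?_ ?_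
    · filter_upwards [hpev] with t ht
      rw [abs_neg, abs_mul]
      gcongr
    · filter_upwards [hmemΩ, hWev] with t ht1 ht2
      have hEq : g =ᶠ[nhds (b + t • (e * y))] φ := by
        filter_upwards [hΩ.mem_nhds ht1, isOpen_interior.mem_nhds ht2] with x hx1 hx2
        exact hgφ ⟨subset_closure hx1, interior_subset hx2⟩
      have hlapg : lapR G (t • (e * y)) = lapR φ (b + t • (e * y)) := by
        have e1 : ∀ v w, fderiv ℝ G w v = fderiv ℝ g (b + w) v := by
          intro v w
          rw [hG, fderiv_comp_add_left]
        have e2 : ∀ v, (fun w => fderiv ℝ G w v) = fun w => (fun z => fderiv ℝ g z v) (b + w) :=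
          fun v => funext fun w => e1 v w
        have e3 : ∀ v : ℂ, (fun z => fderiv ℝ g z v) =ᶠ[nhds (b + t • (e * y))]
            (fun z => fderiv ℝ φ z v) := by
          intro v
          filter_upwards [hEq.fderiv (𝕜 := ℝ)] with z hz
          rw [hz]
        have e4 : ∀ v : ℂ, fderiv ℝ (fun w => fderiv ℝ G w v) (t • (e * y)) =
            fderiv ℝ (fun z => fderiv ℝ φ z v) (b + t • (e * y)) := by
          intro v
          rw [← (e3 v).fderiv_eq, e2 v]
          exact fderiv_comp_add_left (f := fun z => fderiv ℝ g z v) b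
        rw [lapR, lapR, e4, e4]
      rw [hlapg]
      have h6 := hφeq _ ht1
      have h7 : G (t • (e * y)) = φ (b + t • (e * y)) := hEq.eq_of_nhds
      rw [h7]
      linarith
  obtain ⟨c, hc, hPc⟩ := classify_homogeneous m (by omega) P hPs hPhom hPlap hPI hPne
  -- transversality near `±i/2`
  have htrans : ∀ y0 : ℂ, y0 = Complex.I / 2 ∨ y0 = -(Complex.I / 2) → ∃ s0 > (0:ℝ), ∃ d > (0:ℝ),
      (∀ s : ℝ, |s| ≤ s0 → d ≤ fderiv ℝ P (y0 + s) 1) ∨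
      (∀ s : ℝ, |s| ≤ s0 → fderiv ℝ P (y0 + s) 1 ≤ -d) := by
    intro y0 hy0
    have hne := lead_transversal (by omega) hc hPc hPs hy0
    have hcont : ContinuousAt (fun s : ℝ => fderiv ℝ P (y0 + s) 1) 0 := by
      have := hPs.continuous_fderiv (by simp)
      fun_prop
    set D := fderiv ℝ P y0 1 with hD
    obtain ⟨δ, hδ, hδ'⟩ := Metric.continuousAt_iff.1 hcont (|D| / 2) (by positivity)
    refine ⟨δ / 2, by positivity, |D| / 2, by positivity, ?_⟩
    have hclose : ∀ s : ℝ, |s| ≤ δ / 2 → |fderiv ℝ P (y0 + s) 1 - D| < |D| / 2 := by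
      intro s hs
      have := @hδ' s (by rw [dist_zero_right, Real.norm_eq_abs]; linarith)
      rwa [Real.dist_eq, Complex.ofReal_zero, add_zero] at this
    rcases lt_or_gt_of_ne hne with h | h
    · right; intro s hs
      have := abs_lt.1 (hclose s hs)
      rw [abs_of_neg h] at this ⊢
      linarith
    · left; intro s hs
      have := abs_lt.1 (hclose s hs)
      rw [abs_of_pos h] at this ⊢
      linarith
  obtain ⟨s1, hs1, d1, hd1, ht1⟩ := htrans _ (Or.inl rfl)
  obtain ⟨s2, hs2, d2, hd2, ht2⟩ := htrans _ (Or.inr rfl)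
  set s0 := min (min s1 s2) (1/4) with hs0d
  have hs0 : 0 < s0 := by positivity
  have hs01 : s0 ≤ s1 := (min_le_left _ _).trans (min_le_left _ _)
  have hs02 : s0 ≤ s2 := (min_le_left _ _).trans (min_le_right _ _)
  have hs04 : s0 ≤ 1/4 := min_le_right _ _
  set d := min d1 d2 with hdd
  have hd : 0 < d := by positivity
  have hsign : ∀ y0 : ℂ, y0 = Complex.I / 2 ∨ y0 = -(Complex.I / 2) →
      (∀ s : ℝ, |s| ≤ s0 → d ≤ fderiv ℝ P (y0 + s) 1) ∨
      (∀ s : ℝ, |s| ≤ s0 → fderiv ℝ P (y0 + s) 1 ≤ -d) := by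
    rintro y0 (rfl | rfl)
    · rcases ht1 with h | h
      · left; intro s hs; exact (min_le_left _ _).trans (h s (hs.trans hs01))
      · right; intro s hs; exact (h s (hs.trans hs01)).trans (neg_le_neg (min_le_left _ _))
    · rcases ht2 with h | h
      · left; intro s hs; exact (min_le_right _ _).trans (h s (hs.trans hs02))
      · right; intro s hs; exact (h s (hs.trans hs02)).trans (neg_le_neg (min_le_right _ _))
  refine ⟨e, c, s0, he, hc, hs0, hs04, fun ε hε => ?_⟩
  obtain ⟨r1, hr1, h1⟩ := hgeom hε
  obtain ⟨r2, hr2, h2⟩ := hexp ε hε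
  obtain ⟨r3, hr3, h3⟩ := hgeom hs0
  obtain ⟨r4, hr4, h4⟩ := small_scale_o he hP01.2.2 (ε := d / 2) (by positivity)
  obtain ⟨r5, hr5, h5⟩ := small_scale (p := fun x => x ∈ W) he hW
  refine ⟨min (min r1 r2) (min (min r3 r4) r5), by positivity, fun r hr hrr => ?_⟩
  have hrr1 : r < r1 := hrr.trans_le ((min_le_left _ _).trans (min_le_left _ _))
  have hrr2 : r < r2 := hrr.trans_le ((min_le_left _ _).trans (min_le_right _ _))
  have hrr3 : r < r3 := hrr.trans_le ((min_le_right _ _).trans ((min_le_left _ _).trans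
    (min_le_left _ _)))
  have hrr4 : r < r4 := hrr.trans_le ((min_le_right _ _).trans ((min_le_left _ _).trans
    (min_le_right _ _)))
  have hrr5 : r < r5 := hrr.trans_le ((min_le_right _ _).trans (min_le_right _ _))
  refine ⟨fun y hy hyr => ?_, fun y hy hyr hmem => ?_, fun y hy hcl => ?_, fun y0 hy0 s hs => ?_⟩
  · obtain ⟨hu, ha, -⟩ := h1 r hr hrr1 y hy
    exact (hΩmem _ hu).2 (ha hyr)
  · obtain ⟨hu, -, ha, -⟩ := h1 r hr hrr1 y hy
    have := (hΩmem _ hu).1 hmem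
    linarith [ha hyr]
  · rw [← hPc]; exact h2 r hr hrr2 y hy hcl
  · have hnorm : ∀ s : ℝ, s ∈ Icc (-s0) s0 → ‖y0 + (s:ℂ)‖ ≤ 1 := by
      intro s hs
      have hs' := abs_le.2 hs
      refine (norm_add_le _ _).trans ?_
      rw [Complex.norm_real, Real.norm_eq_abs]
      have : ‖y0‖ = 1/2 := by
        rcases hy0 with rfl | rfl <;> simp
      rw [this]; linarith
    have hre0 : y0.re = 0 := by rcases hy0 with rfl | rfl <;> simp
    have hline : ∀ s : ℝ, HasDerivAt (fun s : ℝ => b + (r:ℂ) * (e * (y0 + (s:ℂ)))) (r • e) s := by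
      intro s
      have := ((((Complex.ofRealCLM.hasDerivAt (x := s)).const_add y0).const_mul e).const_mul
        (r:ℂ)).const_add b
      simpa using this
    have hFder : ∀ s : ℝ, HasDerivAt (fun s : ℝ => f (b + (r:ℂ) * (e * (y0 + (s:ℂ)))))
        (fderiv ℝ f (b + (r:ℂ) * (e * (y0 + (s:ℂ)))) (r • e)) s := fun s =>
      HasFDerivAt.comp_hasDerivAt (l := f) (f := fun s : ℝ => b + (r:ℂ) * (e * (y0 + (s:ℂ)))) s
        (hf.differentiable (by simp) _).hasFDerivAt (hline s)
    have hgdiff : Differentiable ℝ g := hg.differentiable (by norm_cast; omega)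
    have hgder : ∀ s : ℝ, HasDerivAt (fun s : ℝ => g (b + (r:ℂ) * (e * (y0 + (s:ℂ)))))
        (fderiv ℝ g (b + (r:ℂ) * (e * (y0 + (s:ℂ)))) (r • e)) s := fun s =>
      HasFDerivAt.comp_hasDerivAt (l := g) (f := fun s : ℝ => b + (r:ℂ) * (e * (y0 + (s:ℂ)))) s
        (hgdiff _).hasFDerivAt (hline s)
    have hFanti : StrictAntiOn (fun s : ℝ => f (b + (r:ℂ) * (e * (y0 + (s:ℂ))))) (Icc (-s0) s0) := by
      refine strictAntiOn_of_deriv_neg (convex_Icc _ _)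
        (fun s _ => (hFder s).continuousAt.continuousWithinAt) fun s hs => ?_
      rw [(hFder s).deriv, map_smul, smul_eq_mul]
      exact mul_neg_of_pos_of_neg hr (h3 r hr hrr3 _ (hnorm s (interior_subset hs))).2.2.2
    have hgest : ∀ s ∈ Icc (-s0) s0, |fderiv ℝ g (b + (r:ℂ) * (e * (y0 + (s:ℂ)))) e
        - r ^ (m-1) * fderiv ℝ P (y0 + s) 1| ≤ d / 2 * r ^ (m-1) := by
      intro s hs
      have h6 := h4 r hr hrr4 _ (hnorm s hs)
      have e1 : fderiv ℝ G (r * (e * (y0 + (s:ℂ)))) = fderiv ℝ g (b + r * (e * (y0 + (s:ℂ)))) := by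
        rw [hG, fderiv_comp_add_left]
      have e2 : fderiv ℝ P0 ((r:ℂ) * (e * (y0 + (s:ℂ)))) =
          r ^ (m-1) • fderiv ℝ P0 (e * (y0 + (s:ℂ))) := by
        rw [← hP01.2.1, Complex.real_smul]
      have e3 : fderiv ℝ P (y0 + s) 1 = fderiv ℝ P0 (e * (y0 + (s:ℂ))) e := by
        have hcomp : HasFDerivAt P ((fderiv ℝ P0 (e * (y0 + (s:ℂ)))).comp
            (ContinuousLinearMap.mul ℝ ℂ e)) (y0 + s) :=
          HasFDerivAt.comp (g := P0) (f := fun z : ℂ => e * z) (y0 + (s:ℂ))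
            (hP0.1.differentiable (by simp) _).hasFDerivAt
            (ContinuousLinearMap.mul ℝ ℂ e).hasFDerivAt
        rw [hcomp.fderiv]; simp
      have h7 := ContinuousLinearMap.le_of_opNorm_le _ h6 e
      rw [he, mul_one, e1, e2, Real.norm_eq_abs] at h7
      rw [e3]
      simpa using h7
    have hgmono := mono_of_deriv (s0 := s0) hgder (by
      have hrm : 0 < r ^ (m-1) := by positivity
      rcases hsign y0 hy0 with h | h
      · left
        intro s hs
        have h6 := abs_le.1 (hgest s hs)
        have h7 := h s (abs_le.2 hs)
        rw [map_smul, smul_eq_mul]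
        apply mul_pos hr
        nlinarith
      · right
        intro s hs
        have h6 := abs_le.1 (hgest s hs)
        have h7 := h s (abs_le.2 hs)
        rw [map_smul, smul_eq_mul]
        apply mul_neg_of_pos_of_neg hr
        nlinarith)
    have hsm : s ∈ Icc (-s0) s0 := abs_le.1 hs
    have hneg : -s0 ∈ Icc (-s0) s0 := ⟨le_rfl, by linarith⟩
    have key := segment_nonvanishing (s0 := s0)
      (F := fun s : ℝ => f (b + (r:ℂ) * (e * (y0 + (s:ℂ)))))
      (g := fun s : ℝ => g (b + (r:ℂ) * (e * (y0 + (s:ℂ)))))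
      (fun s _ => (hFder s).continuousAt.continuousWithinAt)
      ((h3 r hr hrr3 _ (hnorm (-s0) hneg)).2.2.1 (by simp [hre0])) hgmono (by
        intro s' hs' hF0'
        have hF0 : f (b + (r:ℂ) * (e * (y0 + (s':ℂ)))) = 0 := hF0'
        have hs'I : s' ∈ Icc (-s0) s0 := ⟨hs'.1, hs'.2.le⟩
        have hu' := (h3 r hr hrr3 _ (hnorm s' hs'I)).1
        have hcl : b + (r:ℂ) * (e * (y0 + (s':ℂ))) ∈ closure Ω := by
          have hev : ∀ᶠ s'' : ℝ in nhdsWithin s' (Ioi s'), b + (r:ℂ) * (e * (y0 + (s'':ℂ))) ∈ Ω := by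
            filter_upwards [Ioo_mem_nhdsGT hs'.2] with s'' hs''
            have hI : s'' ∈ Icc (-s0) s0 := ⟨hs'.1.trans hs''.1.le, hs''.2.le⟩
            have : f (b + (r:ℂ) * (e * (y0 + (s'':ℂ)))) < 0 := lt_of_lt_of_eq (hFanti hs'I hI hs''.1) hF0
            exact (hΩmem _ (h3 r hr hrr3 _ (hnorm s'' hI)).1).2 this
          exact mem_closure_of_tendsto
            ((hline s').continuousAt.tendsto.mono_left nhdsWithin_le_nhds) hev
        have hfr : b + (r:ℂ) * (e * (y0 + (s':ℂ))) ∈ frontier Ω := by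
          rw [hΩ.frontier_eq]
          refine ⟨hcl, fun hmem => ?_⟩
          have := (hΩmem _ hu').1 hmem
          linarith
        have hgφ' := hgφ ⟨hcl, h5 r hr hrr5 _ (hnorm s' hs'I)⟩
        exact hgφ'.trans (hφ0 _ hfr)) s hsm
    intro hmem
    have hu := (h3 r hr hrr3 _ (hnorm s hsm)).1
    have := key ((hΩmem _ hu).1 hmem)
    rwa [hgφ ⟨subset_closure hmem, h5 r hr hrr5 _ (hnorm s hsm)⟩] at this

/-! ### Branches of the square root and monodromy -/

/-- A continuous square root of `(x - γ(t₀))/(x - γ(0))` off the arc `γ([0,t₀])`, obtained by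
lifting the homotopy `s ↦ (x - γ(s))/(x - γ(0))` through the exponential. -/
lemma branch_arc (γ : ℝ → ℂ) {t0 : ℝ} (h0 : 0 ≤ t0) (hγ : ContinuousOn γ (Icc 0 t0)) :
    ∃ M : ℂ → ℂ, ContinuousOn M (γ '' Icc 0 t0)ᶜ ∧
      ∀ x ∉ γ '' Icc 0 t0, M x ^ 2 * (x - γ 0) = x - γ t0 := by
  set Γ := γ '' Icc 0 t0 with hΓ
  have hmem : ∀ s : unitInterval, (s:ℝ) * t0 ∈ Icc 0 t0 := fun s =>
    ⟨mul_nonneg s.2.1 h0, by nlinarith [s.2.2]⟩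
  have hne : ∀ (x : ℂ), x ∉ Γ → ∀ s ∈ Icc 0 t0, x - γ s ≠ 0 := by
    intro x hx s hs h
    exact hx ⟨s, hs, (sub_eq_zero.1 h).symm⟩
  have h00 : (0:ℝ) ∈ Icc 0 t0 := ⟨le_rfl, h0⟩
  have hγc : Continuous fun q : unitInterval × {x : ℂ // x ∉ Γ} => γ ((q.1:ℝ) * t0) := by
    refine hγ.comp_continuous (by fun_prop) fun q => hmem q.1
  let H : C(unitInterval × {x : ℂ // x ∉ Γ}, {z : ℂ // z ≠ 0}) :=
    ⟨fun q => ⟨((q.2:ℂ) - γ ((q.1:ℝ) * t0)) / ((q.2:ℂ) - γ 0),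
      div_ne_zero (hne _ q.2.2 _ (hmem q.1)) (hne _ q.2.2 _ h00)⟩, by
      refine Continuous.subtype_mk ?_ _
      refine Continuous.div ?_ (by fun_prop) fun q => hne _ q.2.2 _ h00
      exact (by fun_prop : Continuous fun q : unitInterval × {x : ℂ // x ∉ Γ} => (q.2:ℂ)).sub hγc⟩
  have hcov := Complex.isCoveringMap_exp
  have H0 : ∀ x : {x : ℂ // x ∉ Γ}, H (0, x) = ⟨Complex.exp ((ContinuousMap.const _ 0 :
      C({x : ℂ // x ∉ Γ}, ℂ)) x), Complex.exp_ne_zero _⟩ := by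
    intro x
    apply Subtype.ext
    show ((x:ℂ) - γ (((0:unitInterval):ℝ) * t0)) / ((x:ℂ) - γ 0) = Complex.exp 0
    have : ((0:unitInterval):ℝ) * t0 = 0 := by simp
    rw [this, Complex.exp_zero, div_self (hne _ x.2 _ h00)]
  let L := hcov.liftHomotopy H (ContinuousMap.const _ 0) H0
  have hL := hcov.liftHomotopy_lifts H (ContinuousMap.const _ 0) H0
  have hL1 : ∀ x : {x : ℂ // x ∉ Γ}, Complex.exp (L (1, x)) = ((x:ℂ) - γ t0) / ((x:ℂ) - γ 0) := by
    intro x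
    have h := congrArg Subtype.val (congrFun hL (1, x))
    have h1 : ((1:unitInterval):ℝ) * t0 = t0 := by simp
    calc Complex.exp (L (1, x)) = ((x:ℂ) - γ (((1:unitInterval):ℝ) * t0)) / ((x:ℂ) - γ 0) := h
      _ = _ := by rw [h1]
  classical
  refine ⟨fun x => if hx : x ∉ Γ then Complex.exp (L (1, ⟨x, hx⟩) / 2) else 0, ?_, ?_⟩
  · rw [continuousOn_iff_continuous_domRestrict]
    have : (Γᶜ.domRestrict fun x => if hx : x ∉ Γ then Complex.exp (L (1, ⟨x, hx⟩) / 2) else 0) =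
        fun x : {x : ℂ // x ∉ Γ} => Complex.exp (L (1, x) / 2) := by
      funext x
      exact dif_pos x.2
    rw [this]
    have hc : Continuous fun x : {x : ℂ // x ∉ Γ} => L (1, x) := L.continuous.comp (by fun_prop)
    fun_prop
  · intro x hx
    simp only [hx, not_false_eq_true, dif_pos]
    rw [← Complex.exp_nat_mul]
    have : ((2:ℕ):ℂ) * (L (1, ⟨x, hx⟩) / 2) = L (1, ⟨x, hx⟩) := by push_cast; ring
    rw [this, hL1, div_mul_cancel₀ _ (hne _ hx _ h00)]

/-- Three sides of a rectangle around the origin, open to the right. -/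
def bracket (s : ℝ) : Set ℂ :=
  (fun x : ℝ => Complex.I / 2 + (x:ℂ)) '' Icc (-s) s ∪
    ((fun x : ℝ => (-s : ℂ) + (x:ℂ) * Complex.I) '' Icc (-(1/2)) (1/2) ∪
      (fun x : ℝ => -(Complex.I / 2) + (x:ℂ)) '' Icc (-s) s)

lemma bracket_preconnected {s : ℝ} (hs : 0 < s) : IsPreconnected (bracket s) := by
  have h1 : IsPreconnected ((fun x : ℝ => Complex.I / 2 + (x:ℂ)) '' Icc (-s) s) :=
    isPreconnected_Icc.image _ (by fun_prop)
  have h2 : IsPreconnected ((fun x : ℝ => (-s : ℂ) + (x:ℂ) * Complex.I) ''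
      Icc (-(1/2)) (1/2)) := isPreconnected_Icc.image _ (by fun_prop)
  have h3 : IsPreconnected ((fun x : ℝ => -(Complex.I / 2) + (x:ℂ)) '' Icc (-s) s) :=
    isPreconnected_Icc.image _ (by fun_prop)
  have hm : -s ∈ Icc (-s) s := ⟨le_rfl, by linarith⟩
  have h23 : IsPreconnected ((fun x : ℝ => (-s : ℂ) + (x:ℂ) * Complex.I) '' Icc (-(1/2)) (1/2) ∪
      (fun x : ℝ => -(Complex.I / 2) + (x:ℂ)) '' Icc (-s) s) := by
    refine h2.union (-(Complex.I / 2) + ((-s:ℝ):ℂ)) ⟨-(1/2), ⟨le_rfl, by norm_num⟩, ?_⟩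
      ⟨-s, hm, rfl⟩ h3
    push_cast; ring
  refine h1.union (Complex.I / 2 + ((-s:ℝ):ℂ)) ⟨-s, hm, rfl⟩ (Or.inl ⟨1/2, ⟨by norm_num, le_rfl⟩,
    ?_⟩) h23
  push_cast; ring

lemma bracket_neg_slit {s : ℝ} (hs : 0 < s) {y : ℂ} (hy : y ∈ bracket s) :
    -y ∈ Complex.slitPlane := by
  rw [Complex.mem_slitPlane_iff]
  rcases hy with ⟨x, -, rfl⟩ | ⟨x, -, rfl⟩ | ⟨x, -, rfl⟩
  · right; simp
  · left; simp [hs]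
  · right; simp

lemma bracket_norm {s : ℝ} (hs : 0 < s) (hs4 : s ≤ 1/4) {y : ℂ} (hy : y ∈ bracket s) :
    ‖y‖ < 1 := by
  rcases hy with ⟨x, hx, rfl⟩ | ⟨x, hx, rfl⟩ | ⟨x, hx, rfl⟩
  · refine (norm_add_le _ _).trans_lt ?_
    have := abs_le.2 hx
    simp; linarith
  · refine (norm_add_le _ _).trans_lt ?_
    have := abs_le.2 hx
    simp
    rcases abs_cases s with h | h <;> linarith
  · refine (norm_add_le _ _).trans_lt ?_
    have := abs_le.2 hx
    simp; linarith

/-- Going around the origin along the bracket, and back through the right half-disk, changes the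
sign of the square root: monodromy of `√y`. -/
lemma flip_monodromy {z : ℂ} (hz : z ≠ 0) {s : ℝ} (hs : 0 < s) (hs4 : s ≤ 1/4) {N R : ℂ → ℂ}
    (hN : ContinuousOn N (bracket s)) (hN2 : ∀ y ∈ bracket s, N y ^ 2 * (z * y) = 1)
    (hR : ContinuousOn R {y | ‖y‖ < 1 ∧ s ≤ y.re})
    (hR2 : ∀ y, ‖y‖ < 1 → s ≤ y.re → R y ^ 2 = z * y) :
    R (Complex.I / 2 + s) * N (Complex.I / 2 + s) =
      -(R (-(Complex.I / 2) + s) * N (-(Complex.I / 2) + s)) := by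
  obtain ⟨C, hC⟩ : ∃ C : ℂ, C ^ 2 = z := IsAlgClosed.exists_pow_nat_eq z (by norm_num)
  obtain ⟨K, hK⟩ : ∃ K : ℂ, K ^ 2 = -z := IsAlgClosed.exists_pow_nat_eq (-z) (by norm_num)
  have hC0 : C ≠ 0 := by rintro rfl; apply hz; rw [← hC]; simp
  have hK0 : K ≠ 0 := by
    rintro rfl
    apply hz
    rw [zero_pow (by norm_num)] at hK
    exact neg_eq_zero.1 hK.symm
  have hexp : ∀ w : ℂ, w ≠ 0 → Complex.exp (Complex.log w / 2) ^ 2 = w := by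
    intro w hw
    rw [← Complex.exp_nat_mul]
    have : ((2:ℕ):ℂ) * (Complex.log w / 2) = Complex.log w := by push_cast; ring
    rw [this, Complex.exp_log hw]
  have hDc : Convex ℝ {y : ℂ | ‖y‖ < 1 ∧ s ≤ y.re} := by
    have h1 : Convex ℝ {y : ℂ | ‖y‖ < 1} := by
      have : {y : ℂ | ‖y‖ < 1} = Metric.ball 0 1 := by ext y; simp
      rw [this]; exact convex_ball (0:ℂ) 1
    exact h1.inter (convex_halfSpace_re_ge s)
  have hDslit : ∀ y ∈ {y : ℂ | ‖y‖ < 1 ∧ s ≤ y.re}, y ∈ Complex.slitPlane := fun y hy =>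
    Complex.mem_slitPlane_iff.2 (Or.inl (hs.trans_le hy.2))
  have hRc := hDc.isPreconnected.eq_or_eq_neg_of_sq_eq
    (f := R) (g := fun y => C * Complex.exp (Complex.log y / 2)) hR
    (by
      refine continuousOn_const.mul (Complex.continuous_exp.comp_continuousOn ?_)
      exact (ContinuousOn.clog continuousOn_id hDslit).div_const 2)
    (by
      intro y hy
      simp only [Pi.pow_apply]
      rw [hR2 y hy.1 hy.2, mul_pow, hC, hexp y (Complex.slitPlane_ne_zero (hDslit y hy))])
    (fun {y} _ => mul_ne_zero hC0 (Complex.exp_ne_zero _))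
  have hNc := (bracket_preconnected hs).eq_or_eq_neg_of_sq_eq
    (f := N) (g := fun y => (K * Complex.exp (Complex.log (-y) / 2))⁻¹) hN
    (by
      refine ContinuousOn.inv₀ (continuousOn_const.mul (Complex.continuous_exp.comp_continuousOn ?_))
        fun y _ => mul_ne_zero hK0 (Complex.exp_ne_zero _)
      exact (ContinuousOn.clog continuousOn_neg fun y hy => bracket_neg_slit hs hy).div_const 2)
    (by
      intro y hy
      simp only [Pi.pow_apply]
      rw [inv_pow, mul_pow, hK, hexp _ (Complex.slitPlane_ne_zero (bracket_neg_slit hs hy)),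
        neg_mul_neg]
      exact eq_inv_of_mul_eq_one_left (hN2 y hy))
    (fun {y} _ => inv_ne_zero (mul_ne_zero hK0 (Complex.exp_ne_zero _)))
  set y1 : ℂ := Complex.I / 2 + s with hy1
  set y2 : ℂ := -(Complex.I / 2) + s with hy2
  have hsI : s ∈ Icc (-s) s := ⟨by linarith, le_rfl⟩
  have hB1 : y1 ∈ bracket s := Or.inl ⟨s, hsI, rfl⟩
  have hB2 : y2 ∈ bracket s := Or.inr (Or.inr ⟨s, hsI, rfl⟩)
  have hD1 : y1 ∈ {y : ℂ | ‖y‖ < 1 ∧ s ≤ y.re} := ⟨bracket_norm hs hs4 hB1, by simp [hy1]⟩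
  have hD2 : y2 ∈ {y : ℂ | ‖y‖ < 1 ∧ s ≤ y.re} := ⟨bracket_norm hs hs4 hB2, by simp [hy2]⟩
  have hl1 : Complex.exp (Complex.log y1 / 2) = Complex.I * Complex.exp (Complex.log (-y1) / 2) := by
    have h1 : Complex.log (-y1) = Complex.log y1 - π * Complex.I := by
      rw [Complex.log, Complex.log, norm_neg,
        Complex.arg_neg_eq_arg_sub_pi_of_im_pos (by simp [hy1])]
      push_cast; ring
    rw [h1, sub_div, Complex.exp_sub]
    have : Complex.exp (π * Complex.I / 2) = Complex.I := by
      rw [mul_div_right_comm]; exact Complex.exp_pi_div_two_mul_I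
    rw [this]
    field_simp
  have hl2 : Complex.exp (Complex.log y2 / 2) = -Complex.I * Complex.exp (Complex.log (-y2) / 2) := by
    have h1 : Complex.log (-y2) = Complex.log y2 + π * Complex.I := by
      rw [Complex.log, Complex.log, norm_neg,
        Complex.arg_neg_eq_arg_add_pi_of_im_neg (by simp [hy2])]
      push_cast; ring
    rw [h1, add_div, Complex.exp_add]
    have : Complex.exp (π * Complex.I / 2) = Complex.I := by
      rw [mul_div_right_comm]; exact Complex.exp_pi_div_two_mul_I
    rw [this]
    linear_combination (Complex.exp (Complex.log y2 / 2)) * Complex.I_mul_I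
  have hE1 : Complex.exp (Complex.log (-y1) / 2) ≠ 0 := Complex.exp_ne_zero _
  have hE2 : Complex.exp (Complex.log (-y2) / 2) ≠ 0 := Complex.exp_ne_zero _
  have c1 : C * Complex.exp (Complex.log y1 / 2) * (K * Complex.exp (Complex.log (-y1) / 2))⁻¹
      = C / K * Complex.I := by
    rw [hl1]; field_simp
  have c2 : C * Complex.exp (Complex.log y2 / 2) * (K * Complex.exp (Complex.log (-y2) / 2))⁻¹
      = -(C / K * Complex.I) := by
    rw [hl2]; field_simp
  rcases hRc with hRc | hRc <;> rcases hNc with hNc | hNc <;>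
    rw [hRc hD1, hRc hD2, hNc hB1, hNc hB2] <;> simp only [Pi.neg_apply]
  · rw [c1, c2]; ring
  · linear_combination -c1 - c2
  · linear_combination -c1 - c2
  · linear_combination c1 + c2

/-! ### Nodal sectors -/

lemma sin_lower {d u : ℝ} (hd : 0 ≤ d) (h1 : d ≤ u) (h2 : u ≤ π - d) : Real.sin d ≤ Real.sin u := by
  rcases le_total u (π / 2) with h | h
  · exact Real.sin_le_sin_of_le_of_le_pi_div_two (by linarith) h h1
  · rw [← Real.sin_pi_sub u]
    exact Real.sin_le_sin_of_le_of_le_pi_div_two (by linarith) (by linarith) (by linarith)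

lemma polar_pow_im (ρ β : ℝ) (m : ℕ) :
    (((ρ:ℂ) * Complex.exp (β * Complex.I)) ^ m).im = ρ ^ m * Real.sin (m * β) := by
  rw [mul_pow, ← Complex.exp_nat_mul, ← Complex.ofReal_pow, Complex.im_ofReal_mul]
  congr 1
  have : (m:ℂ) * (β * Complex.I) = ((m * β : ℝ) : ℂ) * Complex.I := by push_cast; ring
  rw [this, Complex.exp_ofReal_mul_I_im]

/-- A square root of `x - a` on the disk centred at `b` with `a` on its boundary. -/
lemma sqrt_on_ball {a b : ℂ} (hab : a ≠ b) : ∃ Q : ℂ → ℂ,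
    ContinuousOn Q (Metric.ball b ‖a - b‖) ∧ ∀ x ∈ Metric.ball b ‖a - b‖, Q x ^ 2 = x - a := by
  obtain ⟨C, hC⟩ : ∃ C : ℂ, C ^ 2 = b - a := IsAlgClosed.exists_pow_nat_eq _ (by norm_num)
  have hba : b - a ≠ 0 := sub_ne_zero.2 hab.symm
  have hab' : a - b ≠ 0 := sub_ne_zero.2 hab
  have hslit : ∀ x ∈ Metric.ball b ‖a - b‖, (x - a) / (b - a) ∈ Complex.slitPlane := by
    intro x hx
    rw [Metric.mem_ball, dist_eq_norm] at hx
    have h1 : (x - a) / (b - a) = 1 - (x - b) / (a - b) := by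
      rw [eq_sub_iff_add_eq, ← neg_sub a b, div_neg, neg_add_eq_sub, ← sub_div,
        div_eq_one_iff_eq hab']
      ring
    have h2 : ‖(x - b) / (a - b)‖ < 1 := by
      rw [norm_div]; exact (div_lt_one (norm_pos_iff.2 hab')).2 hx
    refine Complex.mem_slitPlane_iff.2 (Or.inl ?_)
    rw [h1, Complex.sub_re, Complex.one_re]
    have := (Complex.abs_re_le_norm ((x - b) / (a - b)))
    have := le_abs_self ((x - b) / (a - b)).re
    linarith
  refine ⟨fun x => C * Complex.exp (Complex.log ((x - a) / (b - a)) / 2), ?_, ?_⟩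
  · refine continuousOn_const.mul (Complex.continuous_exp.comp_continuousOn ?_)
    refine (ContinuousOn.clog ?_ hslit).div_const 2
    exact (by fun_prop : Continuous fun x => (x - a) / (b - a)).continuousOn
  · intro x hx
    rw [mul_pow, hC, ← Complex.exp_nat_mul]
    have : ((2:ℕ):ℂ) * (Complex.log ((x - a) / (b - a)) / 2) = Complex.log ((x - a) / (b - a)) := by
      push_cast; ring
    rw [this, Complex.exp_log (Complex.slitPlane_ne_zero (hslit x hx)), mul_div_cancel₀ _ hba]

/-- If the first and last terms of a sign sequence are opposite, two consecutive ones are. -/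
lemma exists_consecutive_flip {m : ℕ} (hm : 2 ≤ m) {τ : ℕ → ℂ}
    (hτ : ∀ j < m, τ j = 1 ∨ τ j = -1) (h : τ (m-1) = -τ 0) :
    ∃ j, j + 1 < m ∧ τ (j+1) = -τ j := by
  by_contra! hne
  have hall : ∀ j, j < m → τ j = τ 0 := by
    intro j
    induction j with
    | zero => intro _; rfl
    | succ n ih =>
      intro hn
      rw [← ih (by omega)]
      have := hne n hn
      rcases hτ n (by omega) with h1 | h1 <;> rcases hτ (n+1) hn with h2 | h2 <;>
        rw [h1, h2] at this ⊢ <;> simp at this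
  have h1 := hall (m-1) (by omega)
  rw [h] at h1
  rcases hτ 0 (by omega) with h2 | h2 <;> rw [h2] at h1 <;> norm_num at h1

/-- The nodal sector `jπ/m < β < (j+1)π/m` in the coordinates `i y = ρ e^{iβ}`, shrunk by `δ`. -/
def sector (m : ℕ) (δ : ℝ) (j : ℕ) : Set ℂ :=
  (fun q : ℝ × ℝ => -Complex.I * ((q.1:ℂ) * Complex.exp (q.2 * Complex.I))) ''
    (Icc (1/4) (3/4) ×ˢ Icc (j * (π / m) + δ) ((j + 1) * (π / m) - δ))

lemma sector_preconnected (m : ℕ) (δ : ℝ) (j : ℕ) : IsPreconnected (sector m δ j) :=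
  (isPreconnected_Icc.prod isPreconnected_Icc).image _ (by fun_prop)

lemma sector_est {m : ℕ} (hm : 1 ≤ m) {δ : ℝ} (hδ : 0 < δ) {j : ℕ} (hj : j < m)
    {y : ℂ} (hy : y ∈ sector m δ j) :
    ‖y‖ < 1 ∧ y ≠ 0 ∧ 1/4 * Real.sin δ ≤ y.re ∧
      (1/4) ^ m * Real.sin (m * δ) ≤ |((Complex.I * y) ^ m).im| := by
  obtain ⟨⟨ρ, β⟩, ⟨hρ, hβ⟩, rfl⟩ := hy
  simp only at hρ hβ ⊢
  have hmr : (0:ℝ) < m := by exact_mod_cast hm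
  have hρ0 : 0 < ρ := by linarith [hρ.1]
  have hjm : ((j:ℝ) + 1) ≤ m := by exact_mod_cast hj
  have hpm : m * (π / m) = π := by field_simp
  have hδβ : δ ≤ β := by
    have : 0 ≤ (j:ℝ) * (π / m) := by positivity
    linarith [hβ.1]
  have hβπ : β ≤ π - δ := by
    have : ((j:ℝ) + 1) * (π / m) ≤ m * (π / m) := by gcongr
    linarith [hβ.2]
  have hI : Complex.I * (-Complex.I * ((ρ:ℂ) * Complex.exp (β * Complex.I))) =
      ρ * Complex.exp (β * Complex.I) := by
    linear_combination (-((ρ:ℂ) * Complex.exp (β * Complex.I))) * Complex.I_mul_I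
  have hnorm : ‖-Complex.I * ((ρ:ℂ) * Complex.exp (β * Complex.I))‖ = ρ := by
    rw [norm_mul, norm_mul, Complex.norm_exp_ofReal_mul_I, Complex.norm_real,
      Real.norm_of_nonneg hρ0.le]
    simp
  refine ⟨by rw [hnorm]; linarith [hρ.2], norm_pos_iff.1 (by rw [hnorm]; exact hρ0), ?_, ?_⟩
  · have hre : (-Complex.I * ((ρ:ℂ) * Complex.exp (β * Complex.I))).re = ρ * Real.sin β := by
      have : (-Complex.I * ((ρ:ℂ) * Complex.exp (β * Complex.I))).re =
        ((ρ:ℂ) * Complex.exp (β * Complex.I)).im := by simp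
      rw [this, Complex.im_ofReal_mul, Complex.exp_ofReal_mul_I_im]
    rw [hre]
    have h1 := sin_lower hδ.le hδβ hβπ
    have h2 : 0 ≤ Real.sin δ := Real.sin_nonneg_of_nonneg_of_le_pi hδ.le (by linarith)
    have := hρ.1
    gcongr
  · rw [hI, polar_pow_im, abs_mul, abs_of_pos (by positivity)]
    have h1 : Real.sin (m * δ) ≤ Real.sin (m * β - j * π) := by
      refine sin_lower (by positivity) ?_ ?_
      · have : m * (j * (π / m) + δ) ≤ m * β := by gcongr; exact hβ.1
        have e : m * (j * (π / m) + δ) = j * (m * (π / m)) + m * δ := by ring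
        rw [e, hpm] at this; linarith
      · have : m * β ≤ m * ((j + 1) * (π / m) - δ) := by gcongr; exact hβ.2
        have e : m * ((j + 1) * (π / m) - δ) = (j + 1) * (m * (π / m)) - m * δ := by ring
        rw [e, hpm] at this; linarith
    rw [Real.sin_sub_nat_mul_pi] at h1
    have h2 : (-1) ^ j * Real.sin (m * β) ≤ |Real.sin (m * β)| := by
      refine (le_abs_self _).trans ?_
      rw [abs_mul, abs_pow, abs_neg, abs_one, one_pow, one_mul]
    have h3 : (1/4:ℝ) ^ m ≤ ρ ^ m := pow_le_pow_left₀ (by norm_num) hρ.1 m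
    calc (1/4:ℝ) ^ m * Real.sin (m * δ) ≤ (1/4:ℝ) ^ m * |Real.sin (m * β)| := by
          gcongr; exact h1.trans h2
      _ ≤ _ := by gcongr

/-- A closed disk around `1/2` on which `|arg w| ≤ π/(2m)`; there `Im (w^m)` has the sign of
`Im w`. -/
lemma small_disk (m : ℕ) (hm : 1 ≤ m) : ∃ R0 > (0:ℝ), R0 ≤ 1/4 ∧
    ∀ w ∈ Metric.closedBall (1/2:ℂ) R0, |Complex.arg w| ≤ π / (2 * m) := by
  have hmr : (0:ℝ) < m := by exact_mod_cast hm
  have hs : (1/2:ℂ) ∈ Complex.slitPlane := by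
    rw [Complex.mem_slitPlane_iff]; left; norm_num
  have hc : ContinuousAt (fun w => |Complex.arg w|) (1/2) :=
    (Complex.continuousAt_arg hs).abs
  have h0 : |Complex.arg (1/2:ℂ)| < π / (2 * m) := by
    have : (1/2:ℂ) = ((1/2:ℝ):ℂ) := by push_cast; ring
    rw [this, Complex.arg_ofReal_of_nonneg (by norm_num), abs_zero]
    positivity
  have hev : ∀ᶠ w in nhds (1/2:ℂ), |Complex.arg w| < π / (2 * m) :=
    hc.eventually (gt_mem_nhds h0)
  obtain ⟨R, hR, hR'⟩ := Metric.eventually_nhds_iff.1 hev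
  refine ⟨min (R/2) (1/4), by positivity, min_le_right _ _, fun w hw => (hR' ?_).le⟩
  have h1 : dist w (1/2) ≤ min (R/2) (1/4) := hw
  exact h1.trans_lt ((min_le_left _ _).trans_lt (by linarith))

lemma disk_norm {R0 : ℝ} (hR : R0 ≤ 1/4) {w : ℂ} (hw : w ∈ Metric.closedBall (1/2:ℂ) R0) :
    1/4 ≤ ‖w‖ ∧ ‖w‖ ≤ 3/4 := by
  have h1 : ‖w - 1/2‖ ≤ R0 := by rw [← dist_eq_norm]; exact hw
  have h2 : ‖(1/2:ℂ)‖ = 1/2 := by norm_num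
  have h3 := norm_sub_norm_le (1/2:ℂ) w
  have h4 := norm_sub_norm_le w (1/2:ℂ)
  rw [norm_sub_rev] at h3
  constructor <;> linarith

lemma polar_im (w : ℂ) (m : ℕ) : (w ^ m).im = ‖w‖ ^ m * Real.sin (m * Complex.arg w) := by
  conv_lhs => rw [← Complex.norm_mul_exp_arg_mul_I w]
  exact polar_pow_im _ _ _

lemma disk_sign {m : ℕ} (hm : 1 ≤ m) {w : ℂ} (hw : |Complex.arg w| ≤ π / (2 * m)) :
    (0 ≤ w.im → 0 ≤ (w ^ m).im) ∧ (w.im ≤ 0 → (w ^ m).im ≤ 0) := by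
  have hmr : (0:ℝ) < m := by exact_mod_cast hm
  obtain ⟨h1, h2⟩ := abs_le.1 hw
  have e : m * (π / (2 * m)) = π / 2 := by field_simp
  have h3 : m * Complex.arg w ≤ π / 2 := by
    rw [← e]; gcongr
  have h4 : -(π / 2) ≤ m * Complex.arg w := by
    rw [← e, ← mul_neg]; gcongr
  rw [polar_im]
  have hπ := Real.pi_pos
  constructor
  · intro h
    have : 0 ≤ Complex.arg w := Complex.arg_nonneg_iff.2 h
    have := Real.sin_nonneg_of_nonneg_of_le_pi (by positivity : 0 ≤ m * Complex.arg w) (by linarith)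
    positivity
  · intro h
    have h5 : Complex.arg w ≤ 0 := by
      rcases h.lt_or_eq with h' | h'
      · exact (Complex.arg_neg_iff.2 h').le
      · by_contra hpos
        push Not at hpos
        have hs : 0 < Real.sin (Complex.arg w) := Real.sin_pos_of_pos_of_lt_pi hpos (by
          have : π / (2 * m) < π := by
            rw [div_lt_iff₀ (by positivity)]
            have : (1:ℝ) ≤ m := by exact_mod_cast hm
            nlinarith
          linarith)
        rw [Complex.sin_arg, h', zero_div] at hs
        exact lt_irrefl _ hs
    have h6 : m * Complex.arg w ≤ 0 := mul_nonpos_of_nonneg_of_nonpos hmr.le h5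
    have := Real.sin_nonpos_of_nonpos_of_neg_pi_le h6 (by linarith)
    exact mul_nonpos_of_nonneg_of_nonpos (by positivity) this

/-- Two continuous square roots of the same nonvanishing function on the rescaled sectors and on
the bracket: the quotient `T` takes opposite values on two consecutive sectors. -/
lemma sector_signs {m : ℕ} (hm : 2 ≤ m) {O : Set ℂ} {Ω : Set ℂ} {b a z : ℂ} (hz : z ≠ 0)
    {β1 δ s1 : ℝ} (hδ : 0 < δ) (hδβ : δ ≤ β1) (hβm : β1 ≤ π / (2 * m)) (hs1 : s1 = Real.tan β1 / 2)
    (hs1p : 0 < s1) (hs14 : s1 ≤ 1/4)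
    (hO : ∀ y ∈ bracket s1, b + z * y ∈ O)
    (hsec : ∀ j < m, ∀ y ∈ sector m δ j, b + z * y ∈ O ∩ Ω)
    (hhalf : ∀ y : ℂ, ‖y‖ < 1 → s1 ≤ y.re → b + z * y ∈ Ω)
    (ha : ∀ y : ℂ, ‖y‖ < 1 → b + z * y ≠ a)
    {M Rt Q : ℂ → ℂ} (hM : ContinuousOn M O) (hM2 : ∀ x ∈ O, M x ^ 2 * (x - b) = x - a)
    (hRt : ContinuousOn Rt Ω) (hRt2 : ∀ x ∈ Ω, Rt x ^ 2 = x - b)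
    (hQ : ContinuousOn (fun y => Q (b + z * y)) {y | ‖y‖ < 1})
    (hQ2 : ∀ y : ℂ, ‖y‖ < 1 → Q (b + z * y) ^ 2 = b + z * y - a) :
    ∃ j, j + 1 < m ∧ ∃ σ : ℂ, (σ = 1 ∨ σ = -1) ∧
      (∀ y ∈ sector m δ j, Rt (b + z * y) * M (b + z * y) / Q (b + z * y) = -σ) ∧
      (∀ y ∈ sector m δ (j+1), Rt (b + z * y) * M (b + z * y) / Q (b + z * y) = σ) := by
  have hmr : (0:ℝ) < m := by positivity
  set T : ℂ → ℂ := fun y => Rt (b + z * y) * M (b + z * y) / Q (b + z * y) with hT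
  have hxc : Continuous fun y : ℂ => b + z * y := by fun_prop
  have hQ0 : ∀ y : ℂ, ‖y‖ < 1 → Q (b + z * y) ≠ 0 := by
    intro y hy h
    have h2 := hQ2 y hy
    rw [h, zero_pow (by norm_num)] at h2
    exact ha y hy (sub_eq_zero.1 h2.symm)
  have hT2 : ∀ y : ℂ, ‖y‖ < 1 → b + z * y ∈ O ∩ Ω → T y ^ 2 = 1 := by
    intro y hy hyO
    simp only [hT]
    rw [div_pow, mul_pow, hRt2 _ hyO.2, mul_comm, hM2 _ hyO.1, hQ2 y hy, div_self]
    exact sub_ne_zero.2 (ha y hy)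
  have hsecT : ∀ j, ∃ τ : ℂ, j < m → (τ = 1 ∨ τ = -1) ∧ ∀ y ∈ sector m δ j, T y = τ := by
    intro j
    by_cases hj : j < m
    · have hsub : ∀ y ∈ sector m δ j, ‖y‖ < 1 := fun y hy =>
        (sector_est (by omega) hδ hj hy).1
      have hTc : ContinuousOn T (sector m δ j) := by
        refine ContinuousOn.div (ContinuousOn.mul ?_ ?_) ?_ fun y hy => hQ0 y (hsub y hy)
        · exact hRt.comp hxc.continuousOn fun y hy => (hsec j hj y hy).2
        · exact hM.comp hxc.continuousOn fun y hy => (hsec j hj y hy).1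
        · exact hQ.mono fun y hy => hsub y hy
      have := (sector_preconnected m δ j).eq_or_eq_neg_of_sq_eq (f := T) (g := fun _ => 1) hTc
        continuousOn_const (fun y hy => by
          simp only [Pi.pow_apply, one_pow]
          exact hT2 y (hsub y hy) (hsec j hj y hy)) (fun _ => one_ne_zero)
      rcases this with h | h
      · exact ⟨1, fun _ => ⟨Or.inl rfl, fun y hy => h hy⟩⟩
      · exact ⟨-1, fun _ => ⟨Or.inr rfl, fun y hy => h hy⟩⟩
    · exact ⟨1, fun h => absurd h hj⟩
  choose τ hτ using hsecT
  have hflip := flip_monodromy hz hs1p hs14 (N := fun y => M (b + z * y) / Q (b + z * y))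
    (R := fun y => Rt (b + z * y))
    (by
      refine ContinuousOn.div (hM.comp hxc.continuousOn hO)
        (hQ.mono fun y hy => bracket_norm hs1p hs14 hy)
        fun y hy => hQ0 y (bracket_norm hs1p hs14 hy))
    (by
      intro y hy
      have h1 := hM2 _ (hO y hy)
      rw [add_sub_cancel_left] at h1
      have hn := bracket_norm hs1p hs14 hy
      rw [div_pow, hQ2 y hn, div_mul_eq_mul_div, h1, div_self]
      exact sub_ne_zero.2 (ha y hn))
    (hRt.comp hxc.continuousOn fun y hy => hhalf y hy.1 hy.2)
    (by
      intro y hy hyr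
      rw [hRt2 _ (hhalf y hy hyr), add_sub_cancel_left])
  have hβ0 : 0 < β1 := hδ.trans_le hδβ
  have hβ2 : β1 < π / 2 := by
    refine hβm.trans_lt ?_
    have : (2:ℝ) ≤ m := by exact_mod_cast hm
    have hπ := Real.pi_pos
    rw [div_lt_div_iff₀ (by positivity) (by norm_num)]
    nlinarith
  have hcos : 0 < Real.cos β1 := Real.cos_pos_of_mem_Ioo ⟨by linarith, hβ2⟩
  set ρ := 1 / (2 * Real.cos β1) with hρ
  have hρc : ρ * Real.cos β1 = 1/2 := by rw [hρ]; field_simp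
  have hρs : ρ * Real.sin β1 = s1 := by rw [hρ, hs1, Real.tan_eq_sin_div_cos]; field_simp
  have hρp : 0 < ρ := by positivity
  have hρ2 : ρ ^ 2 = 1/4 + s1 ^ 2 := by
    have := Real.sin_sq_add_cos_sq β1
    calc ρ ^ 2 = ρ ^ 2 * (Real.sin β1 ^ 2 + Real.cos β1 ^ 2) := by rw [this, mul_one]
      _ = (ρ * Real.cos β1) ^ 2 + (ρ * Real.sin β1) ^ 2 := by ring
      _ = _ := by rw [hρc, hρs]; norm_num
  have hρI : ρ ∈ Icc (1/4:ℝ) (3/4) := by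
    constructor <;> nlinarith
  have hβm2 : 2 * β1 ≤ π / m := by
    have : π / m = 2 * (π / (2 * m)) := by field_simp
    rw [this]; linarith
  have hy2 : -(Complex.I / 2) + (s1:ℂ) ∈ sector m δ 0 := by
    refine ⟨(ρ, β1), ⟨hρI, ⟨by simp [hδβ], ?_⟩⟩, ?_⟩
    · simp only [Nat.cast_zero, zero_add, one_mul]; linarith
    · apply Complex.ext
      · simp [Complex.exp_ofReal_mul_I_im]; exact hρs
      · simp [Complex.exp_ofReal_mul_I_re]; linarith
  have hy1 : Complex.I / 2 + (s1:ℂ) ∈ sector m δ (m-1) := by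
    have hc1 : ((m-1:ℕ):ℝ) = m - 1 := by rw [Nat.cast_sub (by omega)]; simp
    have hpm : m * (π / m) = π := by field_simp
    refine ⟨(ρ, π - β1), ⟨hρI, ⟨?_, ?_⟩⟩, ?_⟩
    · simp only [hc1]
      have : ((m:ℝ) - 1) * (π / m) = π - π / m := by rw [sub_mul, hpm, one_mul]
      rw [this]; linarith
    · simp only [hc1, sub_add_cancel, hpm]; linarith
    · apply Complex.ext
      · have : (-Complex.I * ((ρ:ℂ) * Complex.exp (((π - β1 : ℝ):ℂ) * Complex.I))).re =
          ρ * Real.sin (π - β1) := by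
          rw [← Complex.exp_ofReal_mul_I_im]; simp
        simp only [this, Real.sin_pi_sub]; simp [hρs]
      · have : (-Complex.I * ((ρ:ℂ) * Complex.exp (((π - β1 : ℝ):ℂ) * Complex.I))).im =
          -(ρ * Real.cos (π - β1)) := by
          rw [← Complex.exp_ofReal_mul_I_re]; simp
        simp only [this, Real.cos_pi_sub]; simp; linarith
  have hT1 := (hτ (m-1) (by omega)).2 _ hy1
  have hT0 := (hτ 0 (by omega)).2 _ hy2
  have hflip' : τ (m-1) = -τ 0 := by
    rw [← hT1, ← hT0]
    simp only [hT]
    simp only [← mul_div_assoc] at hflip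
    exact hflip
  obtain ⟨j, hj, hjf⟩ := exists_consecutive_flip hm (fun j hj => (hτ j hj).1) hflip'
  refine ⟨j, hj, τ (j+1), (hτ (j+1) hj).1, ?_, (hτ (j+1) hj).2⟩
  rw [hjf, neg_neg]
  exact (hτ j (by omega)).2

/-! ### Sign structure near the boundary point -/

lemma exists_beta {m : ℕ} (hm : 2 ≤ m) {s0 : ℝ} (hs0 : 0 < s0) :
    ∃ β > (0:ℝ), β ≤ π / (2 * m) ∧ 0 < Real.tan β / 2 ∧ Real.tan β / 2 ≤ s0 := by
  have hmr : (2:ℝ) ≤ m := by exact_mod_cast hm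
  have hπ := Real.pi_pos
  have hc : ContinuousAt (fun β : ℝ => Real.tan β / 2) 0 :=
    (Real.continuousAt_tan.2 (by simp)).div_const 2
  have h1 : ∀ᶠ β : ℝ in nhdsWithin 0 (Ioi 0), Real.tan β / 2 < s0 := by
    refine nhdsWithin_le_nhds ?_
    exact hc.eventually_lt_const (by simpa using hs0)
  have h2 : ∀ᶠ β : ℝ in nhdsWithin 0 (Ioi 0), β < π / (2 * m) :=
    nhdsWithin_le_nhds (eventually_lt_nhds (by positivity))
  obtain ⟨β, ⟨h3, h4⟩, h5⟩ := ((h1.and h2).and self_mem_nhdsWithin).exists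
  refine ⟨β, h5, h4.le, ?_, h3.le⟩
  have : β < π / 2 := h4.trans_le (by
    apply div_le_div_of_nonneg_left hπ.le (by norm_num); linarith)
  have := Real.tan_pos_of_pos_of_lt_pi_div_two h5 this
  linarith

/-- The sign structure of the gauged eigenfunction near the boundary point. Here `S` is a branch of
`√(x - a)`, `a = γ(t₀)`, on `Ω` cut along the arc, and `Q` is a branch on the disk with centre `b`
and radius `r = |a - b|`. The rotation `ω` points along a nodal ray of the leading part of `φ`, and
on the disk around `b + rω/2` with radius `r R0` the signs of `S/Q` and of `φ` flip together across
that ray, so that `(S/Q) φ` is close to `r^m c' |Im w^m|`. -/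
lemma sign_structure {Ω : Set ℂ} (hΩ : IsOpen Ω) (hsc : SimplyConnectedSpace Ω)
    (hΩb : HasSmoothBoundary Ω) {p : ℂ → ℝ} (hp : ContinuousOn p (closure Ω)) {lam : ℝ} {φ : ℂ → ℝ}
    (hφ : IsDirichletEigenfunction Ω p lam φ) {b : ℂ} (hb : b ∈ frontier Ω) {m : ℕ} (hm : 2 ≤ m)
    (hz : HasBoundaryZero Ω φ b m) :
    ∃ R0 > (0:ℝ), R0 ≤ 1/4 ∧ (∀ w ∈ Metric.closedBall (1/2:ℂ) R0, |Complex.arg w| ≤ π / (2 * m)) ∧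
    ∃ c : ℝ, 0 < c ∧ ∀ η > (0:ℝ), ∃ r1 > (0:ℝ), ∀ (γ : ℝ → ℂ) (t0 : ℝ), 0 ≤ t0 →
      ContinuousOn γ (Icc 0 t0) → γ 0 = b → (∀ t ∈ Ioc 0 t0, γ t ∈ Ω ∧ φ (γ t) = 0) →
      0 < ‖γ t0 - b‖ → ‖γ t0 - b‖ < r1 →
      ∃ (S Q : ℂ → ℂ) (ω : ℂ) (c' : ℝ), ‖ω‖ = 1 ∧ |c'| = c ∧
        ContinuousOn S (Ω \ γ '' Icc 0 t0) ∧ (∀ x ∈ Ω \ γ '' Icc 0 t0, S x ^ 2 = x - γ t0) ∧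
        ContinuousOn Q (Metric.ball b ‖γ t0 - b‖) ∧
        (∀ x ∈ Metric.ball b ‖γ t0 - b‖, Q x ^ 2 = x - γ t0) ∧
        ∀ w ∈ Metric.closedBall (1/2:ℂ) R0,
          b + ‖γ t0 - b‖ * ω * w ∈ Ω ∩ Metric.ball b ‖γ t0 - b‖ ∧
          ‖S (b + ‖γ t0 - b‖ * ω * w) / Q (b + ‖γ t0 - b‖ * ω * w) *
              (φ (b + ‖γ t0 - b‖ * ω * w) : ℂ) -
            ((‖γ t0 - b‖ ^ m * (c' * |(w ^ m).im|) : ℝ) : ℂ)‖ ≤ η * ‖γ t0 - b‖ ^ m := by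
  have hmr : (2:ℝ) ≤ m := by exact_mod_cast hm
  have hπ := Real.pi_pos
  obtain ⟨e, c, s0, he, hc, hs0, hs04, hblow⟩ := blowup hΩ hΩb hp hφ hb hm hz
  obtain ⟨R0, hR0, hR04, hdisk⟩ := small_disk m (by omega)
  refine ⟨R0, hR0, hR04, hdisk, |c|, abs_pos.2 hc, fun η hη => ?_⟩
  have hc' := abs_pos.2 hc
  obtain ⟨β1, hβ1, hβm, hs1p, hs1s⟩ := exists_beta hm hs0
  set s1 := Real.tan β1 / 2 with hs1
  obtain ⟨δ, hδ, hδβ, hδη⟩ : ∃ δ > (0:ℝ), δ ≤ β1 ∧ δ ≤ η / (4 * |c| * m) :=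
    ⟨min β1 (η / (4 * |c| * m)), lt_min hβ1 (by positivity), min_le_left _ _, min_le_right _ _⟩
  have hδm : δ ≤ π / (2 * m) := hδβ.trans hβm
  have h2m : 2 * (π / (2 * m)) = π / m := by field_simp
  have hπm : m * (π / m) = π := by field_simp
  have hπ2m : 0 < π / (2 * m) := by positivity
  have hπ2mlt : π / (2 * m) < π := by
    rw [div_lt_iff₀ (by positivity)]; nlinarith
  have hsδ : 0 < Real.sin δ := Real.sin_pos_of_pos_of_lt_pi hδ (by linarith)
  have hsm : 0 < Real.sin (π / (2 * m)) := Real.sin_pos_of_pos_of_lt_pi hπ2m hπ2mlt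
  have hsmδ : 0 < Real.sin (m * δ) := by
    refine Real.sin_pos_of_pos_of_lt_pi (by positivity) ?_
    nlinarith
  obtain ⟨ε, hε, hε1, hε2, hε3, hε4, hε5⟩ : ∃ ε > (0:ℝ), ε ≤ s1 ∧ ε ≤ 1/4 * Real.sin δ ∧
      ε ≤ 1/4 * Real.sin (π / (2 * m)) ∧ ε < |c| * ((1/4) ^ m * Real.sin (m * δ)) ∧
      ε ≤ η / 2 := by
    have hA : 0 < |c| * ((1/4) ^ m * Real.sin (m * δ)) := by positivity
    refine ⟨min s1 (min (1/4 * Real.sin δ) (min (1/4 * Real.sin (π / (2 * m)))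
      (min (|c| * ((1/4) ^ m * Real.sin (m * δ)) / 2) (η / 2)))), ?_, ?_, ?_, ?_, ?_, ?_⟩
    · refine lt_min hs1p (lt_min ?_ (lt_min ?_ (lt_min ?_ ?_))) <;> positivity
    · exact min_le_left _ _
    · exact (min_le_right _ _).trans (min_le_left _ _)
    · exact (min_le_right _ _).trans ((min_le_right _ _).trans (min_le_left _ _))
    · refine ((min_le_right _ _).trans ((min_le_right _ _).trans
        ((min_le_right _ _).trans (min_le_left _ _)))).trans_lt (by linarith)
    · exact (min_le_right _ _).trans ((min_le_right _ _).trans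
        ((min_le_right _ _).trans (min_le_right _ _)))
  obtain ⟨r0, hr0, hbl⟩ := hblow ε hε
  refine ⟨r0, hr0, fun γ t0 ht0 hγ hγ0 hγΩ hr hrr => ?_⟩
  set a := γ t0 with ha
  set r := ‖a - b‖ with hrdef
  set Γ := γ '' Icc 0 t0 with hΓ
  obtain ⟨hin, hout, happ, hnz⟩ := hbl r hr hrr
  have hbΩ : b ∉ Ω := by
    rw [hΩ.frontier_eq] at hb; exact hb.2
  have hΓ1 : ∀ x ∈ Γ, x = b ∨ (x ∈ Ω ∧ φ x = 0) := by
    rintro x ⟨t, ht, rfl⟩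
    rcases ht.1.eq_or_lt with h | h
    · left; rw [← h, hγ0]
    · right; exact hγΩ t ⟨h, ht.2⟩
  have he0 : e ≠ 0 := by rw [← norm_pos_iff, he]; norm_num
  set z : ℂ := r * e with hzdef
  have hz0 : z ≠ 0 := mul_ne_zero (by exact_mod_cast hr.ne') he0
  have hzn : ‖z‖ = r := by rw [hzdef, norm_mul, he, mul_one, Complex.norm_real, Real.norm_eq_abs, abs_of_pos hr]
  have hzy : ∀ y, b + z * y = b + r * (e * y) := fun y => by rw [hzdef]; ring
  obtain ⟨M, hMc, hM2⟩ := branch_arc γ ht0 hγ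
  have hab : a ≠ b := by rw [← sub_ne_zero, ← norm_pos_iff]; exact hr
  obtain ⟨Q, hQc, hQ2⟩ := sqrt_on_ball hab
  obtain ⟨Rt, hRtc, hRt2⟩ := Complex.exists_continuousOn_pow_eq (U := Ω) (g := fun x => x - b)
    (n := 2) hsc hΩ (by fun_prop)
    (by rintro ⟨x, hx, hx0⟩; exact hbΩ (sub_eq_zero.1 hx0 ▸ hx)) (by norm_num)
  have hball : ∀ y : ℂ, ‖y‖ < 1 → b + z * y ∈ Metric.ball b r := by
    intro y hy
    rw [Metric.mem_ball, dist_eq_norm, add_sub_cancel_left, norm_mul, hzn]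
    nlinarith
  obtain ⟨j, hj, σ, hσ, hTj, hTj1⟩ := sector_signs hm (O := Γᶜ) (Ω := Ω) (b := b) (a := a) hz0 hδ hδβ hβm
    hs1 hs1p (hs1s.trans hs04) (M := M) (Rt := Rt) (Q := Q)
    (by
      intro y hy hyΓ
      have hn := bracket_norm hs1p (hs1s.trans hs04) hy
      rcases hΓ1 _ hyΓ with h | ⟨h1, h2⟩
      · have hy0 : y = 0 := by
          have : z * y = 0 := by simpa using h
          exact (mul_eq_zero.1 this).resolve_left hz0
        have := bracket_neg_slit hs1p hy
        rw [hy0] at this; simp at this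
      · rw [hzy] at h1 h2
        rcases hy with ⟨x, hx, rfl⟩ | ⟨x, hx, rfl⟩ | ⟨x, hx, rfl⟩
        · exact hnz (Complex.I / 2) (Or.inl rfl) x ((abs_le.2 hx).trans hs1s) h1 h2
        · refine hout _ hn.le ?_ h1
          simp; linarith
        · exact hnz (-(Complex.I / 2)) (Or.inr rfl) x ((abs_le.2 hx).trans hs1s) h1 h2)
    (by
      intro j hj y hy
      obtain ⟨hn, hy0, hre, him⟩ := sector_est (by omega) hδ hj hy
      have hyΩ : b + z * y ∈ Ω := by rw [hzy]; exact hin y hn.le (hε2.trans hre)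
      refine ⟨fun hyΓ => ?_, hyΩ⟩
      rcases hΓ1 _ hyΓ with h | ⟨h1, h2⟩
      · exact hbΩ (h ▸ hyΩ)
      · have h3 := happ y hn.le (by rw [← hzy]; exact subset_closure h1)
        rw [← hzy, h2, zero_sub, abs_neg, abs_mul, abs_mul, abs_of_pos (pow_pos hr m), mul_comm ε] at h3
        have h4 := le_of_mul_le_mul_left h3 (pow_pos hr m)
        have h5 := mul_le_mul_of_nonneg_left him hc'.le
        linarith)
    (by
      intro y hy hys
      rw [hzy]; exact hin y hy.le (hε1.trans hys))
    (by
      intro y hy h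
      have : ‖z * y‖ = r := by
        have h1 : z * y = a - b := by rw [← h]; ring
        rw [h1]
      rw [norm_mul, hzn] at this
      nlinarith)
    hMc (by intro x hx; rw [← hγ0]; exact hM2 x hx) hRtc (fun x _ => hRt2 x)
    (hQc.comp (by fun_prop) fun y hy => hball y hy)
    (fun y hy => hQ2 _ (hball y hy))
  obtain ⟨σr, hσr, rfl⟩ : ∃ s : ℝ, (s = 1 ∨ s = -1) ∧ σ = (s:ℂ) := by
    rcases hσ with rfl | rfl
    · exact ⟨1, Or.inl rfl, by simp⟩
    · exact ⟨-1, Or.inr rfl, by simp⟩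
  have hσabs : |σr| = 1 := by rcases hσr with rfl | rfl <;> simp
  set B : ℝ := (j + 1) * (π / m) with hB
  set E : ℂ := Complex.exp (B * Complex.I) with hE
  have hEn : ‖E‖ = 1 := Complex.norm_exp_ofReal_mul_I B
  have hEm : E ^ m = (((-1:ℝ) ^ (j+1) : ℝ) : ℂ) := by
    rw [hE, ← Complex.exp_nat_mul]
    have : (m:ℂ) * (B * Complex.I) = ((j+1:ℕ):ℂ) * (π * Complex.I) := by
      have h1 : (m:ℝ) * B = (j+1) * π := by rw [hB]; linear_combination (j+1:ℝ) * hπm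
      have h2 : (m:ℂ) * B = (j+1) * π := by exact_mod_cast h1
      push_cast
      linear_combination Complex.I * h2
    rw [this, Complex.exp_nat_mul, Complex.exp_pi_mul_I]
    push_cast; ring
  refine ⟨fun x => Rt x * M x, Q, -Complex.I * (e * E), c * σr * (-1) ^ (j+1), ?_, ?_, ?_, ?_, hQc, hQ2, ?_⟩
  · simp [he, hEn]
  · simp [abs_mul, hσabs]
  · exact (hRtc.mono sdiff_subset).mul (hMc.mono fun x hx => hx.2)
  · rintro x ⟨hx, hxΓ⟩
    have := hM2 x hxΓ
    rw [hγ0] at this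
    rw [mul_pow, hRt2, mul_comm]; exact this
  intro w hw
  obtain ⟨hw1, hw2⟩ := disk_norm hR04 hw
  have harg := hdisk w hw
  set α := Complex.arg w with hα
  obtain ⟨hα1, hα2⟩ := abs_le.1 harg
  set y : ℂ := -Complex.I * (E * w) with hy
  have hxy : b + r * (-Complex.I * (e * E)) * w = b + z * y := by rw [hy, hzdef]; ring
  rw [hxy]
  have hyn : ‖y‖ < 1 := by
    rw [hy]; simp only [norm_mul, norm_neg, Complex.norm_I, hEn, one_mul]; linarith
  have hypol : ∀ β : ℝ, β = B + α → y = -Complex.I * ((‖w‖:ℂ) * Complex.exp (β * Complex.I)) := by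
    intro β hβ
    conv_lhs => rw [hy, ← Complex.norm_mul_exp_arg_mul_I w, ← hα]
    rw [hE, hβ, Complex.ofReal_add, add_mul, Complex.exp_add]; ring
  have hjr : (j:ℝ) + 1 + 1 ≤ m := by exact_mod_cast hj
  have hBle : B + π / m ≤ π := by
    have : (j + 1 + 1 : ℝ) * (π / m) ≤ m * (π / m) := by gcongr
    rw [hB]; linarith
  have hBge : π / m ≤ B := by
    have : 0 ≤ (j:ℝ) * (π / m) := by positivity
    rw [hB]; linarith
  have hyre : 1/4 * Real.sin (π / (2 * m)) ≤ y.re := by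
    have h1 : y.re = ‖w‖ * Real.sin (B + α) := by
      rw [hypol _ rfl, ← Complex.exp_ofReal_mul_I_im]; simp
    rw [h1]
    have h2 := sin_lower hπ2m.le (u := B + α) (by linarith) (by linarith)
    gcongr
  have hyΩ : b + z * y ∈ Ω := by rw [hzy]; exact hin y hyn.le (hε3.trans hyre)
  refine ⟨⟨hyΩ, hball y hyn⟩, ?_⟩
  have hyB := hball y hyn
  have hIm : ((Complex.I * y) ^ m).im = (-1) ^ (j+1) * (w ^ m).im := by
    have : Complex.I * y = E * w := by
      rw [hy]; linear_combination (-(E * w)) * Complex.I_mul_I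
    rw [this, mul_pow, hEm, Complex.im_ofReal_mul]
  have happy := happ y hyn.le (by rw [← hzy]; exact subset_closure hyΩ)
  rw [← hzy, hIm] at happy
  set x := b + z * y with hx
  have hrm := pow_pos hr m
  have hsgn := disk_sign (by omega) harg
  have hx_ne : x ≠ a := by
    intro h
    rw [h, Metric.mem_ball, dist_eq_norm] at hyB
    exact lt_irrefl _ hyB
  have hεη : ε * r ^ m ≤ η * r ^ m := by
    apply mul_le_mul_of_nonneg_right _ hrm.le; linarith
  -- away from the ray `arg w = 0`
  have key : ∀ τ : ℝ, (τ = 1 ∨ τ = -1) → Rt x * M x / Q x = ((τ * σr : ℝ) : ℂ) → τ * (w^m).im = |(w^m).im| →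
      ‖Rt x * M x / Q x * (φ x : ℂ) -
        ((r ^ m * (c * σr * (-1) ^ (j+1) * |(w ^ m).im|) : ℝ) : ℂ)‖ ≤ η * r ^ m := by
    intro τ hτ hT hτw
    rw [hT, ← Complex.ofReal_mul, ← Complex.ofReal_sub, Complex.norm_real, Real.norm_eq_abs, ← hτw]
    have : τ * σr * φ x - r ^ m * (c * σr * (-1) ^ (j+1) * (τ * (w ^ m).im)) =
      (τ * σr) * (φ x - r ^ m * (c * ((-1) ^ (j+1) * (w^m).im))) := by ring
    rw [this, abs_mul, abs_mul, hσabs]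
    have : |τ| = 1 := by rcases hτ with rfl | rfl <;> simp
    rw [this, one_mul, one_mul]
    exact happy.trans hεη
  rcases le_or_gt δ |α| with hcase | hcase
  · rcases le_abs.1 hcase with h | h
    · have hsec : y ∈ sector m δ (j+1) := by
        refine ⟨(‖w‖, B + α), ⟨⟨hw1, hw2⟩, ⟨?_, ?_⟩⟩, (hypol _ rfl).symm⟩
        · show ((j+1:ℕ):ℝ) * (π / m) + δ ≤ B + α
          push_cast; linarith
        · show B + α ≤ (((j+1:ℕ):ℝ) + 1) * (π / m) - δ
          push_cast
          linarith
      have hwim : 0 ≤ w.im := Complex.arg_nonneg_iff.1 (hδ.le.trans h)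
      refine key 1 (Or.inl rfl) ?_ ?_
      · rw [one_mul]; exact hTj1 y hsec
      · rw [one_mul, abs_of_nonneg (hsgn.1 hwim)]
    · have hsec : y ∈ sector m δ j := by
        refine ⟨(‖w‖, B + α), ⟨⟨hw1, hw2⟩, ⟨?_, ?_⟩⟩, (hypol _ rfl).symm⟩
        · show (j:ℝ) * (π / m) + δ ≤ B + α
          linarith
        · show B + α ≤ ((j:ℝ) + 1) * (π / m) - δ
          linarith
      have hwim : w.im ≤ 0 := by
        have : α < 0 := by linarith
        exact (Complex.arg_neg_iff.1 this).le
      refine key (-1) (Or.inr rfl) ?_ ?_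
      · have := hTj y hsec
        push_cast; rw [neg_one_mul]; exact this
      · rw [neg_one_mul, abs_of_nonpos (hsgn.2 hwim)]
  · have hTle : ‖Rt x * M x / Q x * (φ x : ℂ)‖ ≤ |φ x| := by
      by_cases hxΓ : x ∈ Γ
      · rcases hΓ1 x hxΓ with h | h
        · exact absurd (h ▸ hyΩ) hbΩ
        · rw [h.2]; simp
      · rw [norm_mul, Complex.norm_real, Real.norm_eq_abs]
        have h1 : ‖Rt x * M x / Q x‖ ^ 2 = 1 := by
          rw [← norm_pow, div_pow, mul_pow, hRt2, hQ2 x hyB, mul_comm]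
          have := hM2 x hxΓ
          rw [hγ0] at this
          rw [this, div_self (sub_ne_zero.2 hx_ne), norm_one]
        have h2 : ‖Rt x * M x / Q x‖ = 1 := by
          exact (pow_eq_one_iff_of_nonneg (norm_nonneg _) two_ne_zero).1 h1
        rw [h2, one_mul]
    have hImle : |(w^m).im| ≤ m * δ := by
      rw [polar_im, abs_mul, abs_of_nonneg (by positivity)]
      have h1 : ‖w‖ ^ m ≤ 1 := pow_le_one₀ (norm_nonneg _) (by linarith)
      have h2 : |Real.sin (m * α)| ≤ m * δ := by
        refine Real.abs_sin_le_abs.trans ?_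
        rw [abs_mul, abs_of_nonneg (by positivity)]
        gcongr
      calc _ ≤ 1 * |Real.sin (m * α)| := by gcongr
        _ ≤ _ := by rw [one_mul]; exact h2
    have hcIm : |c| * |(w^m).im| ≤ η / 4 := by
      calc |c| * |(w^m).im| ≤ |c| * (m * (η / (4 * |c| * m))) := by
            gcongr
            exact hImle.trans (by gcongr)
        _ = η / 4 := by field_simp
    have hφle : |φ x| ≤ (η / 4 + η / 2) * r ^ m := by
      have h1 := abs_sub_abs_le_abs_sub (φ x) (r ^ m * (c * ((-1) ^ (j+1) * (w^m).im)))
      have h2 : |r ^ m * (c * ((-1) ^ (j+1) * (w^m).im))| = r ^ m * (|c| * |(w^m).im|) := by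
        rw [abs_mul, abs_mul, abs_mul, abs_of_pos hrm]; simp
      rw [h2] at h1
      have h3 := mul_le_mul_of_nonneg_left hcIm hrm.le
      have h4 := mul_le_mul_of_nonneg_right hε5 hrm.le
      linarith
    refine (norm_sub_le _ _).trans ?_
    rw [Complex.norm_real, Real.norm_eq_abs]
    have h2 : |r ^ m * (c * σr * (-1) ^ (j+1) * |(w^m).im|)| = r ^ m * (|c| * |(w^m).im|) := by
      rw [abs_mul, abs_mul, abs_mul, abs_mul, abs_of_pos hrm, hσabs]; simp
    rw [h2]
    have h3 := mul_le_mul_of_nonneg_left hcIm hrm.le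
    have h4 := hTle.trans hφle
    linarith

/-! ### Integration by parts and the gauge transformation -/

section

variable {F : Type*} [NormedAddCommGroup F] [NormedSpace ℝ F]

lemma contDiff_smul_of_tsupport {A : Type*} [NormedField A] [NormedAlgebra ℝ A] [NormedSpace A F]
    [IsScalarTower ℝ A F] {O : Set ℂ} (hO : IsOpen O) {g : ℂ → A} {u : ℂ → F} {n : WithTop ℕ∞}
    (hg : ContDiffOn ℝ n g O) (hu : ContDiff ℝ n u) (hs : tsupport u ⊆ O) :
    ContDiff ℝ n (fun x => g x • u x) := by
  rw [contDiff_iff_contDiffAt]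
  intro x
  by_cases hx : x ∈ tsupport u
  · exact (hg.contDiffAt (hO.mem_nhds (hs hx))).smul hu.contDiffAt
  · have : (fun x => g x • u x) =ᶠ[nhds x] fun _ => (0:F) := by
      filter_upwards [notMem_tsupport_iff_eventuallyEq.1 hx] with y hy
      simp [hy]
    exact contDiffAt_const.congr_of_eventuallyEq this

lemma tsupport_smul_sub {A : Type*} [NormedField A] [NormedSpace A F] (g : ℂ → A) (u : ℂ → F) :
    tsupport (fun x => g x • u x) ⊆ tsupport u :=
  closure_mono (fun x hx hu => hx (by simp [hu]))

lemma hcs_smul {A : Type*} [NormedField A] [NormedSpace A F] (g : ℂ → A) {u : ℂ → F}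
    (hu : HasCompactSupport u) : HasCompactSupport (fun x => g x • u x) :=
  hu.mono' ((subset_tsupport _).trans (tsupport_smul_sub g u))

lemma continuous_smul_of_tsupport {O : Set ℂ} (hO : IsOpen O) {g : ℂ → ℝ} {u : ℂ → F}
    (hg : ContinuousOn g O) (hu : Continuous u) (hs : tsupport u ⊆ O) :
    Continuous (fun x => g x • u x) := by
  have := contDiff_zero.1 (contDiff_smul_of_tsupport hO (contDiffOn_zero.2 hg)
    (contDiff_zero.2 hu) hs)
  exact this

lemma integrable_smul_of_tsupport {O : Set ℂ} (hO : IsOpen O) {g : ℂ → ℝ} {u : ℂ → F}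
    (hg : ContinuousOn g O) (hu : Continuous u) (huc : HasCompactSupport u) (hs : tsupport u ⊆ O) :
    Integrable (fun x => g x • u x) :=
  (continuous_smul_of_tsupport hO hg hu hs).integrable_of_hasCompactSupport (hcs_smul g huc)

lemma tsupport_fderiv_apply (u : ℂ → F) (v : ℂ) : tsupport (fun x => fderiv ℝ u x v) ⊆ tsupport u := by
  refine closure_minimal (fun x hx => ?_) isClosed_closure
  refine support_fderiv_subset ℝ (f := u) ?_
  intro h
  exact hx (by simp [h])

lemma hcs_fderiv {u : ℂ → F} (hu : HasCompactSupport u) (v : ℂ) :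
    HasCompactSupport (fun x => fderiv ℝ u x v) :=
  hu.mono' ((subset_tsupport _).trans (tsupport_fderiv_apply u v))

/-- Integration by parts against a function that is only smooth near the support. -/
lemma ibp {O : Set ℂ} (hO : IsOpen O) {g : ℂ → ℝ} {u : ℂ → F}
    (hg : ContDiffOn ℝ 1 g O) (hu : ContDiff ℝ 1 u) (huc : HasCompactSupport u) (hs : tsupport u ⊆ O)
    (v : ℂ) : ∫ x, g x • fderiv ℝ u x v = - ∫ x, fderiv ℝ g x v • u x := by
  have hg' : ContinuousOn (fun x => fderiv ℝ g x v) O :=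
    (hg.continuousOn_fderiv_of_isOpen hO le_rfl).clm_apply continuousOn_const
  have hu' : Continuous (fun x => fderiv ℝ u x v) :=
    (hu.continuous_fderiv one_ne_zero).clm_apply continuous_const
  refine integral_smul_fderiv_eq_neg_fderiv_smul_of_integrable
    (integrable_smul_of_tsupport hO hg' hu.continuous huc hs)
    (integrable_smul_of_tsupport hO hg.continuousOn hu' (hcs_fderiv huc v)
      ((tsupport_fderiv_apply u v).trans hs))
    (integrable_smul_of_tsupport hO hg.continuousOn hu.continuous huc hs)
    (fun x hx => (hg.contDiffAt (hO.mem_nhds (hs hx))).differentiableAt one_ne_zero)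
    (fun x _ => hu.differentiable one_ne_zero x)

lemma contDiffOn_fderiv_apply {O : Set ℂ} (hO : IsOpen O) {g : ℂ → F}
    (hg : ContDiffOn ℝ (⊤ : ℕ∞) g O) (v : ℂ) :
    ContDiffOn ℝ (⊤ : ℕ∞) (fun x => fderiv ℝ g x v) O :=
  (hg.fderiv_of_isOpen hO (by simp)).clm_apply contDiffOn_const

lemma contDiff_fderiv_apply {g : ℂ → F} (hg : ContDiff ℝ (⊤ : ℕ∞) g) (v : ℂ) :
    ContDiff ℝ (⊤ : ℕ∞) (fun x => fderiv ℝ g x v) :=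
  (hg.fderiv_right (m := (⊤ : ℕ∞)) (by simp)).clm_apply contDiff_const

/-- The Laplacian of a vector-valued function on the plane. -/
def lapF (u : ℂ → F) (x : ℂ) : F :=
  fderiv ℝ (fun y => fderiv ℝ u y 1) x 1 + fderiv ℝ (fun y => fderiv ℝ u y Complex.I) x Complex.I

/-- The real-bilinear gradient pairing. -/
def gradP (g : ℂ → ℝ) (u : ℂ → F) (x : ℂ) : F :=
  fderiv ℝ g x 1 • fderiv ℝ u x 1 + fderiv ℝ g x Complex.I • fderiv ℝ u x Complex.I

section Green
variable {O : Set ℂ} (hO : IsOpen O) {g : ℂ → ℝ} {u : ℂ → F}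
    (hg : ContDiffOn ℝ (⊤ : ℕ∞) g O) (hu : ContDiff ℝ (⊤ : ℕ∞) u) (huc : HasCompactSupport u)
    (hs : tsupport u ⊆ O)

lemma lapF_continuous {u : ℂ → F} (hu : ContDiff ℝ (⊤ : ℕ∞) u) : Continuous (lapF u) :=
  (contDiff_fderiv_apply (contDiff_fderiv_apply hu 1) 1).continuous.add
    (contDiff_fderiv_apply (contDiff_fderiv_apply hu Complex.I) Complex.I).continuous

lemma lapF_tsupport (u : ℂ → F) : tsupport (lapF u) ⊆ tsupport u := by
  refine (tsupport_add _ _).trans (union_subset ?_ ?_)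
  · exact (tsupport_fderiv_apply _ _).trans (tsupport_fderiv_apply _ _)
  · exact (tsupport_fderiv_apply _ _).trans (tsupport_fderiv_apply _ _)

lemma lapF_hcs {u : ℂ → F} (hu : HasCompactSupport u) : HasCompactSupport (lapF u) :=
  hu.mono' ((subset_tsupport _).trans (lapF_tsupport u))

include hO hg hu huc hs

lemma gradP_integrable : Integrable (gradP g u) := by
  have h : ∀ v : ℂ, Integrable (fun x => fderiv ℝ g x v • fderiv ℝ u x v) := fun v =>
    integrable_smul_of_tsupport hO (contDiffOn_fderiv_apply hO hg v).continuousOn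
      (contDiff_fderiv_apply hu v).continuous (hcs_fderiv huc v) ((tsupport_fderiv_apply u v).trans hs)
  exact (h 1).add (h Complex.I)

lemma lap_left_integrable : Integrable (fun x => lapR g x • u x) := by
  have h : ∀ v : ℂ, ContinuousOn (fun x => fderiv ℝ (fun y => fderiv ℝ g y v) x v) O := fun v =>
    (contDiffOn_fderiv_apply hO (contDiffOn_fderiv_apply hO hg v) v).continuousOn
  exact integrable_smul_of_tsupport hO ((h 1).add (h Complex.I)) hu.continuous huc hs

lemma lap_right_integrable : Integrable (fun x => g x • lapF u x) :=
  integrable_smul_of_tsupport hO hg.continuousOn (lapF_continuous hu) (lapF_hcs huc)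
      ((lapF_tsupport u).trans hs)

lemma green_left : ∫ x, gradP g u x = - ∫ x, lapR g x • u x := by
  have hi : ∀ v : ℂ, Integrable (fun x => fderiv ℝ g x v • fderiv ℝ u x v) := fun v =>
    integrable_smul_of_tsupport hO (contDiffOn_fderiv_apply hO hg v).continuousOn
      (contDiff_fderiv_apply hu v).continuous (hcs_fderiv huc v) ((tsupport_fderiv_apply u v).trans hs)
  have hi2 : ∀ v : ℂ, Integrable (fun x => fderiv ℝ (fun y => fderiv ℝ g y v) x v • u x) := fun v =>
    integrable_smul_of_tsupport hO
      (contDiffOn_fderiv_apply hO (contDiffOn_fderiv_apply hO hg v) v).continuousOn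
      hu.continuous huc hs
  have hb : ∀ v : ℂ, ∫ x, fderiv ℝ g x v • fderiv ℝ u x v =
      - ∫ x, fderiv ℝ (fun y => fderiv ℝ g y v) x v • u x := fun v =>
    ibp hO ((contDiffOn_fderiv_apply hO hg v).of_le (by simp)) (hu.of_le (by simp)) huc hs v
  unfold gradP lapR
  simp_rw [add_smul]
  rw [integral_add (hi _) (hi _), integral_add (hi2 _) (hi2 _), hb, hb]
  abel

lemma green_right : ∫ x, gradP g u x = - ∫ x, g x • lapF u x := by
  have hi : ∀ v : ℂ, Integrable (fun x => fderiv ℝ g x v • fderiv ℝ u x v) := fun v =>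
    integrable_smul_of_tsupport hO (contDiffOn_fderiv_apply hO hg v).continuousOn
      (contDiff_fderiv_apply hu v).continuous (hcs_fderiv huc v) ((tsupport_fderiv_apply u v).trans hs)
  have hi2 : ∀ v : ℂ, Integrable (fun x => g x • fderiv ℝ (fun y => fderiv ℝ u y v) x v) := fun v =>
    integrable_smul_of_tsupport hO hg.continuousOn
      (contDiff_fderiv_apply (contDiff_fderiv_apply hu v) v).continuous
      (hcs_fderiv (hcs_fderiv huc v) v)
      ((tsupport_fderiv_apply _ v).trans ((tsupport_fderiv_apply u v).trans hs))
  have hb : ∀ v : ℂ, ∫ x, g x • fderiv ℝ (fun y => fderiv ℝ u y v) x v =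
      - ∫ x, fderiv ℝ g x v • fderiv ℝ u x v := fun v =>
    ibp hO (hg.of_le (by simp)) ((contDiff_fderiv_apply hu v).of_le (by simp)) (hcs_fderiv huc v)
      ((tsupport_fderiv_apply u v).trans hs) v
  unfold gradP lapF
  simp_rw [smul_add]
  rw [integral_add (hi _) (hi _), integral_add (hi2 _) (hi2 _), hb, hb]
  abel

end Green

section Gauge
variable {O : Set ℂ} (hO : IsOpen O) {a : ℂ} (ha : a ∉ O) {S : ℂ → ℂ} (hS : ContinuousOn S O)
  (hS2 : ∀ x ∈ O, S x ^ 2 = x - a)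

/-- The gauge factor attached to a branch `S` of the square root. -/
def gaugeE (S : ℂ → ℂ) (x : ℂ) : ℂ := S x / (‖S x‖ : ℂ)

include ha hS2 in
lemma branch_ne {x : ℂ} (hx : x ∈ O) : S x ≠ 0 := by
  intro h
  have := hS2 x hx
  rw [h, zero_pow two_ne_zero] at this
  exact ha (sub_eq_zero.1 this.symm ▸ hx)

include ha hS2 in
lemma gauge_norm {x : ℂ} (hx : x ∈ O) : ‖gaugeE S x‖ = 1 := by
  have := norm_ne_zero_iff.2 (branch_ne ha hS2 hx)
  rw [gaugeE, norm_div, Complex.norm_real, norm_norm, div_self this]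

include hO ha hS hS2 in
lemma branch_hasDerivAt {x : ℂ} (hx : x ∈ O) : HasDerivAt S (2 * S x)⁻¹ x := by
  have h1 : HasDerivAt (fun s : ℂ => s ^ 2 + a) (2 * S x) (S x) := by
    simpa using (hasDerivAt_pow 2 (S x)).add_const a
  refine HasDerivAt.of_local_left_inverse (hS.continuousAt (hO.mem_nhds hx)) h1
    (mul_ne_zero two_ne_zero (branch_ne ha hS2 hx)) ?_
  filter_upwards [hO.mem_nhds hx] with y hy
  rw [hS2 y hy, sub_add_cancel]

include hO ha hS hS2 in
lemma branch_contDiffOn : ContDiffOn ℝ (⊤ : ℕ∞) S O := by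
  have : DifferentiableOn ℂ S O := fun x hx =>
    (branch_hasDerivAt hO ha hS hS2 hx).differentiableAt.differentiableWithinAt
  exact (this.contDiffOn hO).restrict_scalars ℝ

include hO ha hS hS2 in
lemma gauge_contDiffOn : ContDiffOn ℝ (⊤ : ℕ∞) (gaugeE S) O := by
  have h1 := branch_contDiffOn hO ha hS hS2
  have h2 : ContDiffOn ℝ (⊤ : ℕ∞) (fun x => ‖S x‖) O :=
    h1.norm ℝ fun x hx => branch_ne ha hS2 hx
  refine ((h2.inv fun x hx => norm_ne_zero_iff.2 (branch_ne ha hS2 hx)).smul h1).congr fun x hx => ?_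
  show S x / (‖S x‖ : ℂ) = (‖S x‖)⁻¹ • S x
  rw [Complex.real_smul, Complex.ofReal_inv, div_eq_inv_mul]

include hO ha hS hS2 in
lemma gauge_fderiv {x : ℂ} (hx : x ∈ O) (v : ℂ) :
    fderiv ℝ (gaugeE S) x v = gaugeE S x * Complex.I * (((v / (2 * (x - a))).im : ℝ) : ℂ) := by
  have hS0 := branch_ne ha hS2 hx
  have hxn := hO.mem_nhds hx
  set n := ‖S x‖ with hn
  have hn0 : n ≠ 0 := norm_ne_zero_iff.2 hS0
  have hE : HasFDerivAt (gaugeE S) (fderiv ℝ (gaugeE S) x) x :=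
    (((gauge_contDiffOn hO ha hS hS2).contDiffAt hxn).differentiableAt (by simp)).hasFDerivAt
  have hNd : DifferentiableAt ℝ (fun x => ‖S x‖) x :=
    ((branch_contDiffOn hO ha hS hS2).contDiffAt hxn).differentiableAt (by simp) |>.norm ℝ hS0
  have hSd : HasFDerivAt S (((ContinuousLinearMap.toSpanSingleton ℂ ((2 * S x)⁻¹)).restrictScalars ℝ)) x :=
    (branch_hasDerivAt hO ha hS hS2 hx).hasFDerivAt.restrictScalars ℝ
  set N := fderiv ℝ (fun x => ‖S x‖) x with hN
  -- `S = ‖S‖ E`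
  have h1 : HasFDerivAt S (n • fderiv ℝ (gaugeE S) x + N.smulRight (gaugeE S x)) x := by
    refine (hNd.hasFDerivAt.smul hE).congr_of_eventuallyEq ?_
    filter_upwards [hxn] with y hy
    have := norm_ne_zero_iff.2 (branch_ne ha hS2 hy)
    show S y = ‖S y‖ • gaugeE S y
    rw [Complex.real_smul, gaugeE, mul_div_cancel₀]
    exact_mod_cast this
  have h2 := congrArg (fun L : ℂ →L[ℝ] ℂ => L v) (h1.unique hSd)
  simp only [_root_.add_apply, _root_.smul_apply, ContinuousLinearMap.smulRight_apply,
    ContinuousLinearMap.coe_restrictScalars', ContinuousLinearMap.toSpanSingleton_apply,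
    Complex.real_smul, smul_eq_mul] at h2
  -- `E * conj E = 1`
  have h3 : HasFDerivAt (fun y => ‖gaugeE S y‖ ^ 2) (2 • (innerSL ℝ (gaugeE S x)).comp (fderiv ℝ (gaugeE S) x)) x :=
    hE.norm_sq
  have h4 : HasFDerivAt (fun y => ‖gaugeE S y‖ ^ 2) (0 : ℂ →L[ℝ] ℝ) x := by
    refine (hasFDerivAt_const (1:ℝ) x).congr_of_eventuallyEq ?_
    filter_upwards [hxn] with y hy
    rw [gauge_norm ha hS2 hy, one_pow]
  have h5 := congrArg (fun L : ℂ →L[ℝ] ℝ => L v) (h3.unique h4)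
  simp only [_root_.smul_apply, ContinuousLinearMap.comp_apply, innerSL_apply_apply, Complex.inner,
    _root_.zero_apply] at h5
  set E := gaugeE S x with hEx
  set E' := fderiv ℝ (gaugeE S) x v with hE'
  have hEE : E * (starRingEnd ℂ) E = 1 := by
    rw [Complex.mul_conj, Complex.normSq_eq_norm_sq, hEx, gauge_norm ha hS2 hx]; simp
  have hSE : S x = n * E := by
    rw [hEx, gaugeE, mul_div_cancel₀]; exact_mod_cast hn0
  have h6 : ((starRingEnd ℂ) E * E').re = 0 := by
    rw [mul_comm]; simp at h5 ⊢; linarith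
  have h7 : (starRingEnd ℂ) E * E' = Complex.I * ((((starRingEnd ℂ) E * E').im : ℝ) : ℂ) := by
    apply Complex.ext <;> simp [h6] at *
  set κ := ((starRingEnd ℂ) E * E').im with hκ
  have hE0 : E ≠ 0 := fun h => by rw [h] at hEE; simp at hEE
  have hE'2 : E' = E * Complex.I * κ := by
    calc E' = E * ((starRingEnd ℂ) E * E') := by rw [← mul_assoc, hEE, one_mul]
      _ = _ := by rw [h7]; ring
  have h8 : v / (2 * (x - a)) = (N v / n : ℝ) + Complex.I * κ := by
    have hnc : (n:ℂ) ≠ 0 := by exact_mod_cast hn0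
    rw [← hS2 x hx]
    have h9 : v * (2 * S x)⁻¹ = n * E' + N v * E := h2.symm
    have : v / (2 * S x ^ 2) = v * (2 * S x)⁻¹ / S x := by field_simp
    rw [this, h9, hE'2, hSE]
    push_cast
    field_simp
    ring
  rw [hE'2, h8]
  simp

include hO ha hS hS2 in
/-- The gauge transformation: multiplication by `E` conjugates `i∇` into `i∇ + A_a`. -/
lemma gauge_mg {u : ℂ → ℂ} (hu : ContDiff ℝ (⊤ : ℕ∞) u) (hs : tsupport u ⊆ O) (x : ℂ) :
    mg1 a (fun y => gaugeE S y * u y) x = gaugeE S x * (Complex.I * pd1 u x) ∧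
    mg2 a (fun y => gaugeE S y * u y) x = gaugeE S x * (Complex.I * pd2 u x) := by
  by_cases hx : x ∈ tsupport u
  · have hxO := hs hx
    have hd : ∀ v, fderiv ℝ (fun y => gaugeE S y * u y) x v =
        gaugeE S x * fderiv ℝ u x v + gaugeE S x * Complex.I * (((v / (2 * (x - a))).im : ℝ) : ℂ) * u x := by
      intro v
      have h1 : DifferentiableAt ℝ (gaugeE S) x :=
        ((gauge_contDiffOn hO ha hS hS2).contDiffAt (hO.mem_nhds hxO)).differentiableAt (by simp)
      have h2 : DifferentiableAt ℝ u x := hu.differentiable (by simp) x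
      rw [fderiv_fun_mul h1 h2]
      simp only [_root_.add_apply, _root_.smul_apply, smul_eq_mul]
      rw [gauge_fderiv hO ha hS hS2 hxO]; ring
    have hxa : x - a ≠ 0 := sub_ne_zero.2 fun h => ha (h ▸ hxO)
    have hnorm : ‖x - a‖ ≠ 0 := norm_ne_zero_iff.2 hxa
    have hns : Complex.normSq (x - a) = ‖x - a‖ ^ 2 := Complex.normSq_eq_norm_sq _
    have key : abPot a x = Complex.I * (x - a) * ((1 / (2 * ‖x - a‖ ^ 2) : ℝ) : ℂ) := by
      unfold abPot; push_cast; ring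
    have hq : ∀ v : ℂ, v / (2 * (x - a)) = v * (starRingEnd ℂ) (x - a) * ((1 / (2 * ‖x - a‖ ^ 2) : ℝ) : ℂ) := by
      intro v
      have hc : (‖x - a‖ : ℂ) ^ 2 = (x - a) * (starRingEnd ℂ) (x - a) := by
        rw [Complex.mul_conj, hns]; push_cast; rfl
      have hn2 : (‖x - a‖ : ℂ) ≠ 0 := by exact_mod_cast hnorm
      push_cast
      rw [hc]
      have : (starRingEnd ℂ) (x - a) ≠ 0 := (map_ne_zero _).2 hxa
      field_simp
    have e1 : (((1:ℂ) / (2 * (x - a))).im) = abPot1 a x := by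
      rw [abPot1, key, hq]
      simp only [Complex.im_mul_ofReal, Complex.re_mul_ofReal]
      congr 1
      simp
      ring
    have e2 : ((Complex.I / (2 * (x - a))).im) = abPot2 a x := by
      rw [abPot2, key, hq]
      simp only [Complex.im_mul_ofReal]; simp
    unfold mg1 mg2 pd1 pd2
    rw [hd, hd, e1, e2]
    constructor
    · linear_combination (gaugeE S x * abPot1 a x * u x) * Complex.I_mul_I
    · linear_combination (gaugeE S x * abPot2 a x * u x) * Complex.I_mul_I
  · have h0 := notMem_tsupport_iff_eventuallyEq.1 hx
    have h1 : (fun y => gaugeE S y * u y) =ᶠ[nhds x] fun _ => (0:ℂ) := by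
      filter_upwards [h0] with y hy
      simp [hy]
    have h0' : u =ᶠ[nhds x] fun _ => (0:ℂ) := h0
    unfold mg1 mg2 pd1 pd2
    rw [h1.fderiv_eq, h0'.fderiv_eq]
    simp [h0'.eq_of_nhds]

end Gauge

/-- A continuous function with values in `{1,-1}` is locally constant. -/
lemma sign_smooth {O : Set ℂ} (hO : IsOpen O) {T : ℂ → ℝ} (hT : ContinuousOn T O)
    (hT2 : ∀ x ∈ O, T x ^ 2 = 1) {x : ℂ} (hx : x ∈ O) : T =ᶠ[nhds x] fun _ => T x := by
  have h1 : ∀ᶠ y in nhds x, |T y - T x| < 1 := by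
    have := (hT.continuousAt (hO.mem_nhds hx)).eventually (Metric.ball_mem_nhds (T x) one_pos)
    filter_upwards [this] with y hy
    simpa [Real.dist_eq] using hy
  filter_upwards [h1, hO.mem_nhds hx] with y hy hyO
  rcases sq_eq_one_iff.1 (hT2 y hyO) with h | h <;>
  rcases sq_eq_one_iff.1 (hT2 x hx) with h' | h' <;> rw [h, h'] at hy ⊢ <;> norm_num at hy

end

/-! ### Truncation of the eigenfunction -/

/-- A smooth truncation on the line at level `1`: it vanishes on `[-1,1]`, its derivative lies in
`[0,1]`, and it stays within distance `2` of the identity. -/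
lemma exists_trunc_one : ∃ F : ℝ → ℝ, ContDiff ℝ (⊤ : ℕ∞) F ∧ (∀ s, |s| ≤ 1 → F s = 0) ∧
    (∀ s, 0 ≤ deriv F s ∧ deriv F s ≤ 1) ∧ (∀ s, |F s - s| ≤ 2) ∧ ∀ s, |F s| ≤ |s| := by
  set χ : ℝ → ℝ := fun s => Real.smoothTransition (s ^ 2 - 1) with hχ
  have hχc : ContDiff ℝ (⊤ : ℕ∞) χ := Real.smoothTransition.contDiff.comp (by fun_prop)
  have hχ0 : ∀ s, 0 ≤ χ s := fun s => Real.smoothTransition.nonneg _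
  have hχ1 : ∀ s, χ s ≤ 1 := fun s => Real.smoothTransition.le_one _
  have hχz : ∀ s, |s| ≤ 1 → χ s = 0 := fun s hs =>
    Real.smoothTransition.zero_of_nonpos (by have := sq_le_one_iff_abs_le_one s |>.2 hs; linarith)
  have hχo : ∀ s, 2 ≤ |s| → χ s = 1 := fun s hs =>
    Real.smoothTransition.one_of_one_le (by nlinarith [sq_abs s])
  have hintg : ∀ u v, IntervalIntegrable χ volume u v := fun u v => hχc.continuous.intervalIntegrable u v
  set F : ℝ → ℝ := fun s => ∫ t in (0:ℝ)..s, χ t with hF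
  have hd : ∀ s, HasDerivAt F (χ s) s := fun s =>
    intervalIntegral.integral_hasDerivAt_right (hintg 0 s)
      (hχc.continuous.stronglyMeasurableAtFilter _ _) hχc.continuous.continuousAt
  have hderiv : deriv F = χ := funext fun s => (hd s).deriv
  have hF0 : F 0 = 0 := by simp [hF]
  have hle : ∀ s, |F s| ≤ |s| := by
    intro s
    have := intervalIntegral.norm_integral_le_of_norm_le_const (a := 0) (b := s) (f := χ) (C := 1)
      (fun t _ => by rw [Real.norm_eq_abs, abs_of_nonneg (hχ0 t)]; exact hχ1 t)
    simpa using this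
  -- `|F s - s| = |∫ (χ - 1)|`
  have hG : ∀ s, F s - s = ∫ t in (0:ℝ)..s, (χ t - 1) := by
    intro s
    rw [intervalIntegral.integral_sub (hintg 0 s) (by simp)]; simp [hF]
  have hb : ∀ s, |∫ t in (0:ℝ)..s, (χ t - 1)| ≤ |s| := by
    intro s
    have := intervalIntegral.norm_integral_le_of_norm_le_const (a := 0) (b := s)
      (f := fun t => χ t - 1) (C := 1)
      (fun t _ => by rw [Real.norm_eq_abs, abs_le]; constructor <;> linarith [hχ0 t, hχ1 t])
    simpa using this
  have hintg' : ∀ u v, IntervalIntegrable (fun t => χ t - 1) volume u v := fun u v =>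
    (hχc.continuous.sub continuous_const).intervalIntegrable u v
  refine ⟨F, ?_, ?_, ?_, ?_, hle⟩
  · rw [contDiff_infty_iff_deriv]
    exact ⟨fun s => (hd s).differentiableAt, hderiv ▸ hχc⟩
  · intro s hs
    simp only [hF]
    rw [intervalIntegral.integral_congr (g := fun _ => (0:ℝ)), intervalIntegral.integral_zero]
    intro t ht
    refine hχz t ?_
    have := abs_sub_left_of_mem_uIcc ht
    simp at this
    linarith
  · intro s; rw [hderiv]; exact ⟨hχ0 s, hχ1 s⟩
  · intro s
    rw [hG]
    rcases le_or_gt |s| 2 with h | h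
    · exact (hb s).trans h
    · rcases lt_abs.1 h with h1 | h1
      · rw [← intervalIntegral.integral_add_adjacent_intervals (hintg' 0 2) (hintg' 2 s),
          intervalIntegral.integral_congr (a := 2) (g := fun _ => (0:ℝ)), intervalIntegral.integral_zero,
          add_zero]
        · simpa using hb 2
        · intro t ht
          rw [uIcc_of_le h1.le] at ht
          simp only
          rw [hχo t (ht.1.trans (le_abs_self t)), sub_self]
      · rw [← intervalIntegral.integral_add_adjacent_intervals (hintg' 0 (-2)) (hintg' (-2) s),
          intervalIntegral.integral_congr (a := -2) (g := fun _ => (0:ℝ)), intervalIntegral.integral_zero,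
          add_zero]
        · simpa using hb (-2)
        · intro t ht
          rw [uIcc_of_ge (by linarith)] at ht
          simp only
          rw [hχo t (by have := neg_le_abs t; linarith [ht.2]), sub_self]

lemma exists_trunc {ε : ℝ} (hε : 0 < ε) : ∃ F : ℝ → ℝ, ContDiff ℝ (⊤ : ℕ∞) F ∧
    (∀ s, |s| ≤ ε → F s = 0) ∧ (∀ s, 0 ≤ deriv F s ∧ deriv F s ≤ 1) ∧
    (∀ s, |F s - s| ≤ 2 * ε) ∧ ∀ s, |F s| ≤ |s| := by
  obtain ⟨F, hF, h0, hd, h2, hle⟩ := exists_trunc_one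
  have hdiff : Differentiable ℝ F := hF.differentiable (by simp)
  refine ⟨fun s => ε * F (s / ε), contDiff_const.mul (hF.comp (by fun_prop)), ?_, ?_, ?_, ?_⟩
  · intro s hs
    show ε * F (s / ε) = 0
    rw [h0, mul_zero]
    rwa [abs_div, abs_of_pos hε, div_le_one hε]
  · intro s
    have : deriv (fun s => ε * F (s / ε)) s = deriv F (s / ε) := by
      have h1 : HasDerivAt (fun s : ℝ => s / ε) (1 / ε) s := (hasDerivAt_id s).div_const ε
      have h3 := ((hdiff (s / ε)).hasDerivAt.comp s h1).const_mul ε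
      have h4 : deriv (fun s => ε * F (s / ε)) s = ε * (deriv F (s / ε) * (1 / ε)) := h3.deriv
      rw [h4]; field_simp
    rw [this]; exact hd _
  · intro s
    have : ε * F (s / ε) - s = ε * (F (s / ε) - s / ε) := by field_simp
    rw [this, abs_mul, abs_of_pos hε, mul_comm 2]
    exact mul_le_mul_of_nonneg_left (h2 _) hε.le
  · intro s
    rw [abs_mul, abs_of_pos hε]
    calc ε * |F (s / ε)| ≤ ε * |s / ε| := mul_le_mul_of_nonneg_left (hle _) hε.le
      _ = |s| := by rw [abs_div, abs_of_pos hε]; field_simp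

lemma integrableOn_of_closure {Ω : Set ℂ} (hb : Bornology.IsBounded Ω) {E : Type*} [NormedAddCommGroup E]
    {g : ℂ → E} (hg : ContinuousOn g (closure Ω)) : IntegrableOn g Ω :=
  (hg.integrableOn_compact hb.isCompact_closure).mono_set subset_closure

/-- A smooth truncation `F ∘ φ` of the eigenfunction at level `ε`. Its support is compact and
avoids the nodal set, so it is unaffected by cutting the domain along a nodal line; it is uniformly
`2ε`-close to `φ`, and its form `∫|∇f|² - λ∫pf²` is `O(ε)`, because `0 ≤ F' ≤ 1` and hence
`∫ F'(φ)²|∇φ|² ≤ ∫ ∇F(φ)·∇φ = λ ∫ p φ F(φ)`. -/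
lemma truncation {Ω : Set ℂ} (hΩ : IsOpen Ω) (hΩbd : Bornology.IsBounded Ω) {p : ℂ → ℝ}
    (hp : ContinuousOn p (closure Ω)) {lam : ℝ} (hlam : 0 ≤ lam) {φ : ℂ → ℝ}
    (hφ : IsDirichletEigenfunction Ω p lam φ) :
    ∃ C : ℝ, 0 ≤ C ∧ ∀ ε > (0:ℝ), ∃ f : ℂ → ℝ, ContDiff ℝ (⊤ : ℕ∞) f ∧ HasCompactSupport f ∧
      tsupport f ⊆ Ω ∧ (∀ x ∈ tsupport f, φ x ≠ 0) ∧ (∀ x ∈ Ω, |f x - φ x| ≤ 2 * ε) ∧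
      (∀ x ∈ Ω, |f x| ≤ |φ x|) ∧
      (∫ x, gradP f f x) - lam * ∫ x in Ω, p x * f x ^ 2 ≤ C * ε := by
  obtain ⟨-, hφs, hφc, hφ0, hφe⟩ := hφ
  have hcomp : IsCompact (closure Ω) := hΩbd.isCompact_closure
  obtain ⟨P, hP⟩ := hcomp.exists_bound_of_continuousOn hp
  obtain ⟨B, hB⟩ := hcomp.exists_bound_of_continuousOn hφc
  have hP' : ∀ x ∈ Ω, |p x| ≤ |P| := fun x hx => (hP x (subset_closure hx)).trans (le_abs_self P)
  have hB' : ∀ x ∈ Ω, |φ x| ≤ |B| := fun x hx => (hB x (subset_closure hx)).trans (le_abs_self B)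
  have hvol : volume Ω < ⊤ := (measure_mono subset_closure).trans_lt hcomp.measure_lt_top
  refine ⟨lam * (|P| * |B| * 2) * volume.real Ω, by positivity, fun ε hε => ?_⟩
  obtain ⟨F, hF, hF0, hFd, hF2, hFle⟩ := exists_trunc hε
  classical
  set f : ℂ → ℝ := fun x => if x ∈ Ω then F (φ x) else 0 with hf
  have hfΩ : ∀ x ∈ Ω, f x = F (φ x) := fun x hx => by simp [hf, hx]
  set K : Set ℂ := closure Ω ∩ (fun x => |φ x|) ⁻¹' Ici ε with hK
  have hKc : IsClosed K := hφc.abs.preimage_isClosed_of_isClosed isClosed_closure isClosed_Ici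
  have hKΩ : K ⊆ Ω := by
    rintro x ⟨hx1, hx2⟩
    by_contra hx
    have : φ x = 0 := hφ0 x (by rw [hΩ.frontier_eq]; exact ⟨hx1, hx⟩)
    rw [mem_preimage, this, abs_zero] at hx2
    exact absurd hx2 (not_le.2 hε)
  have hsupp : Function.support f ⊆ K := by
    intro x hx
    have hxΩ : x ∈ Ω := by
      by_contra h; exact hx (by simp [hf, h])
    refine ⟨subset_closure hxΩ, ?_⟩
    by_contra h
    refine hx ?_
    rw [hfΩ x hxΩ]
    exact hF0 _ (not_le.1 h).le
  have hts : tsupport f ⊆ K := closure_minimal hsupp hKc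
  have hKcomp : IsCompact K := hcomp.of_isClosed_subset hKc inter_subset_left
  have hfc : HasCompactSupport f := hKcomp.of_isClosed_subset isClosed_closure hts
  have hev : ∀ x ∈ Ω, f =ᶠ[nhds x] fun y => F (φ y) := fun x hx => by
    filter_upwards [hΩ.mem_nhds hx] with y hy using hfΩ y hy
  have hsmooth : ContDiff ℝ (⊤ : ℕ∞) f := by
    rw [contDiff_iff_contDiffAt]
    intro x
    by_cases hx : x ∈ Ω
    · exact (hF.contDiffAt.comp x (hφs.contDiffAt (hΩ.mem_nhds hx))).congr_of_eventuallyEq (hev x hx)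
    · have : x ∉ tsupport f := fun h => hx (hKΩ (hts h))
      have h0 : f =ᶠ[nhds x] fun _ => (0:ℝ) := notMem_tsupport_iff_eventuallyEq.1 this
      exact contDiffAt_const.congr_of_eventuallyEq h0
  have htsΩ := hts.trans hKΩ
  refine ⟨f, hsmooth, hfc, htsΩ, ?_, ?_, ?_, ?_⟩
  · intro x hx h
    have := (hts hx).2
    rw [mem_preimage, h, abs_zero] at this
    exact absurd this (not_le.2 hε)
  · intro x hx; rw [hfΩ x hx]; exact hF2 _
  · intro x hx; rw [hfΩ x hx]; exact hFle _
  have hpt : ∀ x, gradP f f x ≤ gradP φ f x := by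
    intro x
    by_cases hx : x ∈ Ω
    · have hd : ∀ v, fderiv ℝ f x v = deriv F (φ x) * fderiv ℝ φ x v := by
        intro v
        have h1 : HasFDerivAt φ (fderiv ℝ φ x) x :=
          ((hφs.contDiffAt (hΩ.mem_nhds hx)).differentiableAt (by simp)).hasFDerivAt
        have h2 : HasDerivAt F (deriv F (φ x)) (φ x) := (hF.differentiable (by simp) _).hasDerivAt
        rw [(hev x hx).fderiv_eq]
        have h3 := (h2.comp_hasFDerivAt x h1).fderiv
        have h4 : fderiv ℝ (fun y => F (φ y)) x = deriv F (φ x) • fderiv ℝ φ x := h3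
        rw [h4]; rfl
      unfold gradP
      simp only [smul_eq_mul, hd]
      obtain ⟨h0, h1⟩ := hFd (φ x)
      set D := deriv F (φ x)
      have : 0 ≤ D * (1 - D) := mul_nonneg h0 (by linarith)
      nlinarith [mul_nonneg this (sq_nonneg (fderiv ℝ φ x 1)),
        mul_nonneg this (sq_nonneg (fderiv ℝ φ x Complex.I))]
    · have : x ∉ tsupport f := fun h => hx (hKΩ (hts h))
      have h0 : f =ᶠ[nhds x] fun _ => (0:ℝ) := notMem_tsupport_iff_eventuallyEq.1 this
      unfold gradP
      rw [h0.fderiv_eq]; simp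
  have hle : ∫ x, gradP f f x ≤ ∫ x, gradP φ f x := by
    refine integral_mono (gradP_integrable isOpen_univ hsmooth.contDiffOn hsmooth hfc (subset_univ _))
      (gradP_integrable hΩ hφs hsmooth hfc htsΩ) hpt
  rw [green_left hΩ hφs hsmooth hfc htsΩ] at hle
  have hlap : - ∫ x, lapR φ x • f x = ∫ x in Ω, lam * p x * φ x * f x := by
    rw [← integral_neg, ← setIntegral_eq_integral_of_forall_compl_eq_zero (s := Ω)]
    · refine setIntegral_congr_fun hΩ.measurableSet fun x hx => ?_
      simp only [smul_eq_mul]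
      rw [← hφe x hx]; ring
    · intro x hx
      simp [hf, hx]
  rw [hlap] at hle
  have hfC : ContinuousOn f (closure Ω) := hsmooth.continuous.continuousOn
  have hi1 : IntegrableOn (fun x => lam * p x * φ x * f x) Ω :=
    integrableOn_of_closure hΩbd (((continuousOn_const.mul hp).mul hφc).mul hfC)
  have hi2 : IntegrableOn (fun x => lam * (p x * f x ^ 2)) Ω :=
    integrableOn_of_closure hΩbd (continuousOn_const.mul (hp.mul (hfC.pow 2)))
  have hfin : (∫ x in Ω, lam * p x * φ x * f x) - lam * ∫ x in Ω, p x * f x ^ 2 ≤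
      lam * (|P| * |B| * 2) * volume.real Ω * ε := by
    rw [← integral_const_mul, ← integral_sub hi1 hi2]
    refine (le_abs_self _).trans ?_
    rw [← Real.norm_eq_abs]
    refine (norm_setIntegral_le_of_norm_le_const hvol
      (C := lam * (|P| * |B| * (2 * ε))) ?_).trans (le_of_eq (by ring))
    intro x hx
    have : lam * p x * φ x * f x - lam * (p x * f x ^ 2) = lam * (p x * f x * (φ x - f x)) := by ring
    rw [this, norm_mul, norm_mul, norm_mul, Real.norm_eq_abs, Real.norm_eq_abs, Real.norm_eq_abs,
      Real.norm_eq_abs, abs_of_nonneg hlam]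
    have h1 : |f x| ≤ |B| := by rw [hfΩ x hx]; exact (hFle _).trans (hB' x hx)
    have h2 : |φ x - f x| ≤ 2 * ε := by rw [hfΩ x hx, abs_sub_comm]; exact hF2 _
    have h3 := hP' x hx
    gcongr
  linarith

/-! ### Test functions of low energy -/

/-- Test functions: the elements of `C_c^∞(Ω;ℂ)`. -/
def IsTest (Ω : Set ℂ) (u : ℂ → ℂ) : Prop :=
  ContDiff ℝ (⊤ : ℕ∞) u ∧ HasCompactSupport u ∧ tsupport u ⊆ Ω

/-- The weighted mass `∫_Ω p|u|²`. -/
def mass (Ω : Set ℂ) (p : ℂ → ℝ) (u : ℂ → ℂ) : ℝ := ∫ x in Ω, p x * ‖u x‖ ^ 2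

lemma orthonormal_coords {V : Type*} [AddCommGroup V] [Module ℂ V] [FiniteDimensional ℂ V]
    (c : InnerProductSpace.Core ℂ V) : ∃ (n : ℕ) (e : Fin n → V), ∀ v : V, ∃ α : Fin n → ℂ,
      v = ∑ i, α i • e i ∧ ∀ i, ‖α i‖ ≤ √(c.inner v v).re := by
  let _ : NormedAddCommGroup V := c.toNormedAddCommGroup
  let _ : InnerProductSpace ℂ V := InnerProductSpace.ofCore c.toCore
  let B := stdOrthonormalBasis ℂ V
  refine ⟨_, B, fun v => ⟨fun i => B.repr v i, (B.sum_repr v).symm, fun i => ?_⟩⟩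
  have h1 : ‖B.repr v i‖ ≤ ‖B.repr v‖ := PiLp.norm_apply_le _ i
  rw [B.repr.norm_map] at h1
  exact h1

section
variable {Ω : Set ℂ} (hΩ : IsOpen Ω) (hΩbd : Bornology.IsBounded Ω) {p : ℂ → ℝ}
    (hp : ContinuousOn p (closure Ω)) (hppos : ∀ x ∈ Ω, 0 < p x)

include hΩ hppos in
lemma mass_nonneg (u : ℂ → ℂ) : 0 ≤ mass Ω p u :=
  setIntegral_nonneg hΩ.measurableSet fun x hx => mul_nonneg (hppos x hx).le (by positivity)

include hΩbd hp in
lemma mass_integrable {u : ℂ → ℂ} (hu : Continuous u) : IntegrableOn (fun x => p x * ‖u x‖ ^ 2) Ω :=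
  integrableOn_of_closure hΩbd (hp.mul (hu.norm.pow 2).continuousOn)

include hΩ hΩbd hp hppos in
lemma mass_pos {u : ℂ → ℂ} (hu : IsTest Ω u) (h0 : u ≠ 0) : 0 < mass Ω p u := by
  unfold mass
  rw [setIntegral_pos_iff_support_of_nonneg_ae]
  · have hopen : IsOpen (Ω ∩ {x | u x ≠ 0}) := hΩ.inter (isOpen_ne_fun hu.1.continuous continuous_const)
    obtain ⟨x, hx⟩ := Function.ne_iff.1 h0
    have hxΩ : x ∈ Ω := hu.2.2 (subset_tsupport _ hx)
    refine (hopen.measure_pos volume ⟨x, hxΩ, hx⟩).trans_le (measure_mono ?_)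
    rintro y ⟨hy, hy2⟩
    refine ⟨?_, hy⟩
    have h1 : 0 < ‖u y‖ := norm_pos_iff.2 hy2
    have := hppos y hy
    rw [Function.mem_support]; positivity
  · filter_upwards [ae_restrict_mem hΩ.measurableSet] with x hx
    exact mul_nonneg (hppos x hx).le (by positivity)
  · exact mass_integrable hΩbd hp hu.1.continuous

include hΩ hΩbd hp hppos in
/-- Coordinates with respect to a basis orthonormal for the weighted `L²` product are bounded by the
square root of the mass. -/
lemma test_coords {V : Submodule ℂ (ℂ → ℂ)} [FiniteDimensional ℂ V] (hV : ∀ u ∈ V, IsTest Ω u) :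
    ∃ (n : ℕ) (e : Fin n → ℂ → ℂ), (∀ i, e i ∈ V) ∧ ∀ v ∈ V, ∃ α : Fin n → ℂ,
      v = ∑ i, α i • e i ∧ ∀ i, ‖α i‖ ≤ √(mass Ω p v) := by
  have hintg : ∀ u v : V, IntegrableOn (fun x => (p x : ℂ) * ((starRingEnd ℂ) (u.1 x) * v.1 x)) Ω := by
    intro u v
    refine integrableOn_of_closure hΩbd (ContinuousOn.mul ?_ ?_)
    · exact Complex.continuous_ofReal.comp_continuousOn hp
    · exact ((Complex.continuous_conj.comp (hV _ u.2).1.continuous).mul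
        (hV _ v.2).1.continuous).continuousOn
  have hself : ∀ u : V, ∫ x in Ω, (p x : ℂ) * ((starRingEnd ℂ) (u.1 x) * u.1 x) = (mass Ω p u.1 : ℂ) := by
    intro u
    unfold mass
    rw [← integral_complex_ofReal]
    congr 1; ext x
    rw [mul_comm ((starRingEnd ℂ) _), Complex.mul_conj, Complex.normSq_eq_norm_sq]; push_cast; rfl
  let c : InnerProductSpace.Core ℂ V :=
    { inner := fun u v => ∫ x in Ω, (p x : ℂ) * ((starRingEnd ℂ) (u.1 x) * v.1 x)
      conj_inner_symm := by
        intro u v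
        rw [← integral_conj]
        congr 1; ext x
        simp only [map_mul, Complex.conj_ofReal, Complex.conj_conj]; ring
      re_inner_nonneg := by
        intro u
        rw [hself]; simpa using mass_nonneg hΩ hppos u.1
      add_left := by
        intro u v w
        rw [← integral_add (hintg u w) (hintg v w)]
        congr 1; ext x
        simp; ring
      smul_left := by
        intro u v r
        rw [← integral_const_mul]
        congr 1; ext x
        simp; ring
      definite := by
        intro u hu
        rw [hself] at hu
        by_contra h
        have := mass_pos hΩ hΩbd hp hppos (hV _ u.2) (fun h' => h (Subtype.ext h'))
        have h0 : mass Ω p u.1 = 0 := by exact_mod_cast hu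
        linarith }
  obtain ⟨n, e, he⟩ := orthonormal_coords c
  refine ⟨n, fun i => (e i).1, fun i => (e i).2, fun v hv => ?_⟩
  obtain ⟨α, h1, h2⟩ := he ⟨v, hv⟩
  refine ⟨α, ?_, fun i => ?_⟩
  · have := congrArg (fun w : V => w.1) h1
    simpa using this
  · have h3 : c.inner ⟨v, hv⟩ ⟨v, hv⟩ = (mass Ω p v : ℂ) := hself ⟨v, hv⟩
    have := h2 i
    rwa [h3, Complex.ofReal_re] at this

/-- The operator `Δ + λp` applied to a complex-valued function. -/
def waveOp (p : ℂ → ℝ) (lam : ℝ) (v : ℂ → ℂ) (x : ℂ) : ℂ := lapF v x + (lam * p x) • v x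

lemma fderiv_lincomb {n : ℕ} {e : Fin n → ℂ → ℂ} (he : ∀ i, ContDiff ℝ (⊤ : ℕ∞) (e i)) (α : Fin n → ℂ)
    (w : ℂ) (x : ℂ) : fderiv ℝ (∑ i, α i • e i) x w = ∑ i, α i * fderiv ℝ (e i) x w := by
  have hd : ∀ i, DifferentiableAt ℝ (e i) x := fun i => (he i).differentiable (by simp) x
  rw [fderiv_sum (fun i _ => (hd i).const_smul (α i))]
  rw [_root_.sum_apply]
  refine Finset.sum_congr rfl fun i _ => ?_
  rw [fderiv_const_smul (hd i)]; rfl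

lemma lapF_lincomb {n : ℕ} {e : Fin n → ℂ → ℂ} (he : ∀ i, ContDiff ℝ (⊤ : ℕ∞) (e i)) (α : Fin n → ℂ)
    (x : ℂ) : lapF (∑ i, α i • e i) x = ∑ i, α i * lapF (e i) x := by
  have h2 : ∀ w : ℂ, fderiv ℝ (fun y => fderiv ℝ (∑ i, α i • e i) y w) x w =
      ∑ i, α i * fderiv ℝ (fun y => fderiv ℝ (e i) y w) x w := by
    intro w
    have : (fun y => fderiv ℝ (∑ i, α i • e i) y w) = ∑ i, α i • fun y => fderiv ℝ (e i) y w := by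
      ext y; rw [fderiv_lincomb he]; simp
    rw [this, fderiv_lincomb fun i => contDiff_fderiv_apply (he i) w]
  unfold lapF
  rw [h2, h2, ← Finset.sum_add_distrib]
  simp_rw [mul_add]

lemma norm_lincomb_le {n : ℕ} {α β : Fin n → ℂ} {M : ℝ} (hα : ∀ i, ‖α i‖ ≤ M) :
    ‖∑ i, α i * β i‖ ≤ M * ∑ i, ‖β i‖ := by
  rw [Finset.mul_sum]
  refine (norm_sum_le _ _).trans (Finset.sum_le_sum fun i _ => ?_)
  rw [norm_mul]
  exact mul_le_mul_of_nonneg_right (hα i) (norm_nonneg _)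

lemma gradSqC_continuous {u : ℂ → ℂ} (hu : ContDiff ℝ (⊤ : ℕ∞) u) : Continuous (gradSqC u) :=
  ((contDiff_fderiv_apply hu 1).continuous.norm.pow 2).add
    ((contDiff_fderiv_apply hu Complex.I).continuous.norm.pow 2)

include hΩ hΩbd hp hppos in
/-- On a finite-dimensional space of test functions the supports lie in a common compact set, and
energy and `‖(Δ + λp) v‖_{L¹}` are controlled by the mass. -/
lemma test_bounds {V : Submodule ℂ (ℂ → ℂ)} [FiniteDimensional ℂ V] (hV : ∀ u ∈ V, IsTest Ω u) (lam : ℝ) :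
    ∃ (K : Set ℂ) (A B : ℝ), IsCompact K ∧ K ⊆ Ω ∧ 0 ≤ B ∧ ∀ v ∈ V, tsupport v ⊆ K ∧
      (∫ x in Ω, gradSqC v x) ≤ A * mass Ω p v ∧
      (∫ x in Ω, ‖waveOp p lam v x‖) ≤ B * √(mass Ω p v) := by
  obtain ⟨n, e, heV, he⟩ := test_coords hΩ hΩbd hp hppos hV
  have hes : ∀ i, ContDiff ℝ (⊤ : ℕ∞) (e i) := fun i => (hV _ (heV i)).1
  have hwc : ∀ v, ContDiff ℝ (⊤ : ℕ∞) v → ContinuousOn (waveOp p lam v) (closure Ω) := fun v hv =>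
    (lapF_continuous hv).continuousOn.add ((continuousOn_const.mul hp).smul hv.continuous.continuousOn)
  have hpc : ∀ w : ℂ, Continuous fun x => ∑ i, ‖fderiv ℝ (e i) x w‖ := fun w =>
    continuous_finsetSum _ fun i _ => (contDiff_fderiv_apply (hes i) w).continuous.norm
  refine ⟨⋃ i, tsupport (e i), ∫ x in Ω, ((∑ i, ‖fderiv ℝ (e i) x 1‖) ^ 2 +
      (∑ i, ‖fderiv ℝ (e i) x Complex.I‖) ^ 2), ∫ x in Ω, ∑ i, ‖waveOp p lam (e i) x‖, ?_, ?_, ?_, ?_⟩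
  · exact isCompact_iUnion fun i => (hV _ (heV i)).2.1
  · exact iUnion_subset fun i => (hV _ (heV i)).2.2
  · exact integral_nonneg fun x => Finset.sum_nonneg fun i _ => norm_nonneg _
  intro v hv
  obtain ⟨α, hvα, hα⟩ := he v hv
  have hmn := mass_nonneg hΩ hppos v
  have hvs := (hV v hv).1
  refine ⟨?_, ?_, ?_⟩
  · refine closure_minimal (fun x hx => ?_)
      (isCompact_iUnion fun i => (hV _ (heV i)).2.1).isClosed
    by_contra h
    simp only [mem_iUnion, not_exists] at h
    refine hx ?_
    rw [hvα]
    simp [fun i => image_eq_zero_of_notMem_tsupport (h i)]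
  · rw [mul_comm, ← integral_const_mul]
    refine setIntegral_mono_on (integrableOn_of_closure hΩbd (gradSqC_continuous hvs).continuousOn)
      (integrableOn_of_closure hΩbd (continuous_const.mul
        (((hpc 1).pow 2).add ((hpc Complex.I).pow 2))).continuousOn) hΩ.measurableSet fun x _ => ?_
    have h1 : ∀ w : ℂ, ‖fderiv ℝ v x w‖ ^ 2 ≤ mass Ω p v * (∑ i, ‖fderiv ℝ (e i) x w‖) ^ 2 := by
      intro w
      have h2 : ‖fderiv ℝ v x w‖ ≤ √(mass Ω p v) * ∑ i, ‖fderiv ℝ (e i) x w‖ := by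
        conv_lhs => rw [hvα, fderiv_lincomb hes]
        exact norm_lincomb_le hα
      calc _ ≤ (√(mass Ω p v) * ∑ i, ‖fderiv ℝ (e i) x w‖) ^ 2 := by gcongr
        _ = _ := by rw [mul_pow, Real.sq_sqrt hmn]
    have := add_le_add (h1 1) (h1 Complex.I)
    rw [← mul_add] at this
    exact this
  · rw [mul_comm, ← integral_const_mul]
    refine setIntegral_mono_on (integrableOn_of_closure hΩbd (hwc v hvs).norm)
      (integrableOn_of_closure hΩbd (continuousOn_const.mul
        (continuousOn_finsetSum _ fun i _ => (hwc _ (hes i)).norm))) hΩ.measurableSet fun x _ => ?_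
    have : waveOp p lam v x = ∑ i, α i * waveOp p lam (e i) x := by
      conv_lhs => rw [hvα]
      unfold waveOp
      rw [lapF_lincomb hes, Finset.sum_apply, Finset.smul_sum, ← Finset.sum_add_distrib]
      refine Finset.sum_congr rfl fun i _ => ?_
      rw [Pi.smul_apply, smul_eq_mul, Complex.real_smul, Complex.real_smul]; ring
    rw [this]
    exact norm_lincomb_le hα

end

lemma eigenvalueND_nonneg {Ω : Set ℂ} (hΩ : IsOpen Ω) {p : ℂ → ℝ} (hppos : ∀ x ∈ Ω, 0 < p x) (k : ℕ) :
    0 ≤ eigenvalueND Ω p k := by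
  refine Real.sInf_nonneg ?_
  rintro t ⟨V, -, -, rfl⟩
  refine Real.sSup_nonneg ?_
  rintro s ⟨u, -, -, rfl⟩
  refine div_nonneg (integral_nonneg fun x => ?_) (mass_nonneg hΩ hppos u)
  unfold gradSqC; positivity

/-- The gap `λ_{k-1} < λ_k` provides a `(k-1)`-dimensional space of test functions whose Rayleigh
quotients stay below some `μ < λ_k`. -/
lemma low_space {Ω : Set ℂ} (hΩ : IsOpen Ω) (hΩbd : Bornology.IsBounded Ω) {p : ℂ → ℝ}
    (hp : ContinuousOn p (closure Ω)) (hppos : ∀ x ∈ Ω, 0 < p x) {k : ℕ} (hk : 2 ≤ k)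
    (hgap : eigenvalueND Ω p (k - 1) < eigenvalueND Ω p k) :
    ∃ (V : Submodule ℂ (ℂ → ℂ)) (K : Set ℂ) (μ B : ℝ), Module.finrank ℂ V = k - 1 ∧
      (∀ u ∈ V, IsTest Ω u) ∧ IsCompact K ∧ K ⊆ Ω ∧ μ < eigenvalueND Ω p k ∧ 0 ≤ B ∧
      ∀ v ∈ V, tsupport v ⊆ K ∧ (∫ x in Ω, gradSqC v x) ≤ μ * mass Ω p v ∧
        (∫ x in Ω, ‖waveOp p (eigenvalueND Ω p k) v x‖) ≤ B * √(mass Ω p v) := by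
  set lam := eigenvalueND Ω p k with hlam
  have hne : { t : ℝ | ∃ V : Submodule ℂ (ℂ → ℂ), Module.finrank ℂ V = k - 1 ∧
    (∀ u ∈ V, ContDiff ℝ (⊤ : ℕ∞) u ∧ HasCompactSupport u ∧ tsupport u ⊆ Ω) ∧
    t = sSup { s : ℝ | ∃ u ∈ V, u ≠ 0 ∧
      s = (∫ x in Ω, gradSqC u x) / ∫ x in Ω, p x * ‖u x‖ ^ 2 } }.Nonempty := by
    by_contra hemp
    have h0 := eigenvalueND_nonneg hΩ hppos (k - 1)
    have hk0 : lam = 0 := by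
      rw [hlam]
      unfold eigenvalueND
      convert Real.sInf_empty
      rw [eq_empty_iff_forall_notMem]
      rintro t ⟨V, hV, hVt, -⟩
      refine hemp ?_
      obtain ⟨f, hf⟩ := exists_linearIndependent_of_le_finrank (R := ℂ) (M := V) (n := k - 1) (by omega)
      have hf' : LinearIndependent ℂ fun i => (f i : ℂ → ℂ) :=
        hf.map' V.subtype (Submodule.ker_subtype V)
      refine ⟨_, Submodule.span ℂ (range fun i => (f i : ℂ → ℂ)), ?_, ?_, rfl⟩
      · rw [finrank_span_eq_card hf', Fintype.card_fin]
      · intro u hu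
        refine hVt u (Submodule.span_le.2 ?_ hu)
        rintro _ ⟨i, rfl⟩
        exact (f i).2
    linarith
  obtain ⟨t, ⟨V, hVf, hVt, rfl⟩, ht⟩ := exists_lt_of_csInf_lt hne hgap
  have : FiniteDimensional ℂ V := Module.finite_of_finrank_pos (by omega)
  obtain ⟨K, A, B, hK, hKΩ, hB, hb⟩ := test_bounds hΩ hΩbd hp hppos (V := V) hVt lam
  refine ⟨V, K, _, B, hVf, hVt, hK, hKΩ, ht, hB, fun v hv => ⟨(hb v hv).1, ?_, (hb v hv).2.2⟩⟩
  by_cases hv0 : v = 0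
  · subst hv0
    have := (hb 0 hv).2.1
    have hm : mass Ω p 0 = 0 := by simp [mass]
    rw [hm, mul_zero] at this ⊢
    exact this
  · have hmp := mass_pos hΩ hΩbd hp hppos (hVt v hv) hv0
    rw [← div_le_iff₀ hmp]
    refine le_csSup ⟨A, ?_⟩ ⟨v, hv, hv0, rfl⟩
    rintro s ⟨u, hu, hu0, rfl⟩
    have hmp := mass_pos hΩ hΩbd hp hppos (hVt u hu) hu0
    exact (div_le_iff₀ hmp).2 (hb u hu).2.1

/-! ### The quadratic form on `v + c f` -/

lemma setInt_of_tsupport {F : Type*} [NormedAddCommGroup F] [NormedSpace ℝ F] {Ω : Set ℂ} {g u : ℂ → F}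
    (hs : tsupport u ⊆ Ω) (h : ∀ x, x ∉ tsupport u → g x = 0) : ∫ x in Ω, g x = ∫ x, g x :=
  setIntegral_eq_integral_of_forall_compl_eq_zero fun x hx => h x fun h' => hx (hs h')

lemma integral_three {Ω : Set ℂ} {f g h : ℂ → ℝ} (hf : IntegrableOn f Ω) (hg : IntegrableOn g Ω)
    (hh : IntegrableOn h Ω) : ∫ x in Ω, (f x + g x + h x) =
      (∫ x in Ω, f x) + (∫ x in Ω, g x) + ∫ x in Ω, h x := by
  have hfg : IntegrableOn (fun x => f x + g x) Ω := hf.add hg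
  rw [integral_add hfg hh, integral_add hf hg]

lemma fderiv_zero_of_notMem {F : Type*} [NormedAddCommGroup F] [NormedSpace ℝ F] {u : ℂ → F} {x : ℂ}
    (hx : x ∉ tsupport u) (w : ℂ) : fderiv ℝ u x w = 0 :=
  image_eq_zero_of_notMem_tsupport (f := fun y => fderiv ℝ u y w) fun h => hx (tsupport_fderiv_apply u w h)

lemma pd_comb {v : ℂ → ℂ} {f : ℂ → ℝ} (hv : ContDiff ℝ (⊤ : ℕ∞) v) (hf : ContDiff ℝ (⊤ : ℕ∞) f) (c : ℂ) (x w : ℂ) :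
    fderiv ℝ (fun y => v y + c * (f y : ℂ)) x w = fderiv ℝ v x w + c * (fderiv ℝ f x w : ℂ) := by
  have h1 := (hv.differentiable (by simp) x).hasFDerivAt
  have h2 := (hf.differentiable (by simp) x).hasFDerivAt
  have h3 : HasFDerivAt (fun y => ((f y : ℝ) : ℂ)) (Complex.ofRealCLM.comp (fderiv ℝ f x)) x :=
    Complex.ofRealCLM.hasFDerivAt.comp x h2
  have h4 := h1.add (h3.const_mul c)
  rw [show fderiv ℝ (fun y => v y + c * (f y : ℂ)) x = _ from h4.fderiv]
  simp

lemma contDiff_comb {v : ℂ → ℂ} {f : ℂ → ℝ} (hv : ContDiff ℝ (⊤ : ℕ∞) v) (hf : ContDiff ℝ (⊤ : ℕ∞) f) (c : ℂ) :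
    ContDiff ℝ (⊤ : ℕ∞) fun y => v y + c * (f y : ℂ) :=
  hv.add (contDiff_const.mul (Complex.ofRealCLM.contDiff.comp hf))

lemma norm_sq_comb (A c : ℂ) (s : ℝ) :
    ‖A + c * (s : ℂ)‖ ^ 2 = ‖A‖ ^ 2 + ‖c‖ ^ 2 * (s * s) + 2 * ((starRingEnd ℂ) c * (s • A)).re := by
  rw [← Complex.normSq_eq_norm_sq, ← Complex.normSq_eq_norm_sq, ← Complex.normSq_eq_norm_sq]
  simp [Complex.normSq_apply]; ring

/-- `φ` is orthogonal to the range of `Δ + λp` on test functions. -/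
lemma eigen_orth {Ω : Set ℂ} (hΩ : IsOpen Ω) {p : ℂ → ℝ} (hp : ContinuousOn p (closure Ω)) {lam : ℝ}
    {φ : ℂ → ℝ} (hφ : IsDirichletEigenfunction Ω p lam φ) {v : ℂ → ℂ} (hv : IsTest Ω v) :
    ∫ x in Ω, φ x • waveOp p lam v x = 0 := by
  obtain ⟨-, hφs, -, -, hφe⟩ := hφ
  have hpO : ContinuousOn p Ω := hp.mono subset_closure
  have h1 := green_left hΩ hφs hv.1 hv.2.1 hv.2.2
  have h2 := green_right hΩ hφs hv.1 hv.2.1 hv.2.2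
  have h3 : ∫ x, φ x • waveOp p lam v x = ∫ x, (φ x • lapF v x + (-1 : ℝ) • (lapR φ x • v x)) := by
    congr 1; ext x
    by_cases hx : x ∈ Ω
    · have := hφe x hx
      have h4 : lapR φ x = -(lam * p x * φ x) := by linarith
      rw [h4]; unfold waveOp
      simp only [Complex.real_smul]; push_cast; ring
    · have hx' : x ∉ tsupport v := fun h => hx (hv.2.2 h)
      have h5 : v x = 0 := image_eq_zero_of_notMem_tsupport hx'
      simp [waveOp, h5]
  have hi2 : Integrable (fun x => (-1 : ℝ) • (lapR φ x • v x)) :=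
    (lap_left_integrable hΩ hφs hv.1 hv.2.1 hv.2.2).smul (-1 : ℝ)
  rw [setInt_of_tsupport hv.2.2, h3, integral_add (lap_right_integrable hΩ hφs hv.1 hv.2.1 hv.2.2)
    hi2, integral_smul]
  · rw [h1] at h2
    rw [neg_inj] at h2
    rw [h2]; simp
  · intro x hx
    have h5 : v x = 0 := image_eq_zero_of_notMem_tsupport hx
    have h6 : lapF v x = 0 := image_eq_zero_of_notMem_tsupport fun h => hx (lapF_tsupport v h)
    simp [waveOp, h5, h6]

/-- The quadratic form `∫|∇·|² − λ∫p|·|²` on `v + c f`, where `f` is close to the eigenfunction: the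
mixed terms are small because `φ` solves the eigenvalue equation. -/
lemma base_estimate {Ω : Set ℂ} (hΩ : IsOpen Ω) (hΩbd : Bornology.IsBounded Ω) {p : ℂ → ℝ}
    (hp : ContinuousOn p (closure Ω)) {lam : ℝ}
    {φ : ℂ → ℝ} (hφ : IsDirichletEigenfunction Ω p lam φ) {v : ℂ → ℂ} (hv : IsTest Ω v)
    {f : ℂ → ℝ} (hf : ContDiff ℝ (⊤ : ℕ∞) f) (hfc : HasCompactSupport f) (hfs : tsupport f ⊆ Ω)
    {ε A B : ℝ} (hfφ : ∀ x ∈ Ω, |f x - φ x| ≤ 2 * ε)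
    (hfA : (∫ x, gradP f f x) - lam * ∫ x in Ω, p x * f x ^ 2 ≤ A)
    (hB : (∫ x in Ω, ‖waveOp p lam v x‖) ≤ B) (hε : 0 ≤ ε) (c : ℂ) :
    (∫ x in Ω, gradSqC (fun y => v y + c * (f y : ℂ)) x) - lam * mass Ω p (fun y => v y + c * (f y : ℂ)) ≤
      ((∫ x in Ω, gradSqC v x) - lam * mass Ω p v) + ‖c‖ ^ 2 * A + 4 * ‖c‖ * ε * B := by
  have hgff : Integrable (gradP f f) := gradP_integrable isOpen_univ hf.contDiffOn hf hfc (subset_univ _)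
  have hgfv : Integrable (gradP f v) := gradP_integrable isOpen_univ hf.contDiffOn hv.1 hv.2.1 (subset_univ _)
  have hgv : IntegrableOn (gradSqC v) Ω :=
    integrableOn_of_closure hΩbd (gradSqC_continuous hv.1).continuousOn
  have hpff : IntegrableOn (fun x => p x * f x ^ 2) Ω :=
    integrableOn_of_closure hΩbd (hp.mul (hf.continuous.pow 2).continuousOn)
  have hpfv : IntegrableOn (fun x => (p x * f x) • v x) Ω :=
    integrableOn_of_closure hΩbd ((hp.mul hf.continuous.continuousOn).smul hv.1.continuous.continuousOn)
  have hwc : ContinuousOn (waveOp p lam v) (closure Ω) :=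
    (lapF_continuous hv.1).continuousOn.add ((continuousOn_const.mul hp).smul hv.1.continuous.continuousOn)
  have hre : ∀ g : ℂ → ℂ, IntegrableOn g Ω → ∫ x in Ω, 2 * ((starRingEnd ℂ) c * g x).re =
      2 * ((starRingEnd ℂ) c * ∫ x in Ω, g x).re := by
    intro g hg
    have := Complex.reCLM.integral_comp_comm (hg.const_mul ((starRingEnd ℂ) c))
    rw [integral_const_mul] at this ⊢
    exact congrArg (2 * ·) this
  have hri : ∀ g : ℂ → ℂ, IntegrableOn g Ω → IntegrableOn (fun x => 2 * ((starRingEnd ℂ) c * g x).re) Ω :=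
    fun g hg => ((Complex.reCLM.integrable_comp (hg.const_mul ((starRingEnd ℂ) c)))).const_mul 2
  have e1 : ∫ x in Ω, gradSqC (fun y => v y + c * (f y : ℂ)) x = (∫ x in Ω, gradSqC v x) +
      ‖c‖ ^ 2 * (∫ x, gradP f f x) + 2 * ((starRingEnd ℂ) c * ∫ x in Ω, gradP f v x).re := by
    have hpt : ∀ x, gradSqC (fun y => v y + c * (f y : ℂ)) x =
        gradSqC v x + ‖c‖ ^ 2 * gradP f f x + 2 * ((starRingEnd ℂ) c * gradP f v x).re := by
      intro x
      unfold gradSqC pd1 pd2 gradP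
      rw [pd_comb hv.1 hf, pd_comb hv.1 hf, norm_sq_comb, norm_sq_comb, mul_add ((starRingEnd ℂ) c),
        Complex.add_re]
      simp only [smul_eq_mul]
      ring
    simp_rw [hpt]
    rw [integral_three hgv (hgff.integrableOn.const_mul _) (hri _ hgfv.integrableOn), hre _ hgfv.integrableOn, integral_const_mul,
      setInt_of_tsupport (g := gradP f f) hfs]
    intro x hx
    simp [gradP, fderiv_zero_of_notMem hx]
  have e2 : mass Ω p (fun y => v y + c * (f y : ℂ)) = mass Ω p v +
      ‖c‖ ^ 2 * (∫ x in Ω, p x * f x ^ 2) + 2 * ((starRingEnd ℂ) c * ∫ x in Ω, (p x * f x) • v x).re := by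
    have hpt : ∀ x, p x * ‖v x + c * (f x : ℂ)‖ ^ 2 =
        p x * ‖v x‖ ^ 2 + ‖c‖ ^ 2 * (p x * f x ^ 2) + 2 * ((starRingEnd ℂ) c * ((p x * f x) • v x)).re := by
      intro x
      rw [norm_sq_comb, mul_smul, Complex.real_smul (x := p x), mul_left_comm ((starRingEnd ℂ) c), Complex.re_ofReal_mul]
      ring
    have hm := mass_integrable hΩbd hp hv.1.continuous
    unfold mass
    simp_rw [hpt]
    rw [integral_three hm (hpff.const_mul _) (hri _ hpfv), hre _ hpfv, integral_const_mul]
  have e3 : (∫ x in Ω, gradP f v x) - lam * ∫ x in Ω, (p x * f x) • v x =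
      ∫ x in Ω, (φ x - f x) • waveOp p lam v x := by
    have hw0 : ∀ x, x ∉ tsupport v → gradP f v x = 0 ∧ f x • lapF v x = 0 := by
      intro x hx
      have h6 : lapF v x = 0 := image_eq_zero_of_notMem_tsupport fun h => hx (lapF_tsupport v h)
      simp [gradP, fderiv_zero_of_notMem hx, h6]
    have h1 : ∫ x in Ω, gradP f v x = - ∫ x in Ω, f x • lapF v x := by
      rw [setInt_of_tsupport (g := gradP f v) hv.2.2 fun x hx => (hw0 x hx).1,
        setInt_of_tsupport (g := fun x => f x • lapF v x) hv.2.2 fun x hx => (hw0 x hx).2]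
      exact green_right isOpen_univ hf.contDiffOn hv.1 hv.2.1 (subset_univ _)
    have hlf : IntegrableOn (fun x => f x • lapF v x) Ω :=
      integrableOn_of_closure hΩbd (hf.continuous.smul (lapF_continuous hv.1)).continuousOn
    have hfw : ∫ x in Ω, f x • waveOp p lam v x =
        (∫ x in Ω, f x • lapF v x) + lam * ∫ x in Ω, (p x * f x) • v x := by
      rw [← integral_const_mul, ← integral_add hlf (hpfv.const_mul _)]
      congr 1; ext x
      simp only [waveOp, Complex.real_smul]; push_cast; ring
    have h2 : ∫ x in Ω, (φ x - f x) • waveOp p lam v x =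
        (∫ x in Ω, φ x • waveOp p lam v x) - ∫ x in Ω, f x • waveOp p lam v x := by
      have i1 : IntegrableOn (fun x => φ x • waveOp p lam v x) Ω :=
        integrableOn_of_closure hΩbd (hφ.2.2.1.smul hwc)
      have i2 : IntegrableOn (fun x => f x • waveOp p lam v x) Ω :=
        integrableOn_of_closure hΩbd (hf.continuous.continuousOn.smul hwc)
      rw [← integral_sub i1 i2]
      congr 1; ext x
      rw [sub_smul]
    rw [h2, eigen_orth hΩ hp hφ hv, hfw, h1]; ring
  have e4 : ‖∫ x in Ω, (φ x - f x) • waveOp p lam v x‖ ≤ 2 * ε * B := by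
    calc _ ≤ ∫ x in Ω, 2 * ε * ‖waveOp p lam v x‖ := by
          refine norm_integral_le_of_norm_le
            ((integrableOn_of_closure hΩbd hwc.norm).const_mul _) ?_
          filter_upwards [ae_restrict_mem hΩ.measurableSet] with x hx
          rw [norm_smul, Real.norm_eq_abs, abs_sub_comm]
          exact mul_le_mul_of_nonneg_right (hfφ x hx) (norm_nonneg _)
      _ ≤ _ := by rw [integral_const_mul]; gcongr
  rw [e1, e2]
  have e5 : 2 * ((starRingEnd ℂ) c * ∫ x in Ω, gradP f v x).re -
      lam * (2 * ((starRingEnd ℂ) c * ∫ x in Ω, (p x * f x) • v x).re) =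
      2 * ((starRingEnd ℂ) c * ∫ x in Ω, (φ x - f x) • waveOp p lam v x).re := by
    rw [← e3]; simp; ring
  have e6 : ((starRingEnd ℂ) c * ∫ x in Ω, (φ x - f x) • waveOp p lam v x).re ≤ ‖c‖ * (2 * ε * B) := by
    refine (Complex.re_le_norm _).trans ?_
    rw [norm_mul, Complex.norm_conj]
    gcongr
  have e7 := mul_le_mul_of_nonneg_left hfA (sq_nonneg ‖c‖)
  nlinarith [e5, e6, e7]

/-! ### Magnetic trial functions -/

/-- The relative sign `S/Q = ±1` of two branches of `√(x-a)`. -/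
def relSign (S Q : ℂ → ℂ) (x : ℂ) : ℝ := (S x / Q x).re

section Glue
variable {O D : Set ℂ} {a : ℂ} {S Q : ℂ → ℂ} (hO : IsOpen O) (hD : IsOpen D) (haO : a ∉ O) (haD : a ∉ D)
  (hS : ContinuousOn S O) (hS2 : ∀ x ∈ O, S x ^ 2 = x - a)
  (hQ : ContinuousOn Q D) (hQ2 : ∀ x ∈ D, Q x ^ 2 = x - a)

include haD hS2 hQ2 in
lemma relSign_spec {x : ℂ} (hx : x ∈ O) (hx' : x ∈ D) :
    relSign S Q x ^ 2 = 1 ∧ S x = relSign S Q x * Q x := by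
  have hq : Q x ≠ 0 := branch_ne haD hQ2 hx'
  have h1 : (S x / Q x) ^ 2 = 1 := by
    rw [div_pow, hS2 x hx, ← hQ2 x hx', div_self (pow_ne_zero _ hq)]
  unfold relSign
  rcases sq_eq_one_iff.1 h1 with h | h
  · rw [h]; rw [div_eq_iff hq] at h; rw [h]; simp
  · rw [h]; rw [div_eq_iff hq] at h; rw [h]; simp

include haD hS2 hQ2 in
lemma gauge_eq {x : ℂ} (hx : x ∈ O) (hx' : x ∈ D) :
    gaugeE Q x = relSign S Q x * gaugeE S x := by
  obtain ⟨h1, h2⟩ := relSign_spec haD hS2 hQ2 hx hx'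
  have hn : ‖S x‖ = ‖Q x‖ := by
    rw [h2, norm_mul]
    have : |relSign S Q x| = 1 := by
      rcases sq_eq_one_iff.1 h1 with h | h <;> simp [h]
    simp [this]
  unfold gaugeE
  rw [hn]
  conv_rhs => rw [h2]
  have : (relSign S Q x : ℂ) ^ 2 = 1 := by exact_mod_cast h1
  linear_combination (-(Q x / ‖Q x‖)) * this

include hO hD haD hS hS2 hQ hQ2 in
lemma relSign_local {x : ℂ} (hx : x ∈ O) (hx' : x ∈ D) :
    relSign S Q =ᶠ[nhds x] fun _ => relSign S Q x := by
  refine sign_smooth (hO.inter hD) (T := relSign S Q) ?_ (fun y hy => ?_) ⟨hx, hx'⟩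
  · exact Complex.continuous_re.comp_continuousOn ((hS.mono inter_subset_left).div
      (hQ.mono inter_subset_right) fun y hy => branch_ne haD hQ2 hy.2)
  · exact (relSign_spec haD hS2 hQ2 hy.1 hy.2).1

variable {f : ℂ → ℝ} (hf : ContDiff ℝ (⊤ : ℕ∞) f) (hfs : tsupport f ⊆ O)

include hO hD haD hS hS2 hQ hQ2 hf hfs in
/-- The signed function `(S/Q) f` is smooth where `Q` is defined: `S/Q` is locally constant near the
support of `f`. -/
lemma signed_contDiffOn : ContDiffOn ℝ (⊤ : ℕ∞) (fun x => relSign S Q x * f x) D := by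
  intro x hx
  refine ContDiffAt.contDiffWithinAt ?_
  by_cases hxf : x ∈ tsupport f
  · have h := relSign_local hO hD haD hS hS2 hQ hQ2 (hfs hxf) hx
    refine (contDiffAt_const.mul hf.contDiffAt).congr_of_eventuallyEq
      (f := fun y => relSign S Q x * f y) ?_
    filter_upwards [h] with y hy
    rw [hy]
  · refine (contDiffAt_const (c := (0 : ℝ))).congr_of_eventuallyEq ?_
    filter_upwards [(isClosed_tsupport f).isOpen_compl.mem_nhds hxf] with y hy
    rw [image_eq_zero_of_notMem_tsupport hy, mul_zero]

include hO hD haD hS hS2 hQ hQ2 hf hfs in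
lemma signed_fderiv {x : ℂ} (hx : x ∈ D) (w : ℂ) :
    fderiv ℝ (fun x => relSign S Q x * f x) x w = relSign S Q x * fderiv ℝ f x w := by
  by_cases hxf : x ∈ tsupport f
  · have h := relSign_local hO hD haD hS hS2 hQ hQ2 (hfs hxf) hx
    have h1 : (fun x => relSign S Q x * f x) =ᶠ[nhds x] fun y => relSign S Q x * f y := by
      filter_upwards [h] with y hy
      rw [hy]
    rw [h1.fderiv_eq, fderiv_const_mul (hf.differentiable (by simp) x)]; rfl
  · have h1 : (fun x => relSign S Q x * f x) =ᶠ[nhds x] fun y => (0 : ℝ) := by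
      filter_upwards [(isClosed_tsupport f).isOpen_compl.mem_nhds hxf] with y hy
      rw [image_eq_zero_of_notMem_tsupport hy, mul_zero]
    rw [h1.fderiv_eq, fderiv_zero_of_notMem hxf]; simp

/-- The magnetic trial function `E_S (v + c f) + c t E_Q ζ`, where `E_S`, `E_Q` are the unimodular
gauge factors of the two branches `S`, `Q` of `√(x-a)`. The summand `0` makes the second bracket an
instance of the pattern `v + c f`. -/
def trial (S Q v : ℂ → ℂ) (f ζ : ℂ → ℝ) (c : ℂ) (t : ℝ) (x : ℂ) : ℂ :=
  gaugeE S x * (v x + c * (f x : ℂ)) + gaugeE Q x * (0 + c * t * (ζ x : ℂ))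

variable {v : ℂ → ℂ} {ζ : ℂ → ℝ} (hv : ContDiff ℝ (⊤ : ℕ∞) v) (hvc : HasCompactSupport v)
  (hvs : tsupport v ⊆ O) (hfc : HasCompactSupport f)
  (hζ : ContDiff ℝ (⊤ : ℕ∞) ζ) (hζc : HasCompactSupport ζ) (hζs : tsupport ζ ⊆ D)
  (hdisj : Disjoint (tsupport v) (tsupport ζ)) (c : ℂ) (t : ℝ)

lemma tsupport_comb (v : ℂ → ℂ) (f : ℂ → ℝ) (c : ℂ) :
    tsupport (fun y => v y + c * (f y : ℂ)) ⊆ tsupport v ∪ tsupport f := by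
  refine closure_minimal (fun x hx => ?_) ((isClosed_tsupport v).union (isClosed_tsupport f))
  by_contra h
  rw [mem_union, not_or] at h
  refine hx ?_
  simp [image_eq_zero_of_notMem_tsupport h.1, image_eq_zero_of_notMem_tsupport h.2]

include hO hD haO haD hS hS2 hQ hQ2 hf hfs hv hvc hvs hfc hζ hζc hζs in
lemma trial_test {Ω : Set ℂ} (hOΩ : O ⊆ Ω) (hζΩ : tsupport ζ ⊆ Ω) : IsTest (Ω \ {a}) (trial S Q v f ζ c t) := by
  have w1 := contDiff_comb hv hf c
  have w2 := contDiff_comb (v := fun _ => 0) contDiff_const hζ (c * t)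
  have s1 : tsupport (fun y => v y + c * (f y : ℂ)) ⊆ O :=
    (tsupport_comb v f c).trans (union_subset hvs hfs)
  have s2' : tsupport (fun y => 0 + c * t * (ζ y : ℂ)) ⊆ tsupport ζ :=
    (tsupport_comb (fun _ => 0) ζ (c * t)).trans (union_subset (by simp [tsupport, Function.support]) le_rfl)
  have s2 := s2'.trans hζs
  have c1 : HasCompactSupport (fun y => v y + c * (f y : ℂ)) :=
    (hvc.isCompact.union hfc.isCompact).of_isClosed_subset (isClosed_tsupport _) (tsupport_comb v f c)
  have c2 : HasCompactSupport (fun y => 0 + c * t * (ζ y : ℂ)) :=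
    hζc.isCompact.of_isClosed_subset (isClosed_tsupport _) s2'
  have t1 := tsupport_smul_sub (gaugeE S) (fun y => v y + c * (f y : ℂ))
  have t2 := tsupport_smul_sub (gaugeE Q) (fun y => 0 + c * t * (ζ y : ℂ))
  refine ⟨?_, ?_, ?_⟩
  · exact (contDiff_smul_of_tsupport hO (gauge_contDiffOn hO haO hS hS2) w1 s1).add
      (contDiff_smul_of_tsupport hD (gauge_contDiffOn hD haD hQ hQ2) w2 s2)
  · exact (hcs_smul (gaugeE S) c1).add (hcs_smul (gaugeE Q) c2)
  · refine (tsupport_add _ _).trans (union_subset ?_ ?_)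
    · exact fun x hx => ⟨hOΩ (s1 (t1 hx)), fun h => haO (h ▸ s1 (t1 hx))⟩
    · exact fun x hx => ⟨hζΩ (s2' (t2 hx)), fun h => haD (h ▸ s2 (t2 hx))⟩

lemma norm_sq_sign (c : ℂ) {E : ℂ} (hE : ‖E‖ = 1) {τ : ℝ} (hτ : τ ^ 2 = 1) (s z t : ℝ) :
    ‖E * (c * (s : ℂ)) + τ * E * (c * t * (z : ℂ))‖ ^ 2 =
      ‖c * (s : ℂ)‖ ^ 2 + ‖c‖ ^ 2 * (t ^ 2 * (z * z) + 2 * t * (τ * s * z)) := by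
  have : E * (c * (s : ℂ)) + τ * E * (c * t * (z : ℂ)) = E * c * ((s + τ * t * z : ℝ) : ℂ) := by
    push_cast; ring
  rw [this, norm_mul, norm_mul, norm_mul, hE, Complex.norm_real, Complex.norm_real, mul_pow, mul_pow, mul_pow,
    Real.norm_eq_abs, Real.norm_eq_abs, sq_abs, sq_abs]
  linear_combination (‖c‖ ^ 2 * t ^ 2 * z ^ 2) * hτ

include hO hD haO haD hS hS2 hQ hQ2 hf hfs hv hvs hζ hζs hdisj in
/-- Energy density and mass density of the trial function. On the support of the bump `ζ`, which
does not meet that of `v`, the trial function is `c E_Q ((S/Q) f + t ζ)`. -/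
lemma trial_pointwise (x : ℂ) :
    mgSq a (trial S Q v f ζ c t) x = gradSqC (fun y => v y + c * (f y : ℂ)) x +
      ‖c‖ ^ 2 * (t ^ 2 * gradP ζ ζ x + 2 * t * gradP (fun x => relSign S Q x * f x) ζ x) ∧
    ‖trial S Q v f ζ c t x‖ ^ 2 = ‖v x + c * (f x : ℂ)‖ ^ 2 +
      ‖c‖ ^ 2 * (t ^ 2 * (ζ x * ζ x) + 2 * t * (relSign S Q x * f x * ζ x)) := by
  have w1 := contDiff_comb hv hf c
  have w2 := contDiff_comb (v := fun _ => 0) contDiff_const hζ (c * t)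
  have s1 : tsupport (fun y => v y + c * (f y : ℂ)) ⊆ O :=
    (tsupport_comb v f c).trans (union_subset hvs hfs)
  have s2' : tsupport (fun y => 0 + c * t * (ζ y : ℂ)) ⊆ tsupport ζ :=
    (tsupport_comb (fun _ => 0) ζ (c * t)).trans (union_subset (by simp [tsupport, Function.support]) le_rfl)
  have s2 := s2'.trans hζs
  have m1 := gauge_mg hO haO hS hS2 w1 s1 x
  have m2 := gauge_mg hD haD hQ hQ2 w2 s2 x
  have d1 : DifferentiableAt ℝ (fun y => gaugeE S y * (v y + c * (f y : ℂ))) x :=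
    (contDiff_smul_of_tsupport hO (gauge_contDiffOn hO haO hS hS2) w1 s1).differentiable (by simp) x
  have d2 : DifferentiableAt ℝ (fun y => gaugeE Q y * (0 + c * t * (ζ y : ℂ))) x :=
    (contDiff_smul_of_tsupport hD (gauge_contDiffOn hD haD hQ hQ2) w2 s2).differentiable (by simp) x
  have hfd : fderiv ℝ (trial S Q v f ζ c t) x = _ := fderiv_add d1 d2
  have e1 : mg1 a (trial S Q v f ζ c t) x = Complex.I *
      (gaugeE S x * pd1 (fun y => v y + c * (f y : ℂ)) x +
        gaugeE Q x * (c * t * (fderiv ℝ ζ x 1 : ℂ))) := by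
    have h2 : pd1 (fun y => 0 + c * t * (ζ y : ℂ)) x = c * t * (fderiv ℝ ζ x 1 : ℂ) := by
      unfold pd1; rw [pd_comb contDiff_const hζ]; simp
    rw [← h2]
    have : mg1 a (trial S Q v f ζ c t) x = mg1 a (fun y => gaugeE S y * (v y + c * (f y : ℂ))) x +
        mg1 a (fun y => gaugeE Q y * (0 + c * t * (ζ y : ℂ))) x := by
      unfold mg1 pd1; rw [hfd, _root_.add_apply]; unfold trial; ring
    rw [this, m1.1, m2.1]; ring
  have e2 : mg2 a (trial S Q v f ζ c t) x = Complex.I *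
      (gaugeE S x * pd2 (fun y => v y + c * (f y : ℂ)) x +
        gaugeE Q x * (c * t * (fderiv ℝ ζ x Complex.I : ℂ))) := by
    have h2 : pd2 (fun y => 0 + c * t * (ζ y : ℂ)) x = c * t * (fderiv ℝ ζ x Complex.I : ℂ) := by
      unfold pd2; rw [pd_comb contDiff_const hζ]; simp
    rw [← h2]
    have : mg2 a (trial S Q v f ζ c t) x = mg2 a (fun y => gaugeE S y * (v y + c * (f y : ℂ))) x +
        mg2 a (fun y => gaugeE Q y * (0 + c * t * (ζ y : ℂ))) x := by
      unfold mg2 pd2; rw [hfd, _root_.add_apply]; unfold trial; ring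
    rw [this, m1.2, m2.2]; ring
  unfold mgSq
  rw [e1, e2, norm_mul, norm_mul, Complex.norm_I, one_mul, one_mul]
  unfold gradSqC gradP trial
  by_cases hxζ : x ∈ tsupport ζ
  · have hxv : x ∉ tsupport v := fun h => disjoint_left.1 hdisj h hxζ
    have hv0 : v x = 0 := image_eq_zero_of_notMem_tsupport hxv
    rw [signed_fderiv hO hD haD hS hS2 hQ hQ2 hf hfs (hζs hxζ),
      signed_fderiv hO hD haD hS hS2 hQ hQ2 hf hfs (hζs hxζ)]
    unfold pd1 pd2
    rw [pd_comb hv hf, pd_comb hv hf, fderiv_zero_of_notMem hxv, fderiv_zero_of_notMem hxv, hv0]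
    simp only [zero_add, smul_eq_mul]
    by_cases hxO : x ∈ O
    · rw [gauge_eq haD hS2 hQ2 hxO (hζs hxζ)]
      have hE := gauge_norm haO hS2 hxO
      have hτ := (relSign_spec haD hS2 hQ2 hxO (hζs hxζ)).1
      rw [norm_sq_sign c hE hτ, norm_sq_sign c hE hτ, norm_sq_sign c hE hτ]
      constructor <;> ring
    · have hxf : x ∉ tsupport f := fun h => hxO (hfs h)
      have hq := gauge_norm haD hQ2 (hζs hxζ)
      rw [fderiv_zero_of_notMem hxf, fderiv_zero_of_notMem hxf, image_eq_zero_of_notMem_tsupport hxf]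
      simp [hq, mul_pow]
      constructor <;> ring
  · rw [fderiv_zero_of_notMem hxζ, fderiv_zero_of_notMem hxζ, image_eq_zero_of_notMem_tsupport hxζ]
    by_cases hxO : x ∈ O
    · have hE := gauge_norm haO hS2 hxO
      simp [hE]
    · have hw : x ∉ tsupport (fun y => v y + c * (f y : ℂ)) := fun h => hxO (s1 h)
      have h0 : v x + c * (f x : ℂ) = 0 :=
        image_eq_zero_of_notMem_tsupport (f := fun y => v y + c * (f y : ℂ)) hw
      have h1 : pd1 (fun y => v y + c * (f y : ℂ)) x = 0 := fderiv_zero_of_notMem hw 1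
      have h2 : pd2 (fun y => v y + c * (f y : ℂ)) x = 0 := fderiv_zero_of_notMem hw Complex.I
      rw [h1, h2, h0]; simp

include hO hD haO haD hS hS2 hQ hQ2 hf hfs hv hvs hζ hζc hζs hdisj in
/-- Energy and mass of the trial function, compared with those of `v + c f`. -/
lemma trial_energy {Ω : Set ℂ} (hΩbd : Bornology.IsBounded Ω) {p : ℂ → ℝ}
    (hp : ContinuousOn p (closure Ω)) (hζΩ : tsupport ζ ⊆ Ω) :
    (∫ x in Ω, mgSq a (trial S Q v f ζ c t) x) =
      (∫ x in Ω, gradSqC (fun y => v y + c * (f y : ℂ)) x) +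
      ‖c‖ ^ 2 * (t ^ 2 * (∫ x, gradP ζ ζ x) - 2 * t * ∫ x, relSign S Q x * f x * lapF ζ x) ∧
    mass Ω p (trial S Q v f ζ c t) = mass Ω p (fun y => v y + c * (f y : ℂ)) +
      ‖c‖ ^ 2 * (t ^ 2 * (∫ x in Ω, p x * (ζ x * ζ x)) +
        2 * t * ∫ x in Ω, p x * (relSign S Q x * f x * ζ x)) := by
  have hpt := trial_pointwise hO hD haO haD hS hS2 hQ hQ2 hf hfs hv hvs hζ hζs hdisj c t
  have hsg := signed_contDiffOn hO hD haD hS hS2 hQ hQ2 hf hfs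
  have i1 := gradP_integrable hD hsg hζ hζc hζs
  have i2 : Integrable (gradP ζ ζ) := gradP_integrable isOpen_univ hζ.contDiffOn hζ hζc (subset_univ _)
  have g1 := green_right hD hsg hζ hζc hζs
  have i3 : IntegrableOn (gradSqC (fun y => v y + c * (f y : ℂ))) Ω :=
    integrableOn_of_closure hΩbd (gradSqC_continuous (contDiff_comb hv hf c)).continuousOn
  have z : ∀ g : ℂ → ℝ, ∀ x, x ∉ tsupport ζ → gradP g ζ x = 0 := fun g x hx => by
    simp [gradP, fderiv_zero_of_notMem hx]
  constructor
  · have : ∀ x, mgSq a (trial S Q v f ζ c t) x = gradSqC (fun y => v y + c * (f y : ℂ)) x +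
        ‖c‖ ^ 2 * t ^ 2 * gradP ζ ζ x +
        ‖c‖ ^ 2 * (2 * t) * gradP (fun x => relSign S Q x * f x) ζ x := fun x => by rw [(hpt x).1]; ring
    simp_rw [this]
    rw [integral_three i3 (i2.integrableOn.const_mul _) (i1.integrableOn.const_mul _), integral_const_mul,
      integral_const_mul, setInt_of_tsupport hζΩ (z _), setInt_of_tsupport hζΩ (z _), g1]
    simp only [smul_eq_mul]
    ring
  · have : ∀ x, p x * ‖trial S Q v f ζ c t x‖ ^ 2 = p x * ‖v x + c * (f x : ℂ)‖ ^ 2 +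
        ‖c‖ ^ 2 * t ^ 2 * (p x * (ζ x * ζ x)) +
        ‖c‖ ^ 2 * (2 * t) * (p x * (relSign S Q x * f x * ζ x)) := fun x => by rw [(hpt x).2]; ring
    unfold mass
    simp_rw [this]
    have i4 : IntegrableOn (fun x => p x * (ζ x * ζ x)) Ω :=
      integrableOn_of_closure hΩbd (hp.mul (hζ.continuous.mul hζ.continuous).continuousOn)
    have i5 : IntegrableOn (fun x => p x * (relSign S Q x * f x * ζ x)) Ω :=
      integrableOn_of_closure hΩbd (hp.mul
        (continuous_smul_of_tsupport hD hsg.continuousOn hζ.continuous hζs).continuousOn)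
    rw [integral_three (mass_integrable hΩbd hp (contDiff_comb hv hf c).continuous)
      (i4.const_mul _) (i5.const_mul _), integral_const_mul, integral_const_mul]
    ring

end Glue

/-! ### The positive Laplacian of `|Im w^m|` -/

/-- The sign of the imaginary part (with value `-1` on the real axis). -/
def halfSign (w : ℂ) : ℝ := if 0 < w.im then 1 else -1

lemma halfSign_measurable : Measurable halfSign :=
  Measurable.ite (measurableSet_lt measurable_const Complex.measurable_im) measurable_const measurable_const

lemma halfSign_mul_integrable {g : ℂ → ℝ} (hg : Integrable g) : Integrable fun w => halfSign w * g w := by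
  refine hg.bdd_mul (c := 1) halfSign_measurable.aestronglyMeasurable (ae_of_all _ fun w => ?_)
  unfold halfSign; split_ifs <;> simp

lemma halfSign_int_horizontal {P : ℂ → ℝ} (hP : ContDiff ℝ (⊤ : ℕ∞) P) (hPc : HasCompactSupport P) :
    ∫ w, halfSign w * fderiv ℝ P w 1 = 0 := by
  have h1 : Integrable P := hP.continuous.integrable_of_hasCompactSupport hPc
  have h2 : Integrable (fun w => fderiv ℝ P w 1) :=
    (contDiff_fderiv_apply hP 1).continuous.integrable_of_hasCompactSupport (hcs_fderiv hPc 1)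
  have := integral_bilinear_hasLineDerivAt_right_eq_neg_left_of_integrable
    (μ := (volume : Measure ℂ)) (f := halfSign) (f' := fun _ => 0) (g := P)
    (g' := fun w => fderiv ℝ P w 1) (v := (1 : ℂ)) (B := ContinuousLinearMap.mul ℝ ℝ)
    (by simp) (by simpa using halfSign_mul_integrable h2) (by simpa using halfSign_mul_integrable h1)
    (fun w _ => by
      have : (fun t : ℝ => halfSign (w + t • (1 : ℂ))) = fun _ => halfSign w := by
        ext t; simp [halfSign]
      unfold HasLineDerivAt; rw [this]; exact hasDerivAt_const _ _)
    (fun w _ => (hP.differentiable (by simp) w).hasFDerivAt.hasLineDerivAt 1)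
  simpa using this

lemma halfSign_int_vertical {P : ℂ → ℝ} (hP : ContDiff ℝ (⊤ : ℕ∞) P) (hPc : HasCompactSupport P) :
    ∫ w, halfSign w * fderiv ℝ P w Complex.I = - 2 * ∫ x : ℝ, P x := by
  have h2 : Integrable (fun w => halfSign w * fderiv ℝ P w Complex.I) :=
    halfSign_mul_integrable ((contDiff_fderiv_apply hP _).continuous.integrable_of_hasCompactSupport
      (hcs_fderiv hPc _))
  have hmp := Complex.volume_preserving_equiv_real_prod.symm
  rw [← hmp.integral_comp' (fun w => halfSign w * fderiv ℝ P w Complex.I)]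
  have h3 : Integrable (fun z : ℝ × ℝ => halfSign (Complex.measurableEquivRealProd.symm z) *
      fderiv ℝ P (Complex.measurableEquivRealProd.symm z) Complex.I) (volume.prod volume) :=
    hmp.integrable_comp_of_integrable h2
  rw [Measure.volume_eq_prod, integral_prod _ h3, ← integral_const_mul]
  congr 1; ext x
  have hline : ∀ y : ℝ, Complex.measurableEquivRealProd.symm (x, y) = (x : ℂ) + y * Complex.I := by
    intro y; apply Complex.ext <;> simp
  simp_rw [hline]
  set q : ℝ → ℝ := fun y => P ((x : ℂ) + y * Complex.I) with hq
  have hlin : ∀ y : ℝ, HasDerivAt (fun y : ℝ => (x : ℂ) + y * Complex.I) Complex.I y := by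
    intro y
    have := ((Complex.ofRealCLM.hasDerivAt (x := y)).mul_const Complex.I).const_add (x : ℂ)
    simpa using this
  have hqd : ∀ y : ℝ, HasDerivAt q (fderiv ℝ P ((x : ℂ) + y * Complex.I) Complex.I) y := fun y =>
    (hP.differentiable (by simp) _).hasFDerivAt.comp_hasDerivAt y (hlin y)
  have hlc : ContDiff ℝ (⊤ : ℕ∞) (fun y : ℝ => (x : ℂ) + y * Complex.I) :=
    contDiff_const.add (Complex.ofRealCLM.contDiff.mul contDiff_const)
  have hqs : ContDiff ℝ (⊤ : ℕ∞) q := hP.comp hlc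
  have hqc : HasCompactSupport q := by
    refine hPc.comp_isClosedEmbedding (g := fun y : ℝ => (x : ℂ) + y * Complex.I) ?_
    refine Isometry.isClosedEmbedding (Isometry.of_dist_eq fun y z => ?_)
    rw [dist_eq_norm, dist_eq_norm]
    have : (x : ℂ) + y * Complex.I - (x + z * Complex.I) = ((y - z : ℝ) : ℂ) * Complex.I := by push_cast; ring
    rw [this, norm_mul, Complex.norm_real]; simp
  have hqi : Integrable (deriv q) :=
    (hqs.continuous_deriv (by simp)).integrable_of_hasCompactSupport hqc.deriv
  have e1 : ∀ y : ℝ, halfSign ((x : ℂ) + y * Complex.I) * fderiv ℝ P ((x : ℂ) + y * Complex.I) Complex.I =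
      (Ioi (0 : ℝ)).indicator (deriv q) y - (Iic (0 : ℝ)).indicator (deriv q) y := by
    intro y
    rw [← (hqd y).deriv]
    by_cases hy : 0 < y
    · simp [halfSign, hy]
    · simp [halfSign, hy, not_lt.1 hy]
  simp_rw [e1]
  rw [integral_sub (hqi.indicator measurableSet_Ioi) (hqi.indicator measurableSet_Iic),
    integral_indicator measurableSet_Ioi, integral_indicator measurableSet_Iic,
    hqc.integral_Ioi_deriv_eq (hqs.of_le (by exact_mod_cast le_top)),
    hqc.integral_Iic_deriv_eq (hqs.of_le (by exact_mod_cast le_top))]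
  simp [hq]; ring

/-- The differential of `Im w^m`. -/
lemma impow_deriv (m : ℕ) (w v : ℂ) :
    fderiv ℝ (fun w : ℂ => (w ^ m).im) w v = (m * w ^ (m - 1) * v).im := by
  have h1 := ((hasDerivAt_pow m w).hasFDerivAt.restrictScalars ℝ)
  have h2 : HasFDerivAt (fun w : ℂ => (w ^ m).im) _ w := Complex.imCLM.hasFDerivAt.comp w h1
  rw [h2.fderiv]; simp [mul_comm]

lemma impow_contDiff (m : ℕ) : ContDiff ℝ (⊤ : ℕ∞) (fun w : ℂ => (w ^ m).im) :=
  Complex.imCLM.contDiff.comp (contDiff_id.pow m)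

lemma impow_harmonic (m : ℕ) (w : ℂ) :
    fderiv ℝ (fun y => fderiv ℝ (fun w : ℂ => (w ^ m).im) y 1) w 1 +
      fderiv ℝ (fun y => fderiv ℝ (fun w : ℂ => (w ^ m).im) y Complex.I) w Complex.I = 0 := by
  simp_rw [impow_deriv]
  have h1 := fun v : ℂ => ((((hasDerivAt_pow (m - 1) w).const_mul (m : ℂ)).mul_const v).hasFDerivAt.restrictScalars ℝ)
  have h2 : ∀ v : ℂ, HasFDerivAt (fun y : ℂ => (m * y ^ (m - 1) * v).im) _ w :=
    fun v => Complex.imCLM.hasFDerivAt.comp w (h1 v)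
  rw [(h2 1).fderiv, (h2 Complex.I).fderiv]
  simp

/-- Green's formula on the two half-planes: `∫ |Im w^m| Δη = 2m ∫ η(x) x^{m-1} dx`, when `Im w^m` has
the sign of `Im w` on the support of `η`. -/
lemma kappa_formula {m : ℕ} {η : ℂ → ℝ} (hη : ContDiff ℝ (⊤ : ℕ∞) η) (hηc : HasCompactSupport η)
    (hs : ∀ w ∈ tsupport η, (0 ≤ w.im → 0 ≤ (w ^ m).im) ∧ (w.im ≤ 0 → (w ^ m).im ≤ 0)) :
    ∫ w, |(w ^ m).im| * lapF η w = 2 * ∫ x : ℝ, η x * (m * x ^ (m - 1)) := by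
  set g : ℂ → ℝ := fun w => (w ^ m).im with hg
  have hgs := impow_contDiff m
  -- the fields `g ∂η - η ∂g`
  let P : ℂ → ℂ → ℝ := fun v w => fderiv ℝ η w v * g w - fderiv ℝ g w v * η w
  have hPs : ∀ v, ContDiff ℝ (⊤ : ℕ∞) (P v) := fun v =>
    ((contDiff_fderiv_apply hη v).mul hgs).sub ((contDiff_fderiv_apply hgs v).mul hη)
  have hPc : ∀ v, HasCompactSupport (P v) := fun v =>
    (hcs_fderiv hηc v).mul_right.sub hηc.mul_left
  have hPd : ∀ v w, fderiv ℝ (P v) w v = fderiv ℝ (fun y => fderiv ℝ η y v) w v * g w -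
      fderiv ℝ (fun y => fderiv ℝ g y v) w v * η w := by
    intro v w
    have a1 := ((contDiff_fderiv_apply hη v).differentiable (by simp) w).hasFDerivAt
    have a2 := (hgs.differentiable (by simp) w).hasFDerivAt
    have a3 := ((contDiff_fderiv_apply hgs v).differentiable (by simp) w).hasFDerivAt
    have a4 := (hη.differentiable (by simp) w).hasFDerivAt
    have := (a1.mul a2).sub (a3.mul a4)
    rw [show fderiv ℝ (P v) w = _ from this.fderiv]
    simp [hg]; ring
  have key : ∀ w, |(w ^ m).im| * lapF η w =
      halfSign w * fderiv ℝ (P 1) w 1 + halfSign w * fderiv ℝ (P Complex.I) w Complex.I := by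
    intro w
    rw [hPd, hPd]
    have hh := impow_harmonic m w
    have h1 : |(w ^ m).im| * lapF η w = halfSign w * g w * lapF η w := by
      by_cases hw : w ∈ tsupport η
      · congr 1
        unfold halfSign
        split_ifs with h
        · rw [abs_of_nonneg ((hs w hw).1 h.le), one_mul]
        · rw [abs_of_nonpos ((hs w hw).2 (not_lt.1 h))]; simp [hg]
      · rw [image_eq_zero_of_notMem_tsupport fun h => hw (lapF_tsupport η h)]; simp
    rw [h1]
    unfold lapF
    linear_combination (halfSign w * η w) * hh
  have hi : ∀ v, Integrable (fun w => halfSign w * fderiv ℝ (P v) w v) := fun v =>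
    halfSign_mul_integrable ((contDiff_fderiv_apply (hPs v) v).continuous.integrable_of_hasCompactSupport
      (hcs_fderiv (hPc v) v))
  simp_rw [key]
  rw [integral_add (hi 1) (hi Complex.I), halfSign_int_horizontal (hPs 1) (hPc 1),
    halfSign_int_vertical (hPs _) (hPc _), zero_add, neg_mul, ← mul_neg, ← integral_neg]
  congr 2; ext x
  simp only [P]
  rw [impow_deriv]
  have : g (x : ℂ) = 0 := by
    simp only [hg]; rw [← Complex.ofReal_pow, Complex.ofReal_im]
  rw [this]
  have h2 : ((m : ℂ) * (x : ℂ) ^ (m - 1) * Complex.I).im = m * x ^ (m - 1) := by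
    rw [← Complex.ofReal_pow, ← Complex.ofReal_natCast, ← Complex.ofReal_mul, Complex.im_ofReal_mul]; simp
  rw [h2]; ring

/-- A bump near `1/2` on which `|Im w^m|` has positive distributional Laplacian. -/
lemma exists_bump {m : ℕ} (hm : 1 ≤ m) {R0 : ℝ} (hR : 0 < R0) (hR4 : R0 ≤ 1 / 4)
    (harg : ∀ w ∈ Metric.closedBall (1 / 2 : ℂ) R0, |w.arg| ≤ π / (2 * m)) :
    ∃ η : ℂ → ℝ, ContDiff ℝ (⊤ : ℕ∞) η ∧ HasCompactSupport η ∧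
      tsupport η ⊆ Metric.closedBall (1 / 2 : ℂ) R0 ∧ 0 < ∫ w, |(w ^ m).im| * lapF η w := by
  let β : ContDiffBump (1 / 2 : ℂ) := ⟨R0 / 2, R0, by positivity, by linarith⟩
  have hts : tsupport (β : ℂ → ℝ) ⊆ Metric.closedBall (1 / 2 : ℂ) R0 := β.tsupport_eq.le
  refine ⟨β, β.contDiff, β.hasCompactSupport, hts, ?_⟩
  rw [kappa_formula β.contDiff β.hasCompactSupport fun w hw => disk_sign hm (harg w (hts hw))]
  refine mul_pos two_pos ?_
  have hpos : ∀ x : ℝ, (β x : ℝ) ≠ 0 → 0 < x := by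
    intro x hx
    have h1 := hts (subset_tsupport _ hx)
    have h2 := (Complex.abs_re_le_norm ((x : ℂ) - 1 / 2)).trans (mem_closedBall_iff_norm.1 h1)
    have h3 : ((x : ℂ) - 1 / 2).re = x - 1 / 2 := by norm_num
    rw [h3] at h2
    linarith [(abs_le.1 h2).1]
  have hc : Continuous fun x : ℝ => β (x : ℂ) * (m * x ^ (m - 1)) :=
    (β.continuous.comp Complex.continuous_ofReal).mul (continuous_const.mul (continuous_pow _))
  refine hc.integral_pos_of_hasCompactSupport_nonneg_nonzero (x := 1 / 2) ?_ ?_ ?_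
  · refine HasCompactSupport.mul_right ?_
    exact β.hasCompactSupport.comp_isClosedEmbedding
      (Complex.isometry_ofReal.isClosedEmbedding)
  · intro x
    by_cases hx : (β (x : ℂ) : ℝ) = 0
    · simp [hx]
    · have := hpos x hx
      have := β.nonneg (x := (x : ℂ))
      simp only [Pi.zero_apply]; positivity
  · have : (β ((1 / 2 : ℝ) : ℂ) : ℝ) = 1 := by
      apply β.one_of_mem_closedBall
      simp [β]; linarith
    rw [this]
    have : (0 : ℝ) < m := by exact_mod_cast hm
    positivity

/-! ### The gain from the bump -/

lemma integral_cov {r : ℝ} (hr : 0 < r) {ω : ℂ} (hω : ‖ω‖ = 1) (b : ℂ) (F : ℂ → ℝ) :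
    ∫ x, F x = r ^ 2 * ∫ w, F (b + r * ω * w) := by
  have h1 : ∫ w, F (b + r * ω * w) = ∫ y, F (b + r * y) := by
    have hu : ω ∈ Submonoid.unitSphere ℂ := by simpa [Submonoid.unitSphere] using hω
    have := (rotation ⟨ω, hu⟩).measurePreserving.integral_comp'
      (f := (rotation ⟨ω, hu⟩).toMeasurableEquiv) (fun y => F (b + r * y))
    rw [← this]
    congr 1; ext w
    rw [mul_assoc]; rfl
  have h2 := Measure.integral_comp_smul (volume : Measure ℂ) (fun y => F (b + y)) r
  rw [integral_add_left_eq_self (fun y => F y) b, Complex.finrank_real_complex] at h2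
  rw [h1]
  simp only [Complex.real_smul, smul_eq_mul] at h2
  rw [h2, abs_of_pos (by positivity), ← mul_assoc, mul_inv_cancel₀ (by positivity), one_mul]

/-- The function `η` transplanted by the similarity `w ↦ b + σ⁻¹ w`. -/
def transplant (η : ℂ → ℝ) (b σ : ℂ) (x : ℂ) : ℝ := η ((x - b) * σ)

lemma transplant_contDiff {η : ℂ → ℝ} (hη : ContDiff ℝ (⊤ : ℕ∞) η) (b σ : ℂ) :
    ContDiff ℝ (⊤ : ℕ∞) (transplant η b σ) :=
  hη.comp ((contDiff_id.sub contDiff_const).mul contDiff_const)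

lemma transplant_fderiv {η : ℂ → ℝ} (hη : ContDiff ℝ (⊤ : ℕ∞) η) (b σ x v : ℂ) :
    fderiv ℝ (transplant η b σ) x v = fderiv ℝ η ((x - b) * σ) (v * σ) := by
  have h1 := ((hasFDerivAt_id (𝕜 := ℝ) x).sub_const b).mul_const σ
  have h2 := (hη.differentiable (by simp) ((x - b) * σ)).hasFDerivAt.comp x h1
  rw [show fderiv ℝ (transplant η b σ) x = _ from h2.fderiv]
  simp [mul_comm]

lemma second_fderiv {η : ℂ → ℝ} (hη : ContDiff ℝ (⊤ : ℕ∞) η) (x v w : ℂ) :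
    fderiv ℝ (fun y => fderiv ℝ η y v) x w = fderiv ℝ (fderiv ℝ η) x w v := by
  have h : DifferentiableAt ℝ (fderiv ℝ η) x :=
    (hη.fderiv_right (m := (⊤ : ℕ∞)) (by simp)).differentiable (by simp) x
  have := h.hasFDerivAt.clm_apply (hasFDerivAt_const v x)
  rw [this.fderiv]; simp

lemma transplant_lap {η : ℂ → ℝ} (hη : ContDiff ℝ (⊤ : ℕ∞) η) (b σ x : ℂ) :
    lapF (transplant η b σ) x = ‖σ‖ ^ 2 * lapF η ((x - b) * σ) := by
  have h1 : ∀ v : ℂ, fderiv ℝ (fun y => fderiv ℝ (transplant η b σ) y v) x v =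
      fderiv ℝ (fderiv ℝ η) ((x - b) * σ) (v * σ) (v * σ) := by
    intro v
    have : (fun y => fderiv ℝ (transplant η b σ) y v) =
        transplant (fun z => fderiv ℝ η z (v * σ)) b σ := by
      ext y; rw [transplant_fderiv hη]; rfl
    rw [this, transplant_fderiv (contDiff_fderiv_apply hη _), second_fderiv hη]
  unfold lapF
  rw [h1, h1, second_fderiv hη, second_fderiv hη]
  set H := fderiv ℝ (fderiv ℝ η) ((x - b) * σ)
  have e1 : (1 : ℂ) * σ = σ.re • (1 : ℂ) + σ.im • Complex.I := by apply Complex.ext <;> simp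
  have e2 : Complex.I * σ = (-σ.im) • (1 : ℂ) + σ.re • Complex.I := by apply Complex.ext <;> simp
  rw [e1, e2, ← Complex.normSq_eq_norm_sq, Complex.normSq_apply]
  simp only [map_add, map_smul, _root_.add_apply, _root_.smul_apply, smul_eq_mul]
  ring

section
variable {η : ℂ → ℝ} (hη : ContDiff ℝ (⊤ : ℕ∞) η) (hηc : HasCompactSupport η) {r : ℝ} (hr : 0 < r)
  {ω : ℂ} (hω : ‖ω‖ = 1) (b : ℂ)

include hr hω in
lemma transplant_apply (η : ℂ → ℝ) (w : ℂ) : transplant η b (r * ω)⁻¹ (b + r * ω * w) = η w := by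
  have h0 : (r : ℂ) * ω ≠ 0 :=
    mul_ne_zero (by exact_mod_cast hr.ne') (norm_ne_zero_iff.1 (by rw [hω]; norm_num))
  unfold transplant
  congr 1
  rw [add_sub_cancel_left, mul_comm, inv_mul_cancel_left₀ h0]

include hr hω in
lemma transplant_tsupport (η : ℂ → ℝ) : tsupport (transplant η b (r * ω)⁻¹) ⊆ (fun w => b + r * ω * w) '' tsupport η := by
  have h0 : (r : ℂ) * ω ≠ 0 :=
    mul_ne_zero (by exact_mod_cast hr.ne') (norm_ne_zero_iff.1 (by rw [hω]; norm_num))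
  have h1 : tsupport (transplant η b (r * ω)⁻¹) ⊆ (fun x => (x - b) * (r * ω)⁻¹) ⁻¹' tsupport η :=
    closure_minimal (fun x hx => subset_tsupport η hx)
      ((isClosed_tsupport η).preimage (by fun_prop))
  intro x hx
  refine ⟨_, h1 hx, ?_⟩
  show b + r * ω * ((x - b) * (r * ω)⁻¹) = x
  rw [mul_comm (x - b), mul_inv_cancel_left₀ h0]; ring

include hηc hr hω in
lemma transplant_hcs : HasCompactSupport (transplant η b (r * ω)⁻¹) :=
  (hηc.isCompact.image (by fun_prop)).of_isClosed_subset (isClosed_tsupport _) (transplant_tsupport hr hω b η)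

include hη hr hω in
lemma transplant_int_lap (F : ℂ → ℝ) : ∫ x, F x * lapF (transplant η b (r * ω)⁻¹) x =
    ∫ w, F (b + r * ω * w) * lapF η w := by
  rw [integral_cov hr hω b, ← integral_const_mul]
  congr 1; ext w
  have h : lapF η ((b + r * ω * w - b) * (r * ω)⁻¹) = lapF η w :=
    transplant_apply hr hω b (fun y => lapF η y) w
  rw [transplant_lap hη, h, norm_inv, norm_mul, hω, Complex.norm_real, Real.norm_eq_abs, abs_of_pos hr, mul_one]
  field_simp

include hη hηc hr hω in
lemma transplant_int_grad : ∫ x, gradP (transplant η b (r * ω)⁻¹) (transplant η b (r * ω)⁻¹) x =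
    - ∫ w, η w * lapF η w := by
  have hζ := transplant_contDiff hη b (r * ω)⁻¹
  rw [green_right isOpen_univ hζ.contDiffOn hζ (transplant_hcs hηc hr hω b) (subset_univ _)]
  simp only [smul_eq_mul]
  rw [transplant_int_lap hη hr hω b]
  congr 2; ext w
  rw [transplant_apply hr hω]

end

section
variable {η : ℂ → ℝ} (hη : ContDiff ℝ (⊤ : ℕ∞) η) (hηc : HasCompactSupport η) {R0 : ℝ}
  (hηs : tsupport η ⊆ Metric.closedBall (1 / 2 : ℂ) R0)

include hηs in
lemma bump_zero (w : ℂ) (hw : w ∉ Metric.closedBall (1 / 2 : ℂ) R0) : η w = 0 ∧ lapF η w = 0 :=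
  ⟨image_eq_zero_of_notMem_tsupport fun h => hw (hηs h),
    image_eq_zero_of_notMem_tsupport (f := fun w => lapF η w)
      fun h => hw (hηs (lapF_tsupport η h))⟩

include hη hηc hηs in
lemma bump_lap_bound {m : ℕ} {G : ℂ → ℝ} {A e : ℝ}
    (hG : ∀ w ∈ Metric.closedBall (1 / 2 : ℂ) R0, |G w - (A * |(w ^ m).im|)| ≤ e)
    (hGc : ContinuousOn G (Metric.closedBall (1 / 2 : ℂ) R0)) :
    |(∫ w, G w * lapF η w) - A * (∫ w, |(w ^ m).im| * lapF η w)| ≤ e * ∫ w, |lapF η w| := by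
  have hlapc := lapF_continuous hη
  have hiL : Integrable (fun w => |lapF η w|) :=
    (hlapc.integrable_of_hasCompactSupport (lapF_hcs hηc)).abs
  have i1 : Integrable (fun w => G w * lapF η w) := by
    refine (integrableOn_iff_integrable_of_support_subset
      (s := Metric.closedBall (1 / 2 : ℂ) R0) ?_).1 ?_
    · intro w hw
      by_contra h
      exact hw (by simp [(bump_zero hηs w h).2])
    · exact (hGc.mul hlapc.continuousOn).integrableOn_compact (isCompact_closedBall _ _)
  have i2 : Integrable (fun w => A * (|(w ^ m).im| * lapF η w)) := by
    refine Integrable.const_mul ?_ _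
    refine Continuous.integrable_of_hasCompactSupport ?_ (lapF_hcs hηc).mul_left
    exact ((impow_contDiff m).continuous.abs).mul hlapc
  rw [← integral_const_mul, ← integral_sub i1 i2, ← integral_const_mul, ← Real.norm_eq_abs]
  refine norm_integral_le_of_norm_le (hiL.const_mul e) (ae_of_all _ fun w => ?_)
  by_cases hw : w ∈ Metric.closedBall (1 / 2 : ℂ) R0
  · rw [show G w * lapF η w - A * (|(w ^ m).im| * lapF η w) =
      (G w - A * |(w ^ m).im|) * lapF η w by ring, norm_mul]
    exact mul_le_mul_of_nonneg_right (hG w hw) (norm_nonneg _)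
  · simp [(bump_zero hηs w hw).2]

include hη hηc hηs in
lemma bump_mass_bound {G P : ℂ → ℝ} {M B : ℝ} (hM : 0 ≤ M)
    (hG : ∀ w ∈ Metric.closedBall (1 / 2 : ℂ) R0, |G w| ≤ B)
    (hP : ∀ w ∈ Metric.closedBall (1 / 2 : ℂ) R0, 0 ≤ P w ∧ P w ≤ M) :
    |∫ w, P w * (G w * η w)| ≤ M * B * ∫ w, |η w| := by
  have hiη : Integrable (fun w => |η w|) := (hη.continuous.integrable_of_hasCompactSupport hηc).abs
  rw [← integral_const_mul, ← Real.norm_eq_abs]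
  refine norm_integral_le_of_norm_le (hiη.const_mul _) (ae_of_all _ fun w => ?_)
  by_cases hw : w ∈ Metric.closedBall (1 / 2 : ℂ) R0
  · rw [norm_mul, norm_mul, Real.norm_eq_abs, Real.norm_eq_abs, Real.norm_eq_abs,
      abs_of_nonneg (hP w hw).1, ← mul_assoc]
    refine mul_le_mul_of_nonneg_right ?_ (abs_nonneg _)
    exact mul_le_mul (hP w hw).2 (hG w hw) (abs_nonneg _) hM
  · simp [(bump_zero hηs w hw).1]

include hη hηc hηs in
lemma bump_sq_bound {P : ℂ → ℝ} {M : ℝ}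
    (hP : ∀ w ∈ Metric.closedBall (1 / 2 : ℂ) R0, 0 ≤ P w ∧ P w ≤ M) :
    0 ≤ ∫ w, P w * (η w * η w) ∧ ∫ w, P w * (η w * η w) ≤ M * ∫ w, η w * η w := by
  have hiηη : Integrable (fun w => η w * η w) :=
    (hη.continuous.mul hη.continuous).integrable_of_hasCompactSupport hηc.mul_left
  have h0 : ∀ w, 0 ≤ P w * (η w * η w) ∧ P w * (η w * η w) ≤ M * (η w * η w) := by
    intro w
    by_cases hw : w ∈ Metric.closedBall (1 / 2 : ℂ) R0
    · exact ⟨mul_nonneg (hP w hw).1 (mul_self_nonneg _),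
        mul_le_mul_of_nonneg_right (hP w hw).2 (mul_self_nonneg _)⟩
    · simp [(bump_zero hηs w hw).1]
  refine ⟨integral_nonneg fun w => (h0 w).1, ?_⟩
  rw [← integral_const_mul]
  exact integral_mono_of_nonneg (ae_of_all _ fun w => (h0 w).1) (hiηη.const_mul M)
    (ae_of_all _ fun w => (h0 w).2)

end

/-- The arithmetic behind `gain`; `y` stands for `r ^ m`. -/
lemma gain_arith {c c' κ A0 L1 I1 I2 lam M s e r y K1 K2 K3 G : ℝ} (hc : 0 < c) (hc' : |c'| = c)
    (hI1 : 0 ≤ I1) (hlam : 0 ≤ lam)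
    (hM : 0 ≤ M) (hs : 0 < s) (hr : 0 < r) (hr1 : r ≤ 1) (hy : 0 < y) (hy1 : y ≤ 1)
    (hsA : s * A0 ≤ κ) (heL : e * L1 ≤ c * κ / 8)
    (hrZ : r ^ 2 * (lam * M * (c + 1) * I1) ≤ c * κ / 8)
    (k1 : |K1 - y * c' * κ| ≤ e * y * L1)
    (k2 : |K2| ≤ r ^ 2 * (M * ((c + 1) * y) * I1))
    (k3 : 0 ≤ K3) (k3' : K3 ≤ M * I2) (k4 : G ≤ A0) :
    ((s * c' * y) ^ 2 * G - 2 * (s * c' * y) * K1) -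
          lam * ((s * c' * y) ^ 2 * K3 + 2 * (s * c' * y) * K2) ≤
      -(s * c ^ 2 * κ / 2) * y ^ 2 ∧
    (s * c' * y) ^ 2 * K3 + 2 * (s * c' * y) * K2 ≤
      s ^ 2 * c ^ 2 * (M * I2) + 2 * (s * c) * (M * (c + 1) * I1) := by
  have hc2 : c' ^ 2 = c ^ 2 := by rw [← hc', sq_abs]
  set t := s * c' * y with ht
  have ht2 : t ^ 2 = s ^ 2 * c ^ 2 * y ^ 2 := by rw [ht, mul_pow, mul_pow, hc2]
  have htabs : |t| = s * c * y := by
    rw [ht, abs_mul, abs_mul, hc', abs_of_pos hs, abs_of_pos hy]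
  have q1 : -(2 * t * (K1 - y * c' * κ)) ≤ 2 * (s * c * y) * (e * y * L1) := by
    refine (neg_le_abs _).trans ?_
    rw [abs_mul, abs_mul, htabs, abs_two]
    gcongr
  have q2 : |2 * t * K2| ≤ 2 * (s * c * y) * (r ^ 2 * (M * ((c + 1) * y) * I1)) := by
    rw [abs_mul, abs_mul, htabs, abs_two]
    gcongr
  have q3 : 2 * t * (y * c' * κ) = 2 * s * c ^ 2 * κ * y ^ 2 := by
    rw [ht, ← hc2]; ring
  have q4 : t ^ 2 * G ≤ s * c ^ 2 * κ * y ^ 2 := by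
    calc t ^ 2 * G ≤ t ^ 2 * A0 := by gcongr
      _ = (s * A0) * (s * c ^ 2 * y ^ 2) := by rw [ht2]; ring
      _ ≤ κ * (s * c ^ 2 * y ^ 2) := by gcongr
      _ = _ := by ring
  have q5 : 0 ≤ lam * (t ^ 2 * K3) := by positivity
  have q6 : lam * (-(2 * t * K2)) ≤ s * c * y ^ 2 * (c * κ / 4) := by
    calc lam * (-(2 * t * K2)) ≤
        lam * (2 * (s * c * y) * (r ^ 2 * (M * ((c + 1) * y) * I1))) := by
          exact mul_le_mul_of_nonneg_left ((neg_le_abs _).trans q2) hlam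
      _ = 2 * (s * c * y ^ 2) * (r ^ 2 * (lam * M * (c + 1) * I1)) := by ring
      _ ≤ 2 * (s * c * y ^ 2) * (c * κ / 8) := by gcongr
      _ = _ := by ring
  have q7 : 2 * (s * c * y) * (e * y * L1) ≤ s * c * y ^ 2 * (c * κ / 4) := by
    calc _ = 2 * (s * c * y ^ 2) * (e * L1) := by ring
      _ ≤ 2 * (s * c * y ^ 2) * (c * κ / 8) := by gcongr
      _ = _ := by ring
  constructor
  · linarith
  · have q8 := (le_abs_self _).trans q2
    have hy2 : y ^ 2 ≤ 1 := pow_le_one₀ hy.le hy1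
    have q9 : y ^ 2 * r ^ 2 ≤ 1 :=
      mul_le_one₀ hy2 (by positivity) (pow_le_one₀ hr.le hr1)
    have q10 : 2 * (s * c * y) * (r ^ 2 * (M * ((c + 1) * y) * I1)) ≤
        2 * (s * c) * (M * (c + 1) * I1) := by
      calc _ = 2 * (s * c) * (M * (c + 1) * I1) * (y ^ 2 * r ^ 2) := by ring
        _ ≤ 2 * (s * c) * (M * (c + 1) * I1) * 1 := by gcongr
        _ = _ := by ring
    have q11 : t ^ 2 * K3 ≤ s ^ 2 * c ^ 2 * (M * I2) := by
      rw [ht2]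
      calc _ ≤ s ^ 2 * c ^ 2 * 1 * (M * I2) := by gcongr
        _ = _ := by ring
    linarith

/-- The energy gained by adding the bump: for the right size `t = s c' r^m` of its coefficient the
quadratic form drops by an amount of order `r^{2m}`. -/
lemma gain {m : ℕ} (hm : 1 ≤ m) {R0 : ℝ} (hR : 0 < R0) (hR4 : R0 ≤ 1 / 4)
    (harg : ∀ w ∈ Metric.closedBall (1 / 2 : ℂ) R0, |w.arg| ≤ π / (2 * m)) {c lam M : ℝ} (hc : 0 < c)
    (hlam : 0 ≤ lam) (hM : 0 ≤ M) :
    ∃ (η : ℂ → ℝ) (e D N s r2 : ℝ), ContDiff ℝ (⊤ : ℕ∞) η ∧ HasCompactSupport η ∧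
      tsupport η ⊆ Metric.closedBall (1 / 2 : ℂ) R0 ∧ 0 < e ∧ 0 < D ∧ 0 ≤ N ∧ 0 < r2 ∧
      ∀ (r : ℝ) (ω b : ℂ) (c' : ℝ) (F p : ℂ → ℝ), 0 < r → r < r2 → ‖ω‖ = 1 → |c'| = c →
        (∀ w ∈ Metric.closedBall (1 / 2 : ℂ) R0,
          |F (b + r * ω * w) - r ^ m * (c' * |(w ^ m).im|)| ≤ e * r ^ m) →
        ContinuousOn (fun w => F (b + r * ω * w)) (Metric.closedBall (1 / 2 : ℂ) R0) →
        (∀ w ∈ Metric.closedBall (1 / 2 : ℂ) R0, 0 ≤ p (b + r * ω * w) ∧ p (b + r * ω * w) ≤ M) →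
        let ζ := transplant η b (r * ω)⁻¹
        let t := s * c' * r ^ m
        (t ^ 2 * (∫ x, gradP ζ ζ x) - 2 * t * ∫ x, F x * lapF ζ x) -
          lam * (t ^ 2 * (∫ x, p x * (ζ x * ζ x)) + 2 * t * ∫ x, p x * (F x * ζ x)) ≤ - D * r ^ (2 * m) ∧
        t ^ 2 * (∫ x, p x * (ζ x * ζ x)) + 2 * t * (∫ x, p x * (F x * ζ x)) ≤ N := by
  obtain ⟨η, hη, hηc, hηs, hκ⟩ := exists_bump hm hR hR4 harg
  set κ := ∫ w, |(w ^ m).im| * lapF η w with hκdef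
  set A0 : ℝ := |∫ w, η w * lapF η w| with hA0
  set L1 : ℝ := ∫ w, |lapF η w| with hL1
  set I1 : ℝ := ∫ w, |η w| with hI1
  set I2 : ℝ := ∫ w, η w * η w with hI2
  have hA0n : 0 ≤ A0 := abs_nonneg _
  have hL1n : 0 ≤ L1 := integral_nonneg fun w => abs_nonneg _
  have hI1n : 0 ≤ I1 := integral_nonneg fun w => abs_nonneg _
  have hI2n : 0 ≤ I2 := integral_nonneg fun w => mul_self_nonneg _
  set s := κ / (A0 + 1) with hs
  have hsp : 0 < s := by positivity
  have hsA : s * A0 ≤ κ := by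
    rw [hs, div_mul_eq_mul_div, div_le_iff₀ (by positivity)]; nlinarith
  set e := min 1 (c * κ / (8 * (L1 + 1))) with he
  have hep : 0 < e := lt_min one_pos (by positivity)
  have heL : e * L1 ≤ c * κ / 8 := by
    have h1 : e * (8 * (L1 + 1)) ≤ c * κ := (le_div_iff₀ (by positivity)).1 (min_le_right _ _)
    nlinarith
  set Z := lam * M * (c + 1) * I1 with hZ
  have hZn : 0 ≤ Z := by positivity
  set r2 := min 1 (c * κ / (8 * (Z + 1))) with hr2
  have hr2p : 0 < r2 := lt_min one_pos (by positivity)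
  refine ⟨η, e, s * c ^ 2 * κ / 2, s ^ 2 * c ^ 2 * (M * I2) + 2 * (s * c) * (M * (c + 1) * I1), s, r2,
    hη, hηc, hηs, hep, by positivity, by positivity, hr2p, ?_⟩
  intro r ω b c' F p hr hrr hω hc' hF hFc hp ζ t
  have hr1 : r ≤ 1 := hrr.le.trans (min_le_left _ _)
  have hrZ : r ^ 2 * Z ≤ c * κ / 8 := by
    have h1 : r2 * (8 * (Z + 1)) ≤ c * κ := (le_div_iff₀ (by positivity)).1 (min_le_right _ _)
    have h2 : r ^ 2 ≤ r2 := by nlinarith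
    nlinarith
  have hrm : 0 < r ^ m := by positivity
  have hrm1 : r ^ m ≤ 1 := pow_le_one₀ hr.le hr1
  -- size of `F` on the disk
  have hFb : ∀ w ∈ Metric.closedBall (1 / 2 : ℂ) R0, |F (b + r * ω * w)| ≤ (c + 1) * r ^ m := by
    intro w hw
    have h1 := hF w hw
    have h2 : |(w ^ m).im| ≤ 1 := by
      refine (Complex.abs_im_le_norm _).trans ?_
      rw [norm_pow]
      exact pow_le_one₀ (norm_nonneg _) ((disk_norm hR4 hw).2.trans (by norm_num))
    have h3 : |r ^ m * (c' * |(w ^ m).im|)| ≤ c * r ^ m := by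
      rw [abs_mul, abs_mul, hc', abs_abs, abs_of_pos hrm]
      nlinarith [mul_le_mul_of_nonneg_left h2 (mul_pos hc hrm).le]
    have h4 := abs_add_le (F (b + r * ω * w) - r ^ m * (c' * |(w ^ m).im|)) (r ^ m * (c' * |(w ^ m).im|))
    rw [sub_add_cancel] at h4
    have h5 : e ≤ 1 := min_le_left _ _
    nlinarith
  have k1 := bump_lap_bound (m := m) (A := r ^ m * c') (e := e * r ^ m) hη hηc hηs
    (G := fun w => F (b + r * ω * w)) (fun w hw => by rw [mul_assoc (r ^ m)]; exact hF w hw) hFc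
  rw [← transplant_int_lap hη hr hω b F] at k1
  have k2 := bump_mass_bound hη hηc hηs hM hFb hp
  have k2e : ∫ x, p x * (F x * ζ x) =
      r ^ 2 * ∫ w, p (b + r * ω * w) * (F (b + r * ω * w) * η w) := by
    rw [integral_cov hr hω b]
    simp_rw [show ∀ w, ζ (b + r * ω * w) = η w from transplant_apply hr hω b η]
  have k2' : |∫ x, p x * (F x * ζ x)| ≤ r ^ 2 * (M * ((c + 1) * r ^ m) * I1) := by
    rw [k2e, abs_mul, abs_of_pos (by positivity : 0 < r ^ 2)]
    exact mul_le_mul_of_nonneg_left k2 (by positivity)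
  have k3 := bump_sq_bound hη hηc hηs hp
  have k3e : ∫ x, p x * (ζ x * ζ x) = r ^ 2 * ∫ w, p (b + r * ω * w) * (η w * η w) := by
    rw [integral_cov hr hω b]
    simp_rw [show ∀ w, ζ (b + r * ω * w) = η w from transplant_apply hr hω b η]
  have k30 : 0 ≤ ∫ x, p x * (ζ x * ζ x) := by
    rw [k3e]; exact mul_nonneg (by positivity) k3.1
  have k31 : ∫ x, p x * (ζ x * ζ x) ≤ M * I2 := by
    rw [k3e]
    exact (mul_le_of_le_one_left k3.1 (pow_le_one₀ hr.le hr1)).trans k3.2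
  have k4 : ∫ x, gradP ζ ζ x ≤ A0 := by
    rw [transplant_int_grad hη hηc hr hω b]
    exact neg_le_abs _
  have := gain_arith hc hc' hI1n hlam hM hsp hr hr1 hrm hrm1 hsA heL hrZ k1 k2'
    k30 k31 k4
  rw [← pow_mul, mul_comm m 2] at this
  exact this

/-! ### Min-max, absorption, and the curve -/

/-- Min-max in the form used below: a linear family of test functions, parametrised by `V × ℂ` with
`dim V = k - 1`, on which the form `q - lam n` is negative definite and `q ≤ Λ n`, gives
`λ_k^a ≤ Λ`. -/
lemma eigenvalueAB_le {Ω : Set ℂ} (hΩ : IsOpen Ω) (hΩbd : Bornology.IsBounded Ω) {p : ℂ → ℝ}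
    (hp : ContinuousOn p (closure Ω)) (hppos : ∀ x ∈ Ω, 0 < p x) {k : ℕ} (hk : 2 ≤ k) {a : ℂ}
    {V : Submodule ℂ (ℂ → ℂ)} (hV : Module.finrank ℂ V = k - 1) (T : (V × ℂ) →ₗ[ℂ] (ℂ → ℂ))
    (hT : ∀ x, IsTest (Ω \ {a}) (T x)) {lam Λ : ℝ}
    (hneg : ∀ x, x ≠ 0 → (∫ y in Ω, mgSq a (T x) y) - lam * mass Ω p (T x) < 0)
    (hle : ∀ x, x ≠ 0 → (∫ y in Ω, mgSq a (T x) y) ≤ Λ * mass Ω p (T x)) :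
    eigenvalueAB Ω p a k ≤ Λ := by
  have hfin : Module.Finite ℂ V := Module.finite_of_finrank_pos (by omega)
  have hinj : Function.Injective T := by
    rw [← LinearMap.ker_eq_bot, LinearMap.ker_eq_bot']
    intro x hx
    by_contra h0
    have h := hneg x h0
    rw [hx] at h
    have e1 : ∀ y, mgSq a (0 : ℂ → ℂ) y = 0 := by
      intro y
      simp [mgSq, mg1, mg2, pd1, pd2]
    have e2 : mass Ω p (0 : ℂ → ℂ) = 0 := by simp [mass]
    simp [e1, e2] at h
  unfold eigenvalueAB
  refine csInf_le_of_le ⟨0, ?_⟩ ⟨LinearMap.range T, ?_, ?_, rfl⟩ ?_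
  · rintro t ⟨W, -, -, rfl⟩
    refine Real.sSup_nonneg ?_
    rintro s ⟨u, -, -, rfl⟩
    refine div_nonneg (integral_nonneg fun y => ?_) (mass_nonneg hΩ hppos u)
    simp only [mgSq]; positivity
  · rw [LinearMap.finrank_range_of_inj hinj, Module.finrank_prod, hV, Module.finrank_self]
    omega
  · rintro u ⟨x, rfl⟩
    exact hT x
  · refine csSup_le ?_ ?_
    · have hne : ((0, 1) : V × ℂ) ≠ 0 := by simp
      exact ⟨_, T (0, 1), ⟨_, rfl⟩, fun h => hne (hinj (h.trans (map_zero T).symm)), rfl⟩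
    · rintro s ⟨u, ⟨x, rfl⟩, hu, rfl⟩
      have hx : x ≠ 0 := fun h => hu (by rw [h, map_zero])
      have ht := hT x
      have hm := mass_pos hΩ hΩbd hp hppos (u := T x)
        ⟨ht.1, ht.2.1, ht.2.2.trans sdiff_subset⟩ hu
      exact (div_le_iff₀ hm).2 (hle x hx)

/-- Absorption of the error terms. Here `N` is the mass of the low-energy part, `x` the modulus of
the coefficient of the eigenfunction, `y = r ^ h`, and `θ y` the truncation level. -/
lemma absorb {d D C B : ℝ} (hd : 0 < d) (hD : 0 < D) (hC : 0 ≤ C) {N' : ℝ}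
    (hN' : 0 ≤ N') {e : ℝ} (he : 0 < e) :
    ∃ θ > 0, θ ≤ e ∧ ∃ C' > 0, ∀ (N x y q n lam : ℝ), 0 ≤ N → 0 ≤ x → 0 < y → y ≤ 1 →
      q - lam * n ≤ -d * N + x ^ 2 * (C * (θ * y)) + 4 * x * (θ * y) * (B * √N) - x ^ 2 * (D * y) →
      n ≤ 2 * N + x ^ 2 * N' →
      q ≤ (lam - C' * y) * n ∧ ((0 < N ∨ 0 < x) → q - lam * n < 0) := by
  set E := C + 8 * B ^ 2 / d with hE
  have hEn : 0 ≤ E := by positivity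
  refine ⟨min (min 1 e) (D / (2 * (E + 1))), by positivity, (min_le_left _ _).trans (min_le_right _ _),
    min (d / 4) (D / (2 * (N' + 1))), by positivity, ?_⟩
  intro N x y q n lam hN hx hy hy1 hq hn
  set θ := min (min 1 e) (D / (2 * (E + 1)))
  set C' := min (d / 4) (D / (2 * (N' + 1)))
  have hθ : 0 < θ := by positivity
  have hθ1 : θ ≤ 1 := (min_le_left _ _).trans (min_le_left _ _)
  have hC' : 0 < C' := by positivity
  have hθE : θ * E ≤ D / 2 := by
    have h1 : θ * (2 * (E + 1)) ≤ D := (le_div_iff₀ (by positivity)).1 (min_le_right _ _)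
    linarith
  have hCd : C' ≤ d / 4 := min_le_left _ _
  have hCN : C' * N' ≤ D / 2 := by
    have h1 : C' * (2 * (N' + 1)) ≤ D := (le_div_iff₀ (by positivity)).1 (min_le_right _ _)
    linarith
  have hs : √N ^ 2 = N := Real.sq_sqrt hN
  -- the cross term, by Young's inequality
  have h1 : 4 * x * (θ * y) * (B * √N) ≤ d / 2 * N + 8 * B ^ 2 / d * (θ * y) ^ 2 * x ^ 2 := by
    have : 0 ≤ d / 2 * (√N - 4 * x * (θ * y) * B / d) ^ 2 := by positivity
    have e1 : d / 2 * (√N - 4 * x * (θ * y) * B / d) ^ 2 =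
        d / 2 * √N ^ 2 - 4 * x * (θ * y) * (B * √N) + 8 * B ^ 2 / d * (θ * y) ^ 2 * x ^ 2 := by
      field_simp; ring
    rw [e1, hs] at this
    linarith
  have h2 : (θ * y) ^ 2 ≤ θ * y := by
    have : θ * y ≤ 1 := mul_le_one₀ hθ1 hy.le hy1
    nlinarith [mul_pos hθ hy]
  have h3 : 8 * B ^ 2 / d * (θ * y) ^ 2 * x ^ 2 ≤ 8 * B ^ 2 / d * (θ * y) * x ^ 2 := by gcongr
  have h4 : x ^ 2 * (C * (θ * y)) + 8 * B ^ 2 / d * (θ * y) * x ^ 2 ≤ D / 2 * y * x ^ 2 := by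
    calc _ = (θ * E) * (y * x ^ 2) := by rw [hE]; ring
      _ ≤ D / 2 * (y * x ^ 2) := by gcongr
      _ = _ := by ring
  have h5 : q - lam * n ≤ -(d / 2) * N - D / 2 * y * x ^ 2 := by linarith
  constructor
  · have h6 : C' * y * n ≤ C' * y * (2 * N + x ^ 2 * N') := by gcongr
    have h7 : C' * y * (2 * N) ≤ d / 2 * N := by
      calc C' * y * (2 * N) ≤ (d / 4) * 1 * (2 * N) := by gcongr
        _ = _ := by ring
    have h8 : (C' * N') * (y * x ^ 2) ≤ D / 2 * (y * x ^ 2) := by gcongr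
    linarith
  · rintro (h | h)
    · have : 0 ≤ D / 2 * y * x ^ 2 := by positivity
      nlinarith
    · have : 0 < D / 2 * y * x ^ 2 := by positivity
      nlinarith

/-- The signed truncated eigenfunction stays close to the leading profile. -/
lemma disk_value {O D : Set ℂ} {a x : ℂ} {S Q : ℂ → ℂ} (haD : a ∉ D)
    (hS2 : ∀ x ∈ O, S x ^ 2 = x - a) (hQ2 : ∀ x ∈ D, Q x ^ 2 = x - a) {f φ : ℂ → ℝ} {z e1 e2 : ℝ}
    (hxD : x ∈ D) (h0 : x ∉ O → φ x = 0 ∧ f x = 0)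
    (hest : ‖S x / Q x * (φ x : ℂ) - (z : ℂ)‖ ≤ e1) (hf : |f x - φ x| ≤ e2) :
    |relSign S Q x * f x - z| ≤ e1 + e2 := by
  by_cases hx : x ∈ O
  · obtain ⟨h1, h2⟩ := relSign_spec haD hS2 hQ2 hx hxD
    have hQ0 : Q x ≠ 0 := by
      intro h
      have := hQ2 x hxD
      rw [h] at this
      exact haD (by rwa [← sub_eq_zero.1 (this.symm.trans (by norm_num) : x - a = 0)])
    have h3 : S x / Q x = (relSign S Q x : ℂ) := by
      rw [div_eq_iff hQ0, ← h2]
    rw [h3] at hest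
    have h4 : |relSign S Q x * φ x - z| ≤ e1 := by
      rw [← Real.norm_eq_abs, ← Complex.norm_real]
      push_cast; exact hest
    have h5 : |relSign S Q x * (f x - φ x)| ≤ e2 := by
      have h6 : |relSign S Q x| = 1 := by
        rcases sq_eq_one_iff.1 h1 with h | h <;> simp [h]
      rwa [abs_mul, h6, one_mul]
    calc |relSign S Q x * f x - z| =
        |(relSign S Q x * φ x - z) + relSign S Q x * (f x - φ x)| := by congr 1; ring
      _ ≤ _ := (abs_add_le _ _).trans (add_le_add h4 h5)
  · obtain ⟨h1, h2⟩ := h0 hx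
    rw [h1] at hest
    rw [h2]
    have h3 : |0 - z| ≤ e1 := by
      rw [← Real.norm_eq_abs, ← Complex.norm_real]
      push_cast
      simpa using hest
    have : 0 ≤ e2 := (abs_nonneg _).trans hf
    rw [mul_zero]; linarith

/-- A point of the curve close to the endpoint `b` cuts off a piece of the curve that avoids `K`. -/
lemma curve_avoids {Ω K : Set ℂ} (hΩ : IsOpen Ω) (hK : IsCompact K) (hKΩ : K ⊆ Ω) {b : ℂ}
    (hb : b ∈ frontier Ω) {γ : ℝ → ℂ} (hγ : ContinuousOn γ (Icc 0 1)) (hγ0 : γ 0 = b)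
    (hγΩ : ∀ t ∈ Ioc (0 : ℝ) 1, γ t ∈ Ω) :
    ∃ δ > 0, Disjoint K (Metric.ball b δ) ∧
      ∀ t ∈ Icc (0 : ℝ) 1, dist (γ t) b < δ → ∀ s ∈ Icc 0 t, γ s ∉ K := by
  have hbΩ : b ∉ Ω := fun h => by
    rw [hΩ.frontier_eq] at hb; exact hb.2 h
  have hbK : b ∉ K := fun h => hbΩ (hKΩ h)
  obtain ⟨δ1, hδ1, hB⟩ := Metric.isOpen_iff.1 hK.isClosed.isOpen_compl b hbK
  have h0 : ∃ t1 > 0, ∀ s ∈ Icc (0 : ℝ) 1, s < t1 → γ s ∉ K := by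
    have hc := hγ 0 (by simp)
    obtain ⟨t1, ht1, h⟩ := Metric.continuousWithinAt_iff.1 hc δ1 hδ1
    refine ⟨t1, ht1, fun s hs hst => ?_⟩
    refine hB ?_
    have := h hs (by rw [Real.dist_eq, sub_zero, abs_of_nonneg hs.1]; exact hst)
    rwa [hγ0] at this
  obtain ⟨t1, ht1, h0⟩ := h0
  have h2 : ∃ δ2 > 0, ∀ t ∈ Icc (0 : ℝ) 1, t1 ≤ t → δ2 ≤ dist (γ t) b := by
    rcases (Icc t1 1).eq_empty_or_nonempty with he | hne
    · refine ⟨1, one_pos, fun t ht h => ?_⟩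
      exact absurd (he ▸ (⟨h, ht.2⟩ : t ∈ Icc t1 1)) (notMem_empty t)
    · obtain ⟨t, ht, hmin⟩ := isCompact_Icc.exists_isMinOn hne
        (f := fun t => dist (γ t) b)
        ((continuous_id.dist continuous_const).comp_continuousOn
          (hγ.mono (Icc_subset_Icc_left ht1.le)))
      refine ⟨dist (γ t) b, dist_pos.2 fun h => hbΩ (h ▸ hγΩ t ⟨ht1.trans_le ht.1, ht.2⟩), ?_⟩
      intro s hs hst
      exact hmin ⟨hst, hs.2⟩
  obtain ⟨δ2, hδ2, h2⟩ := h2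
  refine ⟨min δ1 δ2, lt_min hδ1 hδ2, ?_, ?_⟩
  · rw [disjoint_right]
    intro x hx hxK
    exact hB (Metric.ball_subset_ball (min_le_left _ _) hx) hxK
  · intro t ht hd s hs
    have htt : t < t1 := by
      by_contra h
      push Not at h
      exact absurd (h2 t ht h) (not_le.2 (hd.trans_le (min_le_right _ _)))
    exact h0 s ⟨hs.1, hs.2.trans ht.2⟩ (hs.2.trans_lt htt)

lemma mass_comb_le {Ω : Set ℂ} (hΩ : IsOpen Ω) (hΩbd : Bornology.IsBounded Ω) {p : ℂ → ℝ}
    (hp : ContinuousOn p (closure Ω)) (hppos : ∀ x ∈ Ω, 0 < p x) {v : ℂ → ℂ} (hv : Continuous v)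
    {f φ : ℂ → ℝ} (hφ : ContinuousOn φ (closure Ω)) (hf : ∀ x ∈ Ω, |f x| ≤ |φ x|) (c : ℂ) :
    mass Ω p (fun y => v y + c * (f y : ℂ)) ≤
      2 * mass Ω p v + ‖c‖ ^ 2 * (2 * ∫ x in Ω, p x * φ x ^ 2) := by
  have i1 : IntegrableOn (fun x => 2 * (p x * ‖v x‖ ^ 2)) Ω := (mass_integrable hΩbd hp hv).const_mul 2
  have i2 : IntegrableOn (fun x => ‖c‖ ^ 2 * (2 * (p x * φ x ^ 2))) Ω :=
    ((integrableOn_of_closure hΩbd (hp.mul (hφ.pow 2))).const_mul 2).const_mul _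
  have e : 2 * mass Ω p v + ‖c‖ ^ 2 * (2 * ∫ x in Ω, p x * φ x ^ 2) =
      ∫ x in Ω, (2 * (p x * ‖v x‖ ^ 2) + ‖c‖ ^ 2 * (2 * (p x * φ x ^ 2))) := by
    rw [integral_add i1 i2, integral_const_mul, integral_const_mul, integral_const_mul]; rfl
  rw [e]
  refine integral_mono_of_nonneg ?_ (i1.add i2) ?_
  · filter_upwards [ae_restrict_mem hΩ.measurableSet] with x hx
    have := hppos x hx
    show 0 ≤ p x * ‖v x + c * (f x : ℂ)‖ ^ 2
    positivity
  · filter_upwards [ae_restrict_mem hΩ.measurableSet] with x hx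
    have hpx := hppos x hx
    show p x * ‖v x + c * (f x : ℂ)‖ ^ 2 ≤ 2 * (p x * ‖v x‖ ^ 2) + ‖c‖ ^ 2 * (2 * (p x * φ x ^ 2))
    have h1 : ‖v x + c * (f x : ℂ)‖ ≤ ‖v x‖ + ‖c‖ * |φ x| := by
      refine (norm_add_le _ _).trans ?_
      rw [norm_mul, Complex.norm_real, Real.norm_eq_abs]
      exact add_le_add le_rfl (mul_le_mul_of_nonneg_left (hf x hx) (norm_nonneg _))
    have h2 : ‖v x + c * (f x : ℂ)‖ ^ 2 ≤ 2 * ‖v x‖ ^ 2 + 2 * (‖c‖ ^ 2 * φ x ^ 2) := by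
      calc _ ≤ (‖v x‖ + ‖c‖ * |φ x|) ^ 2 := by gcongr
        _ ≤ 2 * (‖v x‖ ^ 2 + (‖c‖ * |φ x|) ^ 2) := add_sq_le
        _ = _ := by rw [mul_pow, sq_abs]; ring
    calc _ ≤ p x * (2 * ‖v x‖ ^ 2 + 2 * (‖c‖ ^ 2 * φ x ^ 2)) := by gcongr
      _ = _ := by ring

/-- The family of trial functions as a linear map in `(v, c)`. -/
def trialMap (V : Submodule ℂ (ℂ → ℂ)) (S Q : ℂ → ℂ) (f ζ : ℂ → ℝ) (t : ℝ) :
    (V × ℂ) →ₗ[ℂ] (ℂ → ℂ) where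
  toFun x := trial S Q x.1 f ζ x.2 t
  map_add' x y := by
    ext z; simp [trial]; ring
  map_smul' α x := by
    ext z; simp [trial]; ring

/-! ### Conclusion -/

/-- The form `q - lam n` and the mass of a trial function, bounded in terms of the mass of its
low-energy part and of the gain produced by the bump. -/
lemma trial_form {O D Ω : Set ℂ} {a : ℂ} {S Q : ℂ → ℂ} (hO : IsOpen O) (hD : IsOpen D) (haO : a ∉ O)
    (haD : a ∉ D) (hS : ContinuousOn S O) (hS2 : ∀ x ∈ O, S x ^ 2 = x - a) (hQ : ContinuousOn Q D)
    (hQ2 : ∀ x ∈ D, Q x ^ 2 = x - a) (hΩ : IsOpen Ω) (hΩbd : Bornology.IsBounded Ω) {p : ℂ → ℝ}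
    (hp : ContinuousOn p (closure Ω)) (hppos : ∀ x ∈ Ω, 0 < p x) {lam : ℝ} {φ : ℂ → ℝ}
    (hφ : IsDirichletEigenfunction Ω p lam φ) {f ζ : ℂ → ℝ} (hf : ContDiff ℝ (⊤ : ℕ∞) f)
    (hfc : HasCompactSupport f) (hfO : tsupport f ⊆ O) (hOΩ : O ⊆ Ω) {v : ℂ → ℂ} (hv : IsTest Ω v)
    (hvO : tsupport v ⊆ O) (hζ : ContDiff ℝ (⊤ : ℕ∞) ζ) (hζc : HasCompactSupport ζ)
    (hζD : tsupport ζ ⊆ D) (hζΩ : tsupport ζ ⊆ Ω) (hdisj : Disjoint (tsupport v) (tsupport ζ))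
    {ε A B μ Y N : ℝ} (hε : 0 ≤ ε) (hfφ : ∀ x ∈ Ω, |f x - φ x| ≤ 2 * ε)
    (hfle : ∀ x ∈ Ω, |f x| ≤ |φ x|)
    (hfA : (∫ x, gradP f f x) - lam * ∫ x in Ω, p x * f x ^ 2 ≤ A)
    (hB : ∫ x in Ω, ‖waveOp p lam v x‖ ≤ B) (hμ : ∫ x in Ω, gradSqC v x ≤ μ * mass Ω p v) {t : ℝ}
    (hgain : (t ^ 2 * (∫ x, gradP ζ ζ x) - 2 * t * ∫ x, relSign S Q x * f x * lapF ζ x) -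
      lam * (t ^ 2 * (∫ x, p x * (ζ x * ζ x)) + 2 * t * ∫ x, p x * (relSign S Q x * f x * ζ x)) ≤ -Y)
    (hN : t ^ 2 * (∫ x, p x * (ζ x * ζ x)) + 2 * t * (∫ x, p x * (relSign S Q x * f x * ζ x)) ≤ N)
    (c : ℂ) :
    (∫ y in Ω, mgSq a (trial S Q v f ζ c t) y) - lam * mass Ω p (trial S Q v f ζ c t) ≤
      -(lam - μ) * mass Ω p v + ‖c‖ ^ 2 * A + 4 * ‖c‖ * ε * B - ‖c‖ ^ 2 * Y ∧
    mass Ω p (trial S Q v f ζ c t) ≤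
      2 * mass Ω p v + ‖c‖ ^ 2 * (2 * (∫ x in Ω, p x * φ x ^ 2) + N) := by
  obtain ⟨h1, h2⟩ := trial_energy hO hD haO haD hS hS2 hQ hQ2 hf hfO hv.1 hvO hζ hζc hζD hdisj c t
    hΩbd hp hζΩ
  have z0 : ∀ x ∉ tsupport ζ, ζ x = 0 := fun x hx => image_eq_zero_of_notMem_tsupport hx
  rw [setInt_of_tsupport (g := fun x => p x * (ζ x * ζ x)) hζΩ fun x hx => by simp [z0 x hx],
    setInt_of_tsupport (g := fun x => p x * (relSign S Q x * f x * ζ x)) hζΩ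
      fun x hx => by simp [z0 x hx]] at h2
  have h3 := base_estimate hΩ hΩbd hp hφ hv hf hfc (hfO.trans hOΩ) hfφ hfA hB hε c
  have h4 := mass_comb_le hΩ hΩbd hp hppos hv.1.continuous hφ.2.2.1 hfle c
  have h5 := mul_le_mul_of_nonneg_left hgain (sq_nonneg ‖c‖)
  have h6 := mul_le_mul_of_nonneg_left hN (sq_nonneg ‖c‖)
  rw [h1, h2]
  constructor
  · linarith
  · linarith

/-- The bound with `h = 2m`, for a weight that is only continuous up to the boundary. -/
theorem main_bound
    (Ω : Set ℂ) (hΩopen : IsOpen Ω) (hΩbd : Bornology.IsBounded Ω)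
    (hΩsc : SimplyConnectedSpace Ω) (hΩbdry : HasSmoothBoundary Ω)
    (p : ℂ → ℝ) (hp : ContinuousOn p (closure Ω)) (hppos : ∀ x ∈ Ω, 0 < p x)
    (k : ℕ) (hk : 2 ≤ k)
    (hgap : eigenvalueND Ω p (k - 1) < eigenvalueND Ω p k)
    (φ : ℂ → ℝ) (hφ : IsDirichletEigenfunction Ω p (eigenvalueND Ω p k) φ)
    (b : ℂ) (hb : b ∈ frontier Ω) (m : ℕ) (hm : 2 ≤ m)
    (hzero : HasBoundaryZero Ω φ b m)
    (γ : ℝ → ℂ) (hγcont : ContinuousOn γ (Set.Icc 0 1)) (hγ0 : γ 0 = b)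
    (hγΩ : ∀ t ∈ Set.Ioc (0 : ℝ) 1, γ t ∈ Ω)
    (hγnodal : ∀ t ∈ Set.Icc (0 : ℝ) 1, φ (γ t) = 0) :
    ∃ C > (0 : ℝ), ∃ δ > (0 : ℝ), ∀ t ∈ Set.Icc (0 : ℝ) 1,
      γ t ≠ b → dist (γ t) b < δ →
        eigenvalueAB Ω p (γ t) k ≤ eigenvalueND Ω p k - C * dist (γ t) b ^ (2 * m) := by
  set lam := eigenvalueND Ω p k with hlam
  have hlam0 : 0 ≤ lam := eigenvalueND_nonneg hΩopen hppos k
  have hcl : IsCompact (closure Ω) := hΩbd.isCompact_closure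
  obtain ⟨M, hM0, hM⟩ : ∃ M, 0 ≤ M ∧ ∀ x ∈ closure Ω, p x ≤ M := by
    obtain ⟨M, hM⟩ := hcl.bddAbove_image hp
    exact ⟨max M 0, le_max_right _ _, fun x hx => (hM ⟨x, hx, rfl⟩).trans (le_max_left _ _)⟩
  obtain ⟨V, K, μ, B, hVf, hVt, hK, hKΩ, hμ, hB0, hV⟩ := low_space hΩopen hΩbd hp hppos hk hgap
  obtain ⟨CT, hCT, htr⟩ := truncation hΩopen hΩbd hp hlam0 hφ
  obtain ⟨R0, hR0, hR4, harg, c, hc, hsign⟩ := sign_structure hΩopen hΩsc hΩbdry hp hφ hb hm hzero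
  obtain ⟨η, e, D, N, s, r2, hη, hηc, hηs, he, hD, hN, hr2, hgain⟩ :=
    gain (m := m) (by omega) hR0 hR4 harg hc hlam0 hM0
  obtain ⟨r1, hr1, hsign⟩ := hsign (e / 2) (by positivity)
  set P0 := ∫ x in Ω, p x * φ x ^ 2
  have hP0 : 0 ≤ P0 := setIntegral_nonneg hΩopen.measurableSet fun x hx =>
    mul_nonneg (hppos x hx).le (sq_nonneg _)
  obtain ⟨θ, hθ, hθe, C', hC', habs⟩ := absorb (B := B) (sub_pos.2 hμ) hD hCT
    (N' := 2 * P0 + N) (by positivity) (e := e / 4) (by positivity)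
  obtain ⟨δ, hδ, hKδ, hav⟩ := curve_avoids hΩopen hK hKΩ hb hγcont hγ0 hγΩ
  refine ⟨C', hC', min (min r1 r2) (min δ 1), by positivity, ?_⟩
  intro t0 ht0 hne hdist
  rw [dist_eq_norm] at hdist ⊢
  set a := γ t0 with ha
  set r := ‖a - b‖ with hr
  have hr0 : 0 < r := norm_pos_iff.2 (sub_ne_zero.2 hne)
  have hrr1 : r < r1 := hdist.trans_le ((min_le_left _ _).trans (min_le_left _ _))
  have hrr2 : r < r2 := hdist.trans_le ((min_le_left _ _).trans (min_le_right _ _))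
  have hrδ : r < δ := hdist.trans_le ((min_le_right _ _).trans (min_le_left _ _))
  have hr1' : r ≤ 1 := (hdist.trans_le ((min_le_right _ _).trans (min_le_right _ _))).le
  have hsub : Icc 0 t0 ⊆ Icc (0 : ℝ) 1 := Icc_subset_Icc_right ht0.2
  obtain ⟨S, Q, ω, c', hω, hc', hS, hS2, hQ, hQ2, hdisk⟩ := hsign γ t0 ht0.1 (hγcont.mono hsub) hγ0
    (fun t ht => ⟨hγΩ t ⟨ht.1, ht.2.trans ht0.2⟩, hγnodal t ⟨ht.1.le, ht.2.trans ht0.2⟩⟩) hr0 hrr1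
  set Γ := γ '' Icc 0 t0 with hΓ
  have hΓc : IsCompact Γ := isCompact_Icc.image_of_continuousOn (hγcont.mono hsub)
  have hΓφ : ∀ x ∈ Γ, φ x = 0 := by
    rintro x ⟨s, hs, rfl⟩; exact hγnodal s (hsub hs)
  have hO : IsOpen (Ω \ Γ) := hΩopen.sdiff hΓc.isClosed
  have haO : a ∉ Ω \ Γ := fun h => h.2 ⟨t0, ⟨ht0.1, le_rfl⟩, rfl⟩
  have haD : a ∉ Metric.ball b r := by
    rw [Metric.mem_ball, dist_eq_norm]; exact lt_irrefl _
  have hDo : IsOpen (Metric.ball b r) := Metric.isOpen_ball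
  have hKO : K ⊆ Ω \ Γ := fun x hx => ⟨hKΩ hx, by
    rintro ⟨s, hs, rfl⟩
    exact hav t0 ht0 (by rw [dist_eq_norm]; exact hrδ) s hs hx⟩
  set y := r ^ (2 * m) with hy
  have hy0 : 0 < y := by positivity
  have hy1 : y ≤ 1 := pow_le_one₀ hr0.le hr1'
  have hyr : y ≤ r ^ m := pow_le_pow_of_le_one hr0.le hr1' (by omega)
  obtain ⟨f, hf, hfc, hfΩ, hfφ0, hfφ, hfle, hfA⟩ := htr (θ * y) (by positivity)
  have hfO : tsupport f ⊆ Ω \ Γ := fun x hx => ⟨hfΩ hx, fun h => hfφ0 x hx (hΓφ x h)⟩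
  set F : ℂ → ℝ := fun x => relSign S Q x * f x with hF
  have hFc : ContinuousOn F (Metric.ball b r) :=
    (signed_contDiffOn hO hDo haD hS hS2 hQ hQ2 hf hfO).continuousOn
  have hmap : MapsTo (fun w : ℂ => b + r * ω * w) (Metric.closedBall (1 / 2 : ℂ) R0)
      (Metric.ball b r) := fun w hw => (hdisk w hw).1.2
  obtain ⟨hg1, hg2⟩ := hgain r ω b c' F p hr0 hrr2 hω hc'
    (fun w hw => by
      have h1 := hdisk w hw
      have h2 := disk_value haD hS2 hQ2 (f := f) h1.1.2
        (fun hx => by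
          have hxΓ : b + r * ω * w ∈ Γ := by
            by_contra h; exact hx ⟨h1.1.1, h⟩
          have h0 := hΓφ _ hxΓ
          refine ⟨h0, image_eq_zero_of_notMem_tsupport (f := f) fun h => hfφ0 _ h h0⟩)
        h1.2 (hfφ _ h1.1.1)
      refine h2.trans ?_
      have : θ * y ≤ e / 4 * r ^ m := mul_le_mul hθe hyr hy0.le (by positivity)
      linarith)
    (hFc.comp (by fun_prop) hmap)
    (fun w hw => ⟨(hppos _ (hdisk w hw).1.1).le, hM _ (subset_closure (hdisk w hw).1.1)⟩)
  set ζ := transplant η b (r * ω)⁻¹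
  set t := s * c' * r ^ m
  have hζ : ContDiff ℝ (⊤ : ℕ∞) ζ := transplant_contDiff hη b _
  have hζc : HasCompactSupport ζ := transplant_hcs hηc hr0 hω b
  have hζs : ∀ x ∈ tsupport ζ, x ∈ Ω ∩ Metric.ball b r := by
    intro x hx
    obtain ⟨w, hw, rfl⟩ := transplant_tsupport hr0 hω b η hx
    exact (hdisk w (hηs hw)).1
  have hζD : tsupport ζ ⊆ Metric.ball b r := fun x hx => (hζs x hx).2
  have hζΩ : tsupport ζ ⊆ Ω := fun x hx => (hζs x hx).1
  have key : ∀ (v : ℂ → ℂ), v ∈ V → ∀ c : ℂ,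
      (∫ y in Ω, mgSq a (trial S Q v f ζ c t) y) ≤
        (lam - C' * y) * mass Ω p (trial S Q v f ζ c t) ∧
      ((0 < mass Ω p v ∨ 0 < ‖c‖) →
        (∫ y in Ω, mgSq a (trial S Q v f ζ c t) y) - lam * mass Ω p (trial S Q v f ζ c t) < 0) := by
    intro v hv c
    obtain ⟨hvK, hvμ, hvB⟩ := hV v hv
    have hdisj : Disjoint (tsupport v) (tsupport ζ) :=
      hKδ.mono hvK (hζD.trans (Metric.ball_subset_ball hrδ.le))
    obtain ⟨g1, g2⟩ := trial_form hO hDo haO haD hS hS2 hQ hQ2 hΩopen hΩbd hp hppos hφ hf hfc hfO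
      sdiff_subset (hVt v hv) (hvK.trans hKO) hζ hζc hζD hζΩ hdisj (ε := θ * y) (Y := D * y)
      (by positivity) hfφ hfle hfA hvB hvμ (hg1.trans_eq (neg_mul _ _)) hg2 c
    exact habs _ _ _ _ _ _ (mass_nonneg hΩopen hppos v) (norm_nonneg c) hy0 hy1 g1 g2
  refine eigenvalueAB_le hΩopen hΩbd hp hppos hk hVf (trialMap V S Q f ζ t) (lam := lam) ?_ ?_ ?_
  · intro x
    have hx := hVt _ x.1.2
    exact trial_test hO hDo haO haD hS hS2 hQ hQ2 hf hfO hx.1 hx.2.1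
      ((hV _ x.1.2).1.trans hKO) hfc hζ hζc hζD x.2 t sdiff_subset hζΩ
  · intro x hx
    refine (key _ x.1.2 x.2).2 ?_
    by_cases h : x.2 = 0
    · left
      refine mass_pos hΩopen hΩbd hp hppos (hVt _ x.1.2) fun h1 => hx ?_
      exact Prod.ext (Subtype.ext h1) h
    · exact Or.inr (norm_pos_iff.2 h)
  · intro x _
    exact (key _ x.1.2 x.2).1

/-- Convergence from below with rate `|a−b|^h` when the pole approaches a boundary
point `b` along a nodal line of `φ_k`: if `λ_{k−1} < λ_k` and an eigenfunction `φ_k`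
associated with `λ_k` has a zero of (even) order `h/2 ≥ 2` at `b ∈ ∂Ω`, and
`γ` is a piece of nodal line of `φ_k` ending at `b`, then
`λ_k^a ≤ λ_k − C|a−b|^h` for all `a = γ(t)` close to (and distinct from) `b`. -/
theorem eigenvalue_upper_bound_along_nodal_line
    (Ω : Set ℂ) (hΩopen : IsOpen Ω) (hΩbd : Bornology.IsBounded Ω)
    (hΩsc : SimplyConnectedSpace Ω) (hΩbdry : HasSmoothBoundary Ω)
    (p : ℂ → ℝ) (hpC : ContDiffOn ℝ (⊤ : ℕ∞) p (closure Ω)) (hppos : ∀ x ∈ Ω, 0 < p x)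
    (k : ℕ) (hk : 2 ≤ k)
    (hgap : eigenvalueND Ω p (k - 1) < eigenvalueND Ω p k)
    (φ : ℂ → ℝ) (hφ : IsDirichletEigenfunction Ω p (eigenvalueND Ω p k) φ)
    (b : ℂ) (hb : b ∈ frontier Ω)
    (h : ℕ) (hheven : Even h) (hh4 : 4 ≤ h)
    (hzero : HasBoundaryZero Ω φ b (h / 2))
    (γ : ℝ → ℂ) (hγcont : ContinuousOn γ (Set.Icc 0 1))
    (hγinj : Set.InjOn γ (Set.Icc 0 1)) (hγ0 : γ 0 = b)
    (hγΩ : ∀ t ∈ Set.Ioc (0 : ℝ) 1, γ t ∈ Ω)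
    (hγnodal : ∀ t ∈ Set.Icc (0 : ℝ) 1, φ (γ t) = 0) :
    ∃ C > (0 : ℝ), ∃ δ > (0 : ℝ), ∀ t ∈ Set.Icc (0 : ℝ) 1,
      γ t ≠ b → dist (γ t) b < δ →
        eigenvalueAB Ω p (γ t) k ≤ eigenvalueND Ω p k - C * dist (γ t) b ^ h := by
  obtain ⟨m, rfl⟩ := even_iff_exists_two_mul.1 hheven
  have hm : 2 * m / 2 = m := by omega
  rw [hm] at hzero
  exact main_bound Ω hΩopen hΩbd hΩsc hΩbdry p hpC.continuousOn hppos k hk hgap φ hφ b hb m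
    (by omega) hzero γ hγcont hγ0 hγΩ hγnodal

end
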